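/- arXiv:math/0502579 — 2 statements merged into one kernel-verified Lean document; each statement's English description precedes it below -/
import Mathlib

section
/- Let ε > 0 be fixed and let l = l(k) be a sequence of positive integers with l(k) ∈ [εk, ε^{-1}k]. Set β = l/k, and let c = c(β) > 0 be the solution of e^{-c} = (2(β+1)-c)/(2(β+1)+c). Then, as k → ∞, C(k, kβ) ~ A · B^k · k^{(1+β)k} · k^{-3/2}, where A = c(c-2β)/√(8πβ(1+c²f₂(c)/β)) · e^{-c(β/2+1)} and B = 2/(c^β √(4(β+1)² - c²)), with κ = c/(1-e^{-c}) and f₂(c) = κ[e^{-c}(-c^{-1}-2c^{-2}-2c^{-3}) + 2c^{-3}] - (κ[e^{-c}(-c^{-1}-c^{-2}) + c^{-2}])². -/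
open Filter Topology Real

/-- `connGraphCount k l` is the number of connected labeled graphs on `k` vertices
with `k - 1 + l` edges (i.e. complexity `l`). -/
noncomputable def connGraphCount (k l : ℕ) : ℕ :=
  Set.ncard {G : SimpleGraph (Fin k) | G.Connected ∧ G.edgeSet.ncard = k - 1 + l}

/-- The function `f₂(c)`, with `κ = c/(1-e^{-c})`:
`f₂(c) = κ[e^{-c}(-c^{-1}-2c^{-2}-2c^{-3}) + 2c^{-3}] - (κ[e^{-c}(-c^{-1}-c^{-2}) + c^{-2}])²`. -/
noncomputable def f2 (c : ℝ) : ℝ :=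
  (c / (1 - Real.exp (-c))) *
      (Real.exp (-c) * (-c⁻¹ - 2 * (c ^ 2)⁻¹ - 2 * (c ^ 3)⁻¹) + 2 * (c ^ 3)⁻¹) -
    ((c / (1 - Real.exp (-c))) * (Real.exp (-c) * (-c⁻¹ - (c ^ 2)⁻¹) + (c ^ 2)⁻¹)) ^ 2

/-- The constant `A = c(c-2β)/√(8πβ(1+c²f₂(c)/β)) · e^{-c(β/2+1)}`. -/
noncomputable def Aterm (β c : ℝ) : ℝ :=
  c * (c - 2 * β) / Real.sqrt (8 * Real.pi * β * (1 + c ^ 2 * f2 c / β)) *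
    Real.exp (-(c * (β / 2 + 1)))

/-- The constant `B = 2/(c^β √(4(β+1)² - c²))`. -/
noncomputable def Bterm (β c : ℝ) : ℝ :=
  2 / (c ^ β * Real.sqrt (4 * (β + 1) ^ 2 - c ^ 2))

namespace CG
open Finset

/-- Constrained weighted occupancy sums: `cw C u t h` is the sum over occupancy vectors
`(k_0, …, k_{t-1})` of total `h`, with partial sums obeying the constraint `C`, of
`∏ u_i ^ k_i / k_i!`. -/
noncomputable def cw {R : Type} [Field R] (C : ℕ → ℕ → Bool) (u : ℕ → R) : ℕ → ℕ → R
  | 0, h => if h = 0 then 1 else 0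
  | t + 1, h => if C (t + 1) h then
      ∑ ij ∈ antidiagonal h, cw C u t ij.1 * (u t ^ ij.2 / (ij.2.factorial : R)) else 0

/-- Lower constraint: partial sums at least `t`. -/
def Clo (t h : ℕ) : Bool := decide (t ≤ h)
/-- Upper constraint: partial sums at most `t`. -/
def Cup (t h : ℕ) : Bool := decide (h ≤ t)

lemma exp_conv {R : Type} [Field R] [CharZero R] (a b : R) (h : ℕ) :
    ∑ ij ∈ antidiagonal h, (a ^ ij.1 / (ij.1.factorial : R)) * (b ^ ij.2 / (ij.2.factorial : R))
      = (a + b) ^ h / (h.factorial : R) := by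
  rw [(Commute.all a b).add_pow', Finset.sum_div]
  refine Finset.sum_congr rfl fun ij hij => ?_
  rw [HasAntidiagonal.mem_antidiagonal] at hij
  subst hij
  have h1 : (((ij.1 + ij.2).choose ij.1 : ℕ) : R) * ij.1.factorial * ij.2.factorial
      = (ij.1 + ij.2).factorial := by
    have := Nat.add_choose_mul_factorial_mul_factorial ij.1 ij.2
    rw [← Nat.choose_symm_add] at this
    exact_mod_cast this
  have h2 : ((ij.1.factorial : ℕ) : R) ≠ 0 := by exact_mod_cast Nat.factorial_ne_zero _
  have h3 : ((ij.2.factorial : ℕ) : R) ≠ 0 := by exact_mod_cast Nat.factorial_ne_zero _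
  have h4 : (((ij.1 + ij.2).factorial : ℕ) : R) ≠ 0 := by exact_mod_cast Nat.factorial_ne_zero _
  rw [nsmul_eq_mul]
  field_simp
  rw [← h1]; ring

lemma cw_smul {R : Type} [Field R] (C : ℕ → ℕ → Bool) (u : ℕ → R) (s : R) (t h : ℕ) :
    cw C (fun i => s * u i) t h = s ^ h * cw C u t h := by
  induction t generalizing h with
  | zero => by_cases h0 : h = 0 <;> simp [cw, h0]
  | succ t ih =>
    simp only [cw]
    split_ifs
    · rw [Finset.mul_sum]
      refine Finset.sum_congr rfl fun ij hij => ?_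
      rw [HasAntidiagonal.mem_antidiagonal] at hij
      rw [ih, mul_pow, ← hij, pow_add]; ring
    · simp

lemma cw_congr {R : Type} [Field R] (C : ℕ → ℕ → Bool) (u v : ℕ → R) (t h : ℕ)
    (huv : ∀ i < t, u i = v i) : cw C u t h = cw C v t h := by
  induction t generalizing h with
  | zero => simp [cw]
  | succ t ih =>
    simp only [cw]
    split_ifs
    · refine Finset.sum_congr rfl fun ij hij => ?_
      rw [ih _ (fun i hi => huv i (by omega)), huv t (by omega)]
    · simp

lemma cw_norm_le (C : ℕ → ℕ → Bool) (u : ℕ → ℂ) (t h : ℕ) :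
    ‖cw C u t h‖ ≤ (∑ i ∈ range t, ‖u i‖) ^ h / (h.factorial : ℝ) := by
  induction t generalizing h with
  | zero => by_cases h0 : h = 0 <;> simp [cw, h0]
  | succ t ih =>
    simp only [cw]
    split_ifs
    · rw [sum_range_succ, ← exp_conv]
      refine (norm_sum_le _ _).trans (Finset.sum_le_sum fun ij hij => ?_)
      rw [norm_mul, norm_div, norm_pow]
      simp only [Complex.norm_natCast]
      exact mul_le_mul_of_nonneg_right (ih _) (by positivity)
    · simp; positivity

lemma cw_nonneg (C : ℕ → ℕ → Bool) (u : ℕ → ℝ) (hu : ∀ i, 0 ≤ u i) (t h : ℕ) :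
    0 ≤ cw C u t h := by
  induction t generalizing h with
  | zero => by_cases h0 : h = 0 <;> simp [cw, h0]
  | succ t ih =>
    simp only [cw]
    split_ifs
    · refine Finset.sum_nonneg fun ij hij => ?_
      have := hu t
      have := ih ij.1
      positivity
    · simp

lemma cw_le (C : ℕ → ℕ → Bool) (u : ℕ → ℝ) (hu : ∀ i, 0 ≤ u i) (t h : ℕ) :
    cw C u t h ≤ (∑ i ∈ range t, u i) ^ h / (h.factorial : ℝ) := by
  induction t generalizing h with
  | zero => by_cases h0 : h = 0 <;> simp [cw, h0]
  | succ t ih =>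
    simp only [cw]
    split_ifs
    · rw [sum_range_succ, ← exp_conv]
      refine (Finset.sum_le_sum fun ij hij => ?_)
      have := hu t
      exact mul_le_mul_of_nonneg_right (ih _) (by positivity)
    · have : 0 ≤ ∑ i ∈ range (t+1), u i := Finset.sum_nonneg fun i _ => hu i
      positivity

lemma cw_tendsto {ι : Type} (f : Filter ι) (C : ℕ → ℕ → Bool) (u : ι → ℕ → ℂ) (v : ℕ → ℂ)
    (t h : ℕ) (hu : ∀ s < t, Tendsto (fun i => u i s) f (𝓝 (v s))) :
    Tendsto (fun i => cw C (u i) t h) f (𝓝 (cw C v t h)) := by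
  induction t generalizing h with
  | zero => simp [cw, tendsto_const_nhds]
  | succ t ih =>
    simp only [cw]
    split_ifs
    · refine tendsto_finsetSum _ fun ij hij => ?_
      refine (ih _ fun s hs => hu s (by omega)).mul ?_
      exact ((hu t (by omega)).pow _).div_const _
    · exact tendsto_const_nhds

lemma cw_ofReal (C : ℕ → ℕ → Bool) (u : ℕ → ℝ) (t h : ℕ) :
    cw C (fun i => (u i : ℂ)) t h = ((cw C u t h : ℝ) : ℂ) := by
  induction t generalizing h with
  | zero => by_cases h0 : h = 0 <;> simp [cw, h0]
  | succ t ih =>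
    simp only [cw]
    split_ifs
    · push_cast
      refine Finset.sum_congr rfl fun ij hij => ?_
      rw [ih]
    · simp

lemma cwlo_eq_zero {R : Type} [Field R] (u : ℕ → R) (t h : ℕ) (hth : h < t) :
    cw Clo u t h = 0 := by
  cases t with
  | zero => omega
  | succ t => simp [cw, Clo]; omega

lemma cwup_eq_zero {R : Type} [Field R] (u : ℕ → R) (t h : ℕ) (hth : t < h) :
    cw Cup u t h = 0 := by
  cases t with
  | zero => simp [cw]; omega
  | succ t => simp [cw, Cup]; omega

section ps
open PowerSeries
variable {R : Type} [Field R] [CharZero R]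

/-- The exponential series `exp (a X)`. -/
noncomputable def eS (a : R) : PowerSeries R := PowerSeries.mk fun n => a ^ n / (n.factorial : R)

lemma eS_mul (a b : R) : eS a * eS b = eS (a + b) := by
  ext n
  rw [PowerSeries.coeff_mul]
  simp only [eS, PowerSeries.coeff_mk]
  exact exp_conv a b n

lemma eS_zero : eS (0 : R) = 1 := by
  ext n
  cases n <;> simp [eS, PowerSeries.coeff_one]

/-- The series of lower constrained sums. -/
noncomputable def WS (u : ℕ → R) (t : ℕ) : PowerSeries R := PowerSeries.mk fun h => cw Clo u t h

lemma WS_succ (u : ℕ → R) (t : ℕ) :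
    WS u t * eS (u t) = WS u (t + 1) + PowerSeries.C (cw Clo u t t) * PowerSeries.X ^ t := by
  ext h
  rw [map_add, PowerSeries.coeff_mul, PowerSeries.coeff_C_mul, PowerSeries.coeff_X_pow]
  simp only [WS, eS, PowerSeries.coeff_mk]
  by_cases h1 : t + 1 ≤ h
  · have : h ≠ t := by omega
    simp [cw, Clo, h1, this]
  · rw [cwlo_eq_zero u (t+1) h (by omega), zero_add]
    by_cases h2 : h = t
    · subst h2
      rw [Finset.sum_eq_single (h, 0)]
      · simp
      · rintro ⟨a, b⟩ hab hne
        rw [HasAntidiagonal.mem_antidiagonal] at hab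
        simp only at hab ⊢
        rw [cwlo_eq_zero u h a, zero_mul]
        rcases Nat.eq_zero_or_pos b with hb | hb
        · subst hb; exact absurd (by simpa using hab) (by simpa using hne)
        · omega
      · simp
    · simp only [h2, if_false, mul_zero]
      refine Finset.sum_eq_zero fun ij hij => ?_
      rw [HasAntidiagonal.mem_antidiagonal] at hij
      rw [cwlo_eq_zero u t ij.1 (by omega), zero_mul]

lemma WS_first_fail (u : ℕ → R) (t : ℕ) :
    eS (∑ i ∈ range t, u i) = WS u t + ∑ j ∈ range t, PowerSeries.C (cw Clo u j j) *
      (PowerSeries.X ^ j * eS ((∑ i ∈ range t, u i) - ∑ i ∈ range (j + 1), u i)) := by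
  induction t with
  | zero =>
    ext h
    cases h <;> simp [WS, cw, eS]
  | succ t ih =>
    rw [sum_range_succ u t, ← eS_mul, ih, add_mul, WS_succ, Finset.sum_mul,
      sum_range_succ _ t, add_assoc, add_comm (PowerSeries.C _ * PowerSeries.X ^ t)]
    congr 1
    congr 1
    · refine Finset.sum_congr rfl fun j hj => ?_
      rw [mul_assoc, mul_assoc, eS_mul]
      congr 3
      ring_nf
    · rw [sum_range_succ u t, sub_self, eS_zero, mul_one]

lemma cwlo_eq (u : ℕ → R) (t h : ℕ) (hth : t ≤ h) :
    cw Clo u t h = (∑ i ∈ range t, u i) ^ h / (h.factorial : R) -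
      ∑ j ∈ range t, cw Clo u j j *
        (((∑ i ∈ range t, u i) - ∑ i ∈ range (j + 1), u i) ^ (h - j) / ((h - j).factorial : R)) := by
  have := congrArg (PowerSeries.coeff h) (WS_first_fail u t)
  rw [map_add, map_sum] at this
  simp only [PowerSeries.coeff_C_mul, PowerSeries.coeff_X_pow_mul', WS, eS,
    PowerSeries.coeff_mk] at this
  rw [this, eq_sub_iff_add_eq]
  congr 1
  refine Finset.sum_congr rfl fun j hj => ?_
  rw [mem_range] at hj
  rw [if_pos (by omega)]

lemma cwlo_total (u : ℕ → R) (S : R) (n : ℕ) :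
    S ^ n / (n.factorial : R) = ∑ j ∈ range (n + 1), cw Clo u j j *
        ((S - ∑ i ∈ range (j + 1), u i) ^ (n - j) / ((n - j).factorial : R)) := by
  have h0 := congrArg (fun x => x * eS (S - ∑ i ∈ range (n+1), u i)) (WS_first_fail u (n+1))
  simp only [eS_mul, add_mul, Finset.sum_mul, mul_assoc] at h0
  have := congrArg (PowerSeries.coeff n) h0
  rw [map_add, map_sum] at this
  simp only [PowerSeries.coeff_C_mul, PowerSeries.coeff_X_pow_mul', 
    PowerSeries.coeff_mul (φ := WS u (n+1))] at this
  have hz : ∑ ij ∈ antidiagonal n, (PowerSeries.coeff ij.1) (WS u (n + 1)) *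
      (PowerSeries.coeff ij.2) (eS (S - ∑ i ∈ range (n+1), u i)) = 0 := by
    refine Finset.sum_eq_zero fun ij hij => ?_
    rw [HasAntidiagonal.mem_antidiagonal] at hij
    simp only [WS, PowerSeries.coeff_mk]
    rw [cwlo_eq_zero u (n+1) ij.1 (by omega), zero_mul]
  rw [hz, zero_add] at this
  · simp only [eS, PowerSeries.coeff_mk] at this
    rw [add_sub_cancel] at this
    rw [this]
    refine Finset.sum_congr rfl fun j hj => ?_
    rw [mem_range] at hj
    rw [if_pos (by omega)]
    congr 3
    ring
end ps

/-- Splitting the spots into the first `n - m` and the last `m`. -/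
lemma cw_split {R : Type} [Field R] [CharZero R] (u : ℕ → R) (n m : ℕ) (hm : m ≤ n) :
    cw Clo u n n = ∑ h ∈ range (m + 1),
      cw Cup (fun i => u (n - 1 - i)) m h * cw Clo u (n - m) (n - h) := by
  induction m with
  | zero => simp [cw]
  | succ m ih =>
    rw [ih (by omega)]
    have e1 : n - m = (n - (m + 1)) + 1 := by omega
    have e2 : n - 1 - m = n - (m + 1) := by omega
    set s := n - (m + 1) with hs
    have L : ∀ h ∈ range (m + 1), cw Cup (fun i => u (n - 1 - i)) m h * cw Clo u (n - m) (n - h)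
        = ∑ k ∈ range (m + 2), if h ≤ k then cw Cup (fun i => u (n - 1 - i)) m h * 
          (u s ^ (k - h) / ((k - h).factorial : R)) * cw Clo u s (n - k) else 0 := by
      intro h hh
      rw [mem_range] at hh
      rw [e1]
      simp only [cw]
      have : Clo (s + 1) (n - h) = true := by simp [Clo]; omega
      rw [if_pos this, Finset.mul_sum, Finset.Nat.sum_antidiagonal_eq_sum_range_succ
        (fun a b => cw Cup (fun i => u (n - 1 - i)) m h * 
          (cw Clo u s a * (u s ^ b / (b.factorial : R))))]
      rw [← Finset.sum_filter]
      symm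
      refine Finset.sum_bij_ne_zero (fun k _ _ => n - k) ?_ ?_ ?_ ?_
      · intro k hk _
        simp only [mem_filter, mem_range] at hk ⊢
        omega
      · intro k hk _ k' hk' _ hkk
        simp only [mem_filter, mem_range] at hk hk'
        omega
      · intro a ha hne
        rw [mem_range] at ha
        have : s ≤ a := by
          by_contra hlt
          apply hne
          rw [cwlo_eq_zero u s a (by omega)]; ring
        refine ⟨n - a, ?_, ?_, by omega⟩
        · simp only [mem_filter, mem_range]; omega
        · have e3 : n - (n - a) = a := by omega
          have e4 : n - a - h = n - h - a := by omega
          rw [e3, e4]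
          intro hz; apply hne; rw [← hz]; ring
      · intro k hk _
        simp only [mem_filter, mem_range] at hk
        have e4 : n - h - (n - k) = k - h := by omega
        rw [e4]; ring
    rw [Finset.sum_congr rfl L, Finset.sum_comm]
    refine Finset.sum_congr rfl fun k hk => ?_
    rw [mem_range] at hk
    simp only [cw]
    have : Cup (m + 1) k = true := by simp [Cup]; omega
    rw [if_pos this, Finset.sum_mul, e2,
      Finset.Nat.sum_antidiagonal_eq_sum_range_succ
        (fun a b => cw Cup (fun i => u (n - 1 - i)) m a * (u s ^ b / (b.factorial : R)) *
          cw Clo u s (n - k)), ← Finset.sum_filter]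
    refine Finset.sum_subset_zero_on_sdiff ?_ ?_ ?_
    · intro a ha
      simp only [mem_filter, mem_range] at ha ⊢
      omega
    · intro a ha
      simp only [Finset.mem_sdiff, mem_filter, mem_range] at ha
      rw [cwup_eq_zero _ m a (by omega)]; ring
    · intro a ha; rfl

/-- Edge generating function of the graphs on `V` with property `P`. -/
noncomputable def gS (V : Type) [Finite V] (P : SimpleGraph V → Prop) (x : ℂ) : ℂ :=
  ∑ G ∈ (Set.toFinite {G : SimpleGraph V | P G}).toFinset, x ^ G.edgeSet.ncard

lemma gS_equiv {V W : Type} [Finite V] [Finite W] (e : V ≃ W) (x : ℂ) :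
    gS V SimpleGraph.Connected x = gS W SimpleGraph.Connected x := by
  unfold gS
  refine Finset.sum_nbij' (fun G => G.comap e.symm) (fun G => G.comap e) ?_ ?_ ?_ ?_ ?_
  · intro G hG
    simp only [Set.Finite.mem_toFinset, Set.mem_ofPred_eq] at hG ⊢
    exact ((SimpleGraph.Iso.comap e.symm G).connected_iff).2 hG
  · intro G hG
    simp only [Set.Finite.mem_toFinset, Set.mem_ofPred_eq] at hG ⊢
    exact ((SimpleGraph.Iso.comap e G).connected_iff).2 hG
  · intro G _
    ext a b; simp
  · intro G _
    ext a b; simp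
  · intro G _
    congr 1
    have := Nat.card_congr ((SimpleGraph.Iso.comap e.symm G).mapEdgeSet)
    rw [Nat.card_coe_set_eq, Nat.card_coe_set_eq] at this
    exact this.symm

lemma gS_true (V : Type) [Finite V] (x : ℂ) :
    gS V (fun _ => True) x = (1 + x) ^ ((Nat.card V).choose 2) := by
  classical
  have : Fintype V := Fintype.ofFinite V
  unfold gS
  have h := Finset.sum_pow_mul_eq_add_pow x 1 (Finset.univ.filter fun e : Sym2 V => ¬ e.IsDiag)
  have hc : (Finset.univ.filter fun e : Sym2 V => ¬ e.IsDiag).card = (Nat.card V).choose 2 := by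
    rw [← Fintype.card_subtype, Sym2.card_subtype_not_diag, Nat.card_eq_fintype_card]
  rw [hc, add_comm x 1] at h
  rw [← h]
  refine Finset.sum_bij' (fun G _ => G.edgeFinset) 
    (fun s _ => SimpleGraph.fromEdgeSet (s : Set (Sym2 V))) ?_ ?_ ?_ ?_ ?_
  · intro G _
    rw [Finset.mem_powerset]
    intro e he
    rw [SimpleGraph.mem_edgeFinset] at he
    simp only [mem_filter, Finset.mem_univ, true_and]
    exact G.not_isDiag_of_mem_edgeSet he
  · intro s _
    simp
  · intro G _
    simp
  · intro s hs
    rw [Finset.mem_powerset] at hs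
    ext e
    simp only [SimpleGraph.mem_edgeFinset, SimpleGraph.edgeSet_fromEdgeSet]
    simp only [Set.mem_sdiff, Finset.mem_coe]
    constructor
    · exact fun h => h.1
    · intro he
      refine ⟨he, ?_⟩
      have := hs he
      simpa using this
  · intro G _
    rw [one_pow, mul_one, Set.ncard_eq_toFinset_card']
    rfl

/-- The vertex set of the component of `v`. -/
noncomputable def compSet {V : Type} [Fintype V] (v : V) (G : SimpleGraph V) : Finset V :=
  open Classical in Finset.univ.filter fun w => G.Reachable v w

lemma mem_compSet {V : Type} [Fintype V] (v w : V) (G : SimpleGraph V) :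
    w ∈ compSet v G ↔ G.Reachable v w := by
  simp [compSet]

lemma reach_closed {V : Type} (G : SimpleGraph V) (P : V → Prop) 
    (hP : ∀ a b, G.Adj a b → P a → P b) {v w : V} (h : G.Reachable v w) (hv : P v) : P w := by
  obtain ⟨p⟩ := h
  induction p with
  | nil => exact hv
  | cons hadj p ih => exact ih (hP _ _ hadj hv)

lemma gS_fiber {V : Type} [Fintype V] (v : V) (S : Finset V) (hv : v ∈ S) (x : ℂ) :
    gS V (fun G => compSet v G = S) x =
      gS (S : Set V) SimpleGraph.Connected x * gS ((S : Set V)ᶜ : Set V) (fun _ => True) x := by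
  unfold gS
  rw [Finset.sum_mul_sum, ← Finset.sum_product']
  set eS : ((S : Set V) : Type) ↪ V := Function.Embedding.subtype _ with heS
  set eT : (((S : Set V)ᶜ : Set V) : Type) ↪ V := Function.Embedding.subtype _ with heT
  have adjS : ∀ (H : SimpleGraph (S : Set V)) (K : SimpleGraph ((S : Set V)ᶜ : Set V)) (a b : V),
      (H.map eS ⊔ K.map eT).Adj a b ↔ (∃ (ha : a ∈ S) (hb : b ∈ S), H.Adj ⟨a, ha⟩ ⟨b, hb⟩) ∨ 
        (∃ (ha : a ∉ S) (hb : b ∉ S), K.Adj ⟨a, ha⟩ ⟨b, hb⟩) := by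
    intro H K a b
    rw [SimpleGraph.sup_adj, SimpleGraph.map_adj, SimpleGraph.map_adj]
    refine or_congr ?_ ?_
    · constructor
      · rintro ⟨a', b', hab, rfl, rfl⟩
        exact ⟨a'.2, b'.2, hab⟩
      · rintro ⟨ha, hb, hab⟩
        exact ⟨⟨a, ha⟩, ⟨b, hb⟩, hab, rfl, rfl⟩
    · constructor
      · rintro ⟨a', b', hab, rfl, rfl⟩
        exact ⟨a'.2, b'.2, hab⟩
      · rintro ⟨ha, hb, hab⟩
        exact ⟨⟨a, ha⟩, ⟨b, hb⟩, hab, rfl, rfl⟩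
  symm
  refine Finset.sum_bij' (fun p _ => p.1.map eS ⊔ p.2.map eT) 
    (fun G _ => (G.induce (S : Set V), G.induce ((S : Set V)ᶜ))) ?_ ?_ ?_ ?_ ?_
  · rintro ⟨H, K⟩ hHK
    simp only [mem_product, Set.Finite.mem_toFinset, Set.mem_ofPred_eq, and_true] at hHK ⊢
    ext w
    rw [mem_compSet]
    constructor
    · intro h
      refine reach_closed _ (fun w => w ∈ S) ?_ h hv
      intro a b hab ha
      rw [adjS] at hab
      rcases hab with ⟨_, hb, _⟩ | ⟨ha', _, _⟩
      · exact hb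
      · exact absurd ha ha'
    · intro hw
      have h1 := hHK.preconnected ⟨v, hv⟩ ⟨w, hw⟩
      have h2 : (H.map eS).Reachable v w := h1.map (SimpleGraph.Embedding.map eS H).toHom
      exact h2.mono le_sup_left
  · intro G hG
    simp only [mem_product, Set.Finite.mem_toFinset, Set.mem_ofPred_eq, and_true] at hG ⊢
    have h1 := (G.connectedComponentMk v).connected_toSimpleGraph
    have h2 : (G.connectedComponentMk v).supp = (S : Set V) := by
      rw [← hG]
      ext w
      simp only [SimpleGraph.ConnectedComponent.mem_supp_iff, SimpleGraph.ConnectedComponent.eq,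
        Finset.mem_coe, mem_compSet]
      exact SimpleGraph.reachable_comm
    have h3 : (G.induce (G.connectedComponentMk v).supp).Connected := h1
    rw [h2] at h3
    exact h3
  · rintro ⟨H, K⟩ hHK
    simp only [Prod.mk.injEq]
    constructor
    · ext a b
      simp only [SimpleGraph.comap_adj, adjS]
      constructor
      · rintro (⟨_, _, h⟩ | ⟨ha, _, h⟩)
        · exact h
        · exact absurd a.2 ha
      · intro h
        exact Or.inl ⟨a.2, b.2, h⟩
    · ext a b
      simp only [SimpleGraph.comap_adj, adjS]
      constructor
      · rintro (⟨ha, _, h⟩ | ⟨ha, _, h⟩)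
        · exact absurd ha a.2
        · exact h
      · intro h
        exact Or.inr ⟨a.2, b.2, h⟩
  · intro G hG
    simp only [Set.Finite.mem_toFinset, Set.mem_ofPred_eq] at hG
    ext a b
    rw [adjS]
    have key : ∀ a b, G.Adj a b → a ∈ S → b ∈ S := by
      intro a b hab ha
      rw [← hG, mem_compSet] at ha ⊢
      exact ha.trans hab.reachable
    constructor
    · rintro (⟨_, _, h⟩ | ⟨_, _, h⟩) <;> exact h
    · intro h
      by_cases ha : a ∈ S
      · exact Or.inl ⟨ha, key a b h ha, h⟩
      · exact Or.inr ⟨ha, fun hb => ha (key b a h.symm hb), h⟩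
  · rintro ⟨H, K⟩ hHK
    simp only
    rw [← pow_add]
    congr 1
    rw [SimpleGraph.edgeSet_sup, Set.ncard_union_eq, SimpleGraph.edgeSet_map, 
      SimpleGraph.edgeSet_map, Set.ncard_image_of_injective _ eS.sym2Map.injective,
      Set.ncard_image_of_injective _ eT.sym2Map.injective]
    rw [Set.disjoint_left]
    intro e
    induction e using Sym2.ind with
    | _ a b =>
      rw [SimpleGraph.mem_edgeSet, SimpleGraph.mem_edgeSet, SimpleGraph.map_adj, SimpleGraph.map_adj]
      rintro ⟨a1, b1, _, rfl, rfl⟩ ⟨a2, b2, _, h, _⟩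
      apply a2.2
      have : (a2 : V) = (a1 : V) := h
      rw [this]; exact a1.2

/-- Edge generating function of connected graphs on `k` labelled vertices. -/
noncomputable def CP (k : ℕ) (x : ℂ) : ℂ := gS (Fin k) SimpleGraph.Connected x

lemma gS_rec (n : ℕ) (x : ℂ) :
    (1 + x) ^ ((n + 1).choose 2) = ∑ j ∈ range (n + 1), 
      (n.choose j : ℂ) * (CP (j + 1) x * (1 + x) ^ ((n - j).choose 2)) := by
  classical
  have h1 := gS_true (Fin (n + 1)) x
  rw [Nat.card_fin] at h1
  rw [← h1]
  have h2 : gS (Fin (n+1)) (fun _ => True) x = 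
      ∑ S : Finset (Fin (n+1)), gS (Fin (n+1)) (fun G => compSet 0 G = S) x := by
    unfold gS
    rw [← Finset.sum_fiberwise (s := (Set.toFinite {G : SimpleGraph (Fin (n+1)) | True}).toFinset)
      (g := fun G => compSet 0 G)]
    refine Finset.sum_congr rfl fun S _ => ?_
    refine Finset.sum_congr ?_ fun _ _ => rfl
    ext G
    simp
  rw [h2]
  have h3 : ∀ S : Finset (Fin (n+1)), gS (Fin (n+1)) (fun G => compSet 0 G = S) x = 
      if (0 : Fin (n+1)) ∈ S then CP S.card x * (1 + x) ^ ((n + 1 - S.card).choose 2) else 0 := by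
    intro S
    split_ifs with h0
    · rw [gS_fiber 0 S h0, gS_true]
      congr 1
      · refine gS_equiv ?_ x
        exact S.equivFin
      · congr 2
        rw [Nat.card_coe_set_eq, Set.ncard_compl, Nat.card_fin, Set.ncard_coe_finset]
    · unfold gS
      refine Finset.sum_eq_zero fun G hG => ?_
      exfalso
      simp only [Set.Finite.mem_toFinset, Set.mem_ofPred_eq] at hG
      apply h0
      rw [← hG, mem_compSet]
  rw [Finset.sum_congr rfl fun S _ => h3 S, ← Finset.sum_filter]
  have h4 : (Finset.univ.filter fun S : Finset (Fin (n+1)) => (0 : Fin (n+1)) ∈ S) = 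
      ((Finset.univ.erase (0 : Fin (n+1))).powerset).image (fun S => insert 0 S) := by
    ext S
    simp only [mem_filter, Finset.mem_univ, true_and, mem_image, Finset.mem_powerset]
    constructor
    · intro h
      exact ⟨S.erase 0, Finset.erase_subset_erase _ (Finset.subset_univ _), Finset.insert_erase h⟩
    · rintro ⟨T, _, rfl⟩
      exact Finset.mem_insert_self _ _
  rw [h4, Finset.sum_image, Finset.sum_powerset]
  · rw [Finset.card_erase_of_mem (Finset.mem_univ _), Finset.card_univ, Fintype.card_fin,
      Nat.add_sub_cancel]
    refine Finset.sum_congr rfl fun j hj => ?_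
    have : ∀ T ∈ Finset.powersetCard j (Finset.univ.erase (0 : Fin (n+1))), 
        CP (insert 0 T).card x * (1 + x) ^ ((n + 1 - (insert 0 T).card).choose 2) = 
        CP (j + 1) x * (1 + x) ^ ((n - j).choose 2) := by
      intro T hT
      rw [Finset.mem_powersetCard] at hT
      have h0 : (0 : Fin (n+1)) ∉ T := fun h => by simpa using hT.1 h
      rw [Finset.card_insert_of_notMem h0, hT.2, Nat.add_sub_add_right]
    rw [Finset.sum_congr rfl this, Finset.sum_const, Finset.card_powersetCard, 
      Finset.card_erase_of_mem (Finset.mem_univ _), Finset.card_univ, Fintype.card_fin,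
      Nat.add_sub_cancel, nsmul_eq_mul]
  · intro A hA B hB hAB
    simp only [Finset.coe_powerset, Set.mem_preimage, Set.mem_powerset_iff, Finset.coe_subset,
      Finset.subset_erase] at hA hB
    have := congrArg (fun s => s.erase 0) hAB
    simpa [hA.2, hB.2] using this

/-- Connected graphs versus constrained occupancy sums. -/
lemma CP_eq (n : ℕ) (x : ℂ) (hx : 1 + x ≠ 0) :
    CP (n + 1) x = (1 + x) ^ ((n + 1).choose 2) * ((n.factorial : ℂ) * 
      cw Clo (fun t => (1 - (1 + x)⁻¹) * (1 + x)⁻¹ ^ t) n n) := by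
  induction n using Nat.strong_induction_on with
  | _ n ih =>
    set y := 1 + x with hy
    set u : ℕ → ℂ := fun t => (1 - y⁻¹) * y⁻¹ ^ t with hu
    have hU : ∀ j, ∑ i ∈ range j, u i = 1 - y⁻¹ ^ j := by
      intro j
      rw [hu, ← Finset.mul_sum, mul_comm, ← mul_neg_geom_sum, mul_comm]
    have h1 := gS_rec n x
    have h2 := cwlo_total u 1 n
    simp only [hU, sub_sub_cancel, one_pow] at h2
    rw [sum_range_succ] at h1 h2
    simp only [Nat.choose_self, Nat.sub_self, Nat.cast_one, one_mul, pow_zero,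
      Nat.factorial_zero, div_one, mul_one, Nat.choose_zero_succ] at h1 h2
    have h3 : ((n.factorial : ℕ) : ℂ) ≠ 0 := by exact_mod_cast Nat.factorial_ne_zero _
    have h4 : ∀ j ∈ range n, (n.choose j : ℂ) * (CP (j + 1) x * y ^ ((n - j).choose 2)) = 
        y ^ ((n+1).choose 2) * n.factorial * 
          (cw Clo u j j * ((y⁻¹ ^ (j + 1)) ^ (n - j) / ((n - j).factorial : ℂ))) := by
      intro j hj
      rw [mem_range] at hj
      rw [ih j hj]
      have h5 : (n.choose j : ℂ) * j.factorial * (n - j).factorial = n.factorial := by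
        exact_mod_cast Nat.choose_mul_factorial_mul_factorial hj.le
      have h6 : (((n - j).factorial : ℕ) : ℂ) ≠ 0 := by exact_mod_cast Nat.factorial_ne_zero _
      have h7 : (n + 1).choose 2 = (j + 1).choose 2 + (n - j).choose 2 + (j + 1) * (n - j) := by
        obtain ⟨d, rfl⟩ := Nat.exists_eq_add_of_lt hj
        have e : j + d + 1 - j = d + 1 := by omega
        rw [e]
        have e2 := Nat.add_choose_eq (j+1) (d+1) 2
        have e3 : j + d + 1 + 1 = (j + 1) + (d + 1) := by ring
        rw [e3, e2]
        simp [Finset.Nat.antidiagonal_succ]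
        ring
      have h8 : y ^ ((j + 1) * (n - j)) * (y⁻¹ ^ (j + 1)) ^ (n - j) = 1 := by
        rw [← pow_mul, ← mul_pow, mul_inv_cancel₀ hx, one_pow]
      rw [h7, pow_add, pow_add, ← h5]
      have h11 := div_mul_cancel₀ ((y⁻¹ ^ (j + 1)) ^ (n - j)) h6
      linear_combination (-((n.choose j : ℂ) * (y ^ (j + 1).choose 2 *
        ((j.factorial : ℂ) * cw Clo u j j) * y ^ (n-j).choose 2 ))) * h8 -
        (y ^ (j + 1).choose 2 * y ^ (n-j).choose 2 * y ^ ((j + 1) * (n - j)) * (n.choose j : ℂ) *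
          (j.factorial : ℂ) * cw Clo u j j) * h11
    rw [Finset.sum_congr rfl h4, ← Finset.mul_sum] at h1
    have h9 : ∑ j ∈ range n, (cw Clo u j j * ((y⁻¹ ^ (j + 1)) ^ (n - j) / ((n - j).factorial : ℂ)))
        = 1 / n.factorial - cw Clo u n n := by
      rw [h2]; ring
    rw [h9] at h1
    have h10 : y ^ ((n+1).choose 2) * (n.factorial : ℂ) * (1 / n.factorial - cw Clo u n n) = 
      y ^ ((n+1).choose 2) - y ^ ((n+1).choose 2) * ((n.factorial : ℂ) * cw Clo u n n) := by
      field_simp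
    rw [h10] at h1
    linear_combination -h1

/-- Polynomial version of the lower constrained sums for geometric weights. -/
noncomputable def QP : ℕ → ℕ → Polynomial ℝ
  | 0, h => if h = 0 then 1 else 0
  | t + 1, h => if t + 1 ≤ h then Polynomial.X ^ (h - (t + 1)) *
      ∑ ij ∈ antidiagonal h, Polynomial.C (1 / (ij.2.factorial : ℝ)) * QP t ij.1 else 0

lemma QP_coeff_nonneg (t h M : ℕ) : 0 ≤ (QP t h).coeff M := by
  induction t generalizing h M with
  | zero =>
    simp only [QP]
    split_ifs
    · rw [Polynomial.coeff_one]; split_ifs <;> norm_num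
    · simp
  | succ t ih =>
    simp only [QP]
    split_ifs
    · rw [Polynomial.coeff_X_pow_mul']
      split_ifs
      · rw [Polynomial.finsetSum_coeff]
        refine Finset.sum_nonneg fun ij _ => ?_
        rw [Polynomial.coeff_C_mul]
        exact mul_nonneg (by positivity) (ih _ _)
      · exact le_rfl
    · simp

lemma QP_eval_one (t h : ℕ) : (QP t h).eval 1 = cw Clo (fun _ => (1 : ℝ)) t h := by
  induction t generalizing h with
  | zero => by_cases h0 : h = 0 <;> simp [QP, cw, h0]
  | succ t ih =>
    by_cases hh : t + 1 ≤ h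
    · simp only [QP, cw, Clo, hh, if_true, decide_true, Polynomial.eval_mul, Polynomial.eval_pow,
        Polynomial.eval_X, one_pow, one_mul, Polynomial.eval_finsetSum, Polynomial.eval_C, ih]
      exact Finset.sum_congr rfl fun ij _ => mul_comm _ _
    · simp [QP, cw, Clo, hh]

lemma QP_aeval (y : ℂ) (hy : y ≠ 0) (t h : ℕ) :
    y ^ ((t + 1).choose 2) * Polynomial.aeval y (QP t h) =
      y ^ (t * h) * cw Clo (fun s => y⁻¹ ^ s) t h := by
  induction t generalizing h with
  | zero => by_cases h0 : h = 0 <;> simp [QP, cw, h0]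
  | succ t ih =>
    by_cases hh : t + 1 ≤ h
    · simp only [QP, cw, Clo, hh, if_true, decide_true, map_mul, map_pow, Polynomial.aeval_X,
        map_sum, Polynomial.aeval_C]
      have e1 : (t + 1 + 1).choose 2 = (t + 1).choose 2 + (t + 1) := by
        rw [Nat.choose_succ_succ' (t+1) 1, Nat.choose_one_right]; ring
      rw [e1, Finset.mul_sum, Finset.mul_sum, Finset.mul_sum]
      refine Finset.sum_congr rfl fun ij hij => ?_
      rw [HasAntidiagonal.mem_antidiagonal] at hij
      have e2 : y ^ ((t + 1).choose 2 + (t + 1)) * y ^ (h - (t + 1)) = 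
          y ^ ((t + 1).choose 2) * y ^ h := by
        rw [← pow_add, ← pow_add]; congr 1; omega
      have e3 : y ^ ((t + 1) * h) * (y⁻¹ ^ t) ^ ij.2 = y ^ h * y ^ (t * ij.1) := by
        have : y ^ (t * ij.2) * (y⁻¹ ^ t) ^ ij.2 = 1 := by
          rw [← pow_mul, ← mul_pow, mul_inv_cancel₀ hy, one_pow]
        have e4 : (t + 1) * h = h + t * ij.1 + t * ij.2 := by rw [← hij]; ring
        rw [e4, pow_add, pow_add, mul_assoc, this, mul_one]
      have e5 := ih ij.1
      have e6 : (algebraMap ℝ ℂ) (1 / (ij.2.factorial : ℝ)) = 1 / (ij.2.factorial : ℂ) := by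
        simp
      rw [e6]
      calc _ = (y ^ ((t + 1).choose 2 + (t + 1)) * y ^ (h - (t + 1))) * 
            (1 / (ij.2.factorial : ℂ) * Polynomial.aeval y (QP t ij.1)) := by ring
        _ = (y ^ ((t + 1).choose 2) * Polynomial.aeval y (QP t ij.1)) * y ^ h * 
            (1 / (ij.2.factorial : ℂ)) := by rw [e2]; ring
        _ = cw Clo (fun s => y⁻¹ ^ s) t ij.1 * (y ^ h * y ^ (t * ij.1)) / (ij.2.factorial : ℂ) := by
            rw [e5]; ring
        _ = _ := by rw [← e3]; ring
    · simp [QP, cw, Clo, hh]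

lemma CP_QP (n : ℕ) (x : ℂ) (hx : 1 + x ≠ 0) :
    CP (n + 1) x = x ^ n * n.factorial * Polynomial.aeval (1 + x) (QP n n) := by
  rw [CP_eq n x hx, cw_smul]
  have h1 := QP_aeval (1 + x) hx n n
  set c := cw Clo (fun s => (1 + x)⁻¹ ^ s) n n
  set Z := Polynomial.aeval (1 + x) (QP n n)
  have h2 : (1 + x) ^ n * (1 - (1 + x)⁻¹) ^ n = x ^ n := by
    rw [← mul_pow]; congr 1; field_simp; ring
  have h3 : (1 + x) ^ ((n + 1).choose 2) * (1 + x) ^ ((n + 1).choose 2) = 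
      (1 + x) ^ (n * n) * (1 + x) ^ n := by
    rw [← pow_add, ← pow_add]; congr 1
    have := Nat.triangle_succ n
    rw [← Finset.sum_range_id_mul_two, ← mul_two] at *
    have h := Nat.choose_two_right (n+1)
    have h' : (n + 1).choose 2 * 2 = (n + 1) * n := by
      rw [h, Nat.add_sub_cancel, mul_comm (n+1) n]
      exact Nat.div_mul_cancel (Nat.even_mul_succ_self n).two_dvd
    rw [h']; ring
  apply mul_left_cancel₀ (pow_ne_zero ((n + 1).choose 2) hx)
  linear_combination (n.factorial * (1 - (1 + x)⁻¹) ^ n * c) * h3 + 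
    ((1 + x) ^ (n * n) * n.factorial * c) * h2 - (x ^ n * n.factorial) * h1

lemma norm_one_add_le (x θ : ℝ) (hx : 0 ≤ x) (hx1 : x ≤ 1) (hθ : |θ| ≤ π) :
    ‖(1 : ℂ) + x * Complex.exp (θ * Complex.I)‖ ≤ (1 + x) * Real.exp (-(x * θ ^ 2 / (2 * π ^ 2))) := by
  have h1 : ‖(1 : ℂ) + x * Complex.exp (θ * Complex.I)‖ ^ 2 = 1 + 2 * x * Real.cos θ + x ^ 2 := by
    rw [Complex.sq_norm, Complex.normSq_apply]
    simp [Complex.exp_ofReal_mul_I_re, Complex.exp_ofReal_mul_I_im]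
    nlinarith [Real.sin_sq_add_cos_sq θ]
  have h2 := Real.cos_le_one_sub_mul_cos_sq hθ
  have h3 : Real.exp (-(x * θ ^ 2 / (2 * π ^ 2))) ^ 2 ≥ 1 - x * θ ^ 2 / π ^ 2 := by
    rw [← Real.exp_nat_mul]
    have : ((2 : ℕ) : ℝ) * -(x * θ ^ 2 / (2 * π ^ 2)) = - (x * θ ^ 2 / π ^ 2) := by
      push_cast; field_simp
    rw [this]
    linarith [Real.add_one_le_exp (- (x * θ ^ 2 / π ^ 2))]
  refine abs_le_of_sq_le_sq' ?_ (by positivity) |>.2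
  rw [h1, mul_pow]
  have h4 : (1 + x) ^ 2 * (1 - x * θ ^ 2 / π ^ 2) ≤ 
    (1 + x) ^ 2 * Real.exp (-(x * θ ^ 2 / (2 * π ^ 2))) ^ 2 := 
    mul_le_mul_of_nonneg_left h3 (by positivity)
  refine le_trans ?_ h4
  have h5 : x * Real.cos θ ≤ x * (1 - 2 / π ^ 2 * θ ^ 2) := mul_le_mul_of_nonneg_left h2 hx
  have h6 : (1 + x) ^ 2 * (x * θ ^ 2 / π ^ 2) ≤ 4 * (x * θ ^ 2 / π ^ 2) := by
    apply mul_le_mul_of_nonneg_right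
    · nlinarith
    · positivity
  have h7 : x * (1 - 2 / π ^ 2 * θ ^ 2) = x - 2 * (x * θ ^ 2 / π ^ 2) := by ring
  nlinarith

lemma CP_dom (n D : ℕ) (x θ : ℝ) (hx : 0 < x) (hx1 : x < 1) (hθ : |θ| ≤ π) :
    ‖CP (n + 1) (x * Complex.exp (θ * Complex.I))‖ ≤ 
      Real.exp (-(x * θ ^ 2 / (2 * π ^ 2))) ^ D * ‖CP (n + 1) x‖ + (n * x) ^ n * (1 + x) ^ D := by
  have hz : (1 : ℂ) + x * Complex.exp (θ * Complex.I) ≠ 0 := by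
    intro h0
    have h1 : (x : ℂ) * Complex.exp (θ * Complex.I) = -1 := by linear_combination h0
    have h2 := congrArg norm h1
    rw [norm_mul, Complex.norm_exp_ofReal_mul_I, mul_one, norm_neg, norm_one, Complex.norm_real,
      Real.norm_of_nonneg hx.le] at h2
    linarith
  have hx0 : (1 : ℂ) + x ≠ 0 := by
    have : (1 : ℝ) + x ≠ 0 := by positivity
    exact_mod_cast this
  rw [CP_QP n _ hz, CP_QP n _ hx0]
  set Y := ‖(1 : ℂ) + x * Complex.exp (θ * Complex.I)‖ with hY
  set E := Real.exp (-(x * θ ^ 2 / (2 * π ^ 2))) with hE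
  have hE1 : E ≤ 1 := by rw [hE, Real.exp_le_one_iff, neg_nonpos]; positivity
  have hE0 : 0 ≤ E := (Real.exp_pos _).le
  have hYE : Y ≤ (1 + x) * E := norm_one_add_le x θ hx.le hx1.le hθ
  have hY0 : 0 ≤ Y := norm_nonneg _
  have k1 : ‖Polynomial.aeval ((1 : ℂ) + x * Complex.exp (θ * Complex.I)) (QP n n)‖ ≤ 
      ∑ M ∈ range ((QP n n).natDegree + 1), (QP n n).coeff M * Y ^ M := by
    rw [Polynomial.aeval_eq_sum_range]
    refine (norm_sum_le _ _).trans (Finset.sum_le_sum fun M _ => ?_)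
    rw [norm_smul, norm_pow, Real.norm_of_nonneg (QP_coeff_nonneg _ _ _)]
  have k2 : ∀ M, (QP n n).coeff M * Y ^ M ≤ 
      E ^ D * ((QP n n).coeff M * (1 + x) ^ M) + (1 + x) ^ D * (QP n n).coeff M := by
    intro M
    have hc := QP_coeff_nonneg n n M
    have hYM : Y ^ M ≤ (1 + x) ^ M * E ^ M := by rw [← mul_pow]; exact pow_le_pow_left₀ hY0 hYE M
    rcases le_total D M with h | h
    · have : E ^ M ≤ E ^ D := pow_le_pow_of_le_one hE0 hE1 h
      have h2 : Y ^ M ≤ (1 + x) ^ M * E ^ D := hYM.trans (by gcongr)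
      have h3 : 0 ≤ (1 + x) ^ D * (QP n n).coeff M := by positivity
      have := mul_le_mul_of_nonneg_left h2 hc
      linarith
    · have : E ^ M ≤ 1 := pow_le_one₀ hE0 hE1
      have h2 : Y ^ M ≤ (1 + x) ^ D := hYM.trans (by
        calc (1 + x) ^ M * E ^ M ≤ (1 + x) ^ M * 1 := by gcongr
          _ ≤ (1 + x) ^ D := by rw [mul_one]; exact pow_le_pow_right₀ (by linarith) h)
      have h3 : 0 ≤ E ^ D * ((QP n n).coeff M * (1 + x) ^ M) := by positivity
      have := mul_le_mul_of_nonneg_left h2 hc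
      linarith
  have k3 : ‖Polynomial.aeval ((1 : ℂ) + x) (QP n n)‖ = 
      ∑ M ∈ range ((QP n n).natDegree + 1), (QP n n).coeff M * (1 + x) ^ M := by
    have : (1 : ℂ) + x = ((1 + x : ℝ) : ℂ) := by push_cast; rfl
    rw [Polynomial.aeval_eq_sum_range, this]
    have h2 : ∑ i ∈ range ((QP n n).natDegree + 1), (QP n n).coeff i • ((1 + x : ℝ) : ℂ) ^ i = 
      ((∑ M ∈ range ((QP n n).natDegree + 1), (QP n n).coeff M * (1 + x) ^ M : ℝ) : ℂ) := by
      push_cast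
      exact Finset.sum_congr rfl fun M _ => by simp
    rw [h2, Complex.norm_real, Real.norm_of_nonneg]
    refine Finset.sum_nonneg fun M _ => ?_
    have hc := QP_coeff_nonneg n n M
    positivity
  have k4 : ∑ M ∈ range ((QP n n).natDegree + 1), (QP n n).coeff M ≤ (n : ℝ) ^ n / n.factorial := by
    have h1 := Polynomial.eval_eq_sum_range (p := QP n n) 1
    simp only [one_pow, mul_one] at h1
    rw [← h1, QP_eval_one]
    refine (cw_le Clo _ (fun _ => zero_le_one) n n).trans ?_
    simp
  have k5 : ‖Polynomial.aeval ((1 : ℂ) + x * Complex.exp (θ * Complex.I)) (QP n n)‖ ≤ 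
      E ^ D * ‖Polynomial.aeval ((1 : ℂ) + x) (QP n n)‖ + (1 + x) ^ D * ((n : ℝ) ^ n / n.factorial) := by
    refine k1.trans ((Finset.sum_le_sum fun M _ => k2 M).trans ?_)
    rw [Finset.sum_add_distrib, ← Finset.mul_sum, ← Finset.mul_sum, ← k3]
    gcongr
  have hxn : ‖(x : ℂ)‖ = x := by rw [Complex.norm_real, Real.norm_of_nonneg hx.le]
  simp only [norm_mul, norm_pow, Complex.norm_exp_ofReal_mul_I, mul_one, hxn, Complex.norm_natCast]
  have hf : (0 : ℝ) < n.factorial := by positivity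
  calc x ^ n * n.factorial * ‖Polynomial.aeval ((1 : ℂ) + x * Complex.exp (θ * Complex.I)) (QP n n)‖ 
      ≤ x ^ n * n.factorial * (E ^ D * ‖Polynomial.aeval ((1 : ℂ) + x) (QP n n)‖ + 
        (1 + x) ^ D * ((n : ℝ) ^ n / n.factorial)) := by gcongr
    _ = _ := by rw [mul_pow]; field_simp

lemma cwup_one (m h : ℕ) (hh : h ≤ m + 1) :
    cw Cup (fun _ => (1 : ℝ)) m h = ((m : ℝ) + 1) ^ h / h.factorial -
      (if h = 0 then 0 else ((m : ℝ) + 1) ^ (h - 1) / (h - 1).factorial) := by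
  induction m generalizing h with
  | zero =>
    have : h = 0 ∨ h = 1 := by omega
    rcases this with rfl | rfl <;> simp [cw]
  | succ m ih =>
    rcases Nat.lt_or_ge (m + 1) h with h1 | h1
    · have : h = m + 1 + 1 := by omega
      subst this
      rw [cwup_eq_zero _ _ _ (by omega)]
      simp only [Nat.add_eq_zero_iff, one_ne_zero, and_false, if_false, Nat.add_sub_cancel]
      rw [Nat.factorial_succ (m+1)]
      have : ((m + 1).factorial : ℝ) ≠ 0 := by positivity
      push_cast
      field_simp
      ring
    · simp only [cw, Cup, h1, decide_true, if_true]
      have e : ∀ ij ∈ antidiagonal h, cw Cup (fun _ => (1 : ℝ)) m ij.1 * (1 ^ ij.2 / (ij.2.factorial : ℝ)) =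
          (((m : ℝ) + 1) ^ ij.1 / ij.1.factorial) * (1 ^ ij.2 / (ij.2.factorial : ℝ)) -
          (if ij.1 = 0 then 0 else ((m : ℝ) + 1) ^ (ij.1 - 1) / (ij.1 - 1).factorial) * 
            (1 ^ ij.2 / (ij.2.factorial : ℝ)) := by
        intro ij hij
        rw [HasAntidiagonal.mem_antidiagonal] at hij
        rw [ih ij.1 (by omega), sub_mul]
      rw [Finset.sum_congr rfl e, Finset.sum_sub_distrib, exp_conv]
      push_cast
      congr 1
      cases h with
      | zero => simp
      | succ h =>
        rw [Finset.Nat.sum_antidiagonal_succ]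
        simp only [if_true, zero_mul, zero_add, Nat.add_eq_zero_iff, one_ne_zero, and_false, if_false, 
          Nat.add_sub_cancel]
        rw [exp_conv]

lemma hasSum_exp (a : ℝ) : HasSum (fun h : ℕ => a ^ h / (h.factorial : ℝ)) (Real.exp a) := by
  rw [Real.exp_eq_exp_ℝ]
  exact NormedSpace.expSeries_div_hasSum_exp a

/-- Poisson mass below `M` for parameter `M * x`. -/
noncomputable def PM (x : ℝ) (M : ℕ) : ℝ := Real.exp (-(M * x)) * ∑ h ∈ range M, (M * x) ^ h / (h.factorial : ℝ)

lemma exp_chern (x : ℝ) (M : ℕ) : Real.exp (-(M * x)) * (x ^ M * Real.exp M) = (x * Real.exp (1 - x)) ^ M := by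
  rw [mul_pow, ← Real.exp_nat_mul, mul_left_comm, ← Real.exp_add]
  congr 2; ring

lemma PM_bound (x : ℝ) (hx : 0 ≤ x) (hx1 : x ≤ 1) (M : ℕ) : 
    1 - (x * Real.exp (1 - x)) ^ M ≤ PM x M ∧ PM x M ≤ 1 := by
  have h1 := hasSum_exp (M * x)
  have h2 := (hasSum_nat_add_iff' M).2 h1
  have h3 := (hasSum_nat_add_iff' M).2 ((hasSum_exp M).mul_left (x ^ M))
  have h4 := hasSum_le (fun h => ?_) h2 h3
  · have h5 : 0 ≤ ∑ i ∈ range M, x ^ M * ((M : ℝ) ^ i / (i.factorial : ℝ)) := by positivity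
    have h6 : Real.exp (-(M * x)) * Real.exp (M * x) = 1 := by rw [← Real.exp_add]; simp
    have h7 : Real.exp (M * x) - x ^ M * Real.exp M ≤ ∑ i ∈ range M, (M * x) ^ i / (i.factorial : ℝ) := by linarith
    have h8 := mul_le_mul_of_nonneg_left h7 (Real.exp_pos (-(M * x))).le
    rw [mul_sub, h6, exp_chern] at h8
    have h9 := h2.nonneg (fun h => by positivity)
    have h10 := mul_le_mul_of_nonneg_left (sub_nonneg.1 h9) (Real.exp_pos (-(M * x))).le
    rw [h6] at h10
    exact ⟨h8, h10⟩
  · rw [mul_pow, ← mul_div_assoc, mul_comm]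
    gcongr ?_ * _ / _
    exact pow_le_pow_of_le_one hx hx1 (by omega)

lemma xe_lt_one (x : ℝ) (hx : x ≠ 1) : x * Real.exp (1 - x) < 1 := by
  have h := Real.add_one_lt_exp (x := x - 1) (by intro h; apply hx; linarith)
  have h2 : Real.exp (x - 1) * Real.exp (1 - x) = 1 := by rw [← Real.exp_add]; simp
  have := Real.exp_pos (1 - x)
  have h3 := mul_lt_mul_of_pos_right h this
  rw [h2] at h3
  simpa using h3

lemma xe_pow_tendsto (x : ℝ) (hx : 0 ≤ x) (hx1 : x < 1) : 
    Tendsto (fun M : ℕ => (x * Real.exp (1 - x)) ^ M) atTop (𝓝 0) :=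
  tendsto_pow_atTop_nhds_zero_of_lt_one (by positivity) (xe_lt_one x hx1.ne)

lemma PM_tendsto (x : ℝ) (hx : 0 ≤ x) (hx1 : x < 1) : Tendsto (PM x) atTop (𝓝 1) := by
  have h1 : Tendsto (fun M : ℕ => 1 - (x * Real.exp (1 - x)) ^ M) atTop (𝓝 1) := by
    simpa using (xe_pow_tendsto x hx hx1).const_sub 1
  exact tendsto_of_tendsto_of_tendsto_of_le_of_le h1 tendsto_const_nhds 
    (fun M => (PM_bound x hx hx1.le M).1) (fun M => (PM_bound x hx hx1.le M).2)

lemma beta_tendsto (x : ℝ) (hx : 0 ≤ x) (hx1 : x < 1) : Tendsto (fun m : ℕ => Real.exp (-(m * x)) * 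
    ∑ h ∈ range (m + 1), x ^ h * cw Cup (fun _ => (1 : ℝ)) m h) atTop (𝓝 (Real.exp x * (1 - x))) := by
  have key : ∀ m : ℕ, Real.exp (-(m * x)) * ∑ h ∈ range (m + 1), x ^ h * cw Cup (fun _ => (1 : ℝ)) m h = 
      Real.exp x * ((1 - x) * PM x (m + 1) + Real.exp (-((m + 1 : ℕ) * x)) * 
        (((m + 1 : ℕ) * x) ^ (m + 1) / ((m + 1).factorial : ℝ))) := by
    intro m
    have e1 : ∀ h ∈ range (m + 1), x ^ h * cw Cup (fun _ => (1 : ℝ)) m h = 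
        (((m + 1 : ℕ) : ℝ) * x) ^ h / h.factorial - x ^ h * (if h = 0 then 0 else ((m : ℝ) + 1) ^ (h - 1) / (h - 1).factorial) := by
      intro h hh
      rw [cwup_one m h (by simp at hh; omega)]
      push_cast
      rw [mul_pow]; ring
    have e2 : ∑ h ∈ range (m + 1), x ^ h * (if h = 0 then 0 else ((m : ℝ) + 1) ^ (h - 1) / (h - 1).factorial) = 
        x * ∑ h ∈ range m, (((m + 1 : ℕ) : ℝ) * x) ^ h / h.factorial := by
      rw [Finset.sum_range_succ', Finset.mul_sum]
      simp only [Nat.add_eq_zero_iff, one_ne_zero, and_false, if_false, Nat.add_sub_cancel, if_true, mul_zero, add_zero]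
      refine Finset.sum_congr rfl fun h _ => ?_
      push_cast
      rw [mul_pow, pow_succ]; ring
    have e3 : (((m + 1 : ℕ) : ℝ) * x) ^ (m + 1) / ((m + 1).factorial : ℝ) = x * ((((m + 1 : ℕ) : ℝ) * x) ^ m / (m.factorial : ℝ)) := by
      rw [Nat.factorial_succ]
      have : (m.factorial : ℝ) ≠ 0 := by positivity
      push_cast
      field_simp
      ring
    have e4 : Real.exp (-(m * x)) = Real.exp x * Real.exp (-((m + 1 : ℕ) * x)) := by
      rw [← Real.exp_add]; congr 1; push_cast; ring
    rw [Finset.sum_congr rfl e1, Finset.sum_sub_distrib, e2, e3, e4, PM, Finset.sum_range_succ]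
    ring
  simp_rw [key]
  have hP := (PM_tendsto x hx hx1).comp (tendsto_add_atTop_nat 1)
  have h0 : Tendsto (fun m : ℕ => Real.exp (-((m + 1 : ℕ) * x)) * 
        (((m + 1 : ℕ) * x) ^ (m + 1) / ((m + 1).factorial : ℝ))) atTop (𝓝 0) := by
    refine squeeze_zero (fun m => by positivity) (fun m => ?_) 
      ((xe_pow_tendsto x hx hx1).comp (tendsto_add_atTop_nat 1))
    simp only [Function.comp]
    rw [← exp_chern, mul_pow, mul_comm (((m + 1 : ℕ) : ℝ) ^ (m + 1)), mul_div_assoc]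
    gcongr
    exact Real.pow_div_factorial_le_exp _ (by positivity) _
  have := ((hP.const_mul (1 - x)).add h0).const_mul (Real.exp x)
  simpa using this

lemma hasSum_Xpow (a x : ℝ) (j : ℕ) : HasSum (fun h => 
    PowerSeries.coeff h (PowerSeries.X ^ j * eS a) * x ^ h) (x ^ j * Real.exp (a * x)) := by
  rw [← hasSum_nat_add_iff' j]
  have h0 : ∑ i ∈ range j, PowerSeries.coeff i (PowerSeries.X ^ j * eS a) * x ^ i = 0 := by
    refine Finset.sum_eq_zero fun i hi => ?_
    rw [PowerSeries.coeff_X_pow_mul', if_neg (by simp at hi; omega), zero_mul]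
  rw [h0, sub_zero]
  refine ((hasSum_exp (a * x)).mul_left (x ^ j)).congr_fun fun h => ?_
  simp [PowerSeries.coeff_X_pow_mul', eS, mul_pow, pow_add]
  ring

lemma hasSum_W (x : ℝ) (t : ℕ) : HasSum (fun h => cw Clo (fun _ => (1 : ℝ)) t h * x ^ h) 
    (Real.exp (t * x) - ∑ j ∈ range t, cw Clo (fun _ => (1 : ℝ)) j j * (x ^ j * Real.exp (((t : ℝ) - (j + 1)) * x))) := by
  have h1 := (hasSum_exp (t * x)).sub (hasSum_sum (s := range t) fun j _ => 
    (hasSum_Xpow ((t : ℝ) - (j + 1)) x j).mul_left (cw Clo (fun _ => (1 : ℝ)) j j))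
  refine h1.congr_fun fun h => ?_
  have := congrArg (PowerSeries.coeff h) (WS_first_fail (fun _ => (1 : ℝ)) t)
  simp only [map_add, map_sum, PowerSeries.coeff_C_mul, WS, PowerSeries.coeff_mk, Finset.sum_const, 
    Finset.card_range, nsmul_eq_mul, mul_one] at this
  push_cast at this
  have e : cw Clo (fun _ => (1 : ℝ)) t h = PowerSeries.coeff h (eS (t : ℝ)) - 
    ∑ j ∈ range t, cw Clo (fun _ => (1 : ℝ)) j j * PowerSeries.coeff h (PowerSeries.X ^ j * eS ((t : ℝ) - (j + 1))) := by
    rw [this]; ring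
  rw [e, sub_mul, Finset.sum_mul]
  congr 1
  · simp [eS, mul_pow]; ring
  · exact Finset.sum_congr rfl fun j _ => by ring

/-- Ballot-type partial sum. -/
noncomputable def SB (x : ℝ) (m : ℕ) : ℝ := 
  ∑ j ∈ range m, cw Clo (fun _ => (1 : ℝ)) j j * (x ^ j * Real.exp (-(x * (j + 1))))

lemma SB_tendsto (x : ℝ) (hx : 0 ≤ x) (hx1 : x < 1) : Tendsto (SB x) atTop (𝓝 1) := by
  have key : ∀ t : ℕ, 0 ≤ 1 - SB x t ∧ 1 - SB x t ≤ (x * Real.exp (1 - x)) ^ t := by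
    intro t
    have h1 := (hasSum_W x t).mul_left (Real.exp (-(t * x)))
    have e : Real.exp (-(t * x)) * (Real.exp (t * x) - ∑ j ∈ range t, cw Clo (fun _ => (1 : ℝ)) j j * (x ^ j * Real.exp (((t : ℝ) - (j + 1)) * x))) = 1 - SB x t := by
      rw [mul_sub, ← Real.exp_add, SB, Finset.mul_sum]
      simp only [neg_add_cancel, Real.exp_zero]
      congr 1
      refine Finset.sum_congr rfl fun j _ => ?_
      rw [mul_left_comm, mul_left_comm (Real.exp _), ← Real.exp_add]
      congr 3; ring
    rw [e] at h1
    have hn : ∀ h, 0 ≤ cw Clo (fun _ => (1 : ℝ)) t h := cw_nonneg _ _ (fun _ => zero_le_one) t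
    refine ⟨h1.nonneg fun h => mul_nonneg (Real.exp_pos _).le (mul_nonneg (hn h) (by positivity)), ?_⟩
    rw [← exp_chern]
    refine hasSum_le (fun h => ?_) h1 (((hasSum_exp t).mul_left (x ^ t)).mul_left _)
    refine mul_le_mul_of_nonneg_left ?_ (Real.exp_pos _).le
    rcases Nat.lt_or_ge h t with hh | hh
    · rw [cwlo_eq_zero _ _ _ hh, zero_mul]; positivity
    · have h2 := cw_le Clo (fun _ => (1 : ℝ)) (fun _ => zero_le_one) t h
      simp only [Finset.sum_const, Finset.card_range, nsmul_eq_mul, mul_one] at h2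
      rw [mul_comm]
      exact mul_le_mul (pow_le_pow_of_le_one hx hx1.le hh) h2 (hn h) (by positivity)
  have h0 : Tendsto (fun t => 1 - SB x t) atTop (𝓝 0) := 
    squeeze_zero (fun t => (key t).1) (fun t => (key t).2) (xe_pow_tendsto x hx hx1)
  simpa using h0.const_sub 1

lemma SB_kappa (c : ℝ) (hc : 0 < c) (m : ℕ) : 
    SB (c / (1 - Real.exp (-c))) m = Real.exp (-c) * SB (c / (1 - Real.exp (-c)) * Real.exp (-c)) m := by
  rw [SB, SB, Finset.mul_sum]
  refine Finset.sum_congr rfl fun j _ => ?_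
  have h1 : 1 - Real.exp (-c) ≠ 0 := by
    have : Real.exp (-c) < 1 := Real.exp_lt_one_iff.2 (by linarith)
    linarith
  set κ := c / (1 - Real.exp (-c)) with hκ
  have h2 : κ = κ * Real.exp (-c) + c := by rw [hκ]; field_simp; ring
  have h3 : Real.exp (-(κ * (j + 1))) = Real.exp (-c) * (Real.exp (-c) ^ j * Real.exp (-(κ * Real.exp (-c) * (j + 1)))) := by
    rw [← Real.exp_nat_mul, ← Real.exp_add, ← Real.exp_add]; congr 1
    have : -(κ * ((j:ℝ) + 1)) = -((κ * Real.exp (-c) + c) * (j + 1)) := by rw [← h2]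
    rw [this]; ring
  rw [h3, mul_pow]; ring

lemma sum_rev {R : Type} [AddCommMonoid R] (u : ℕ → R) (n m : ℕ) (hm : m ≤ n) :
    ∑ i ∈ range n, u i = ∑ i ∈ range (n - m), u i + ∑ i ∈ range m, u (n - 1 - i) := by
  obtain ⟨d, rfl⟩ := Nat.exists_eq_add_of_le' hm
  rw [Finset.sum_range_add, Nat.add_sub_cancel, ← Finset.sum_range_reflect (fun x => u (d + x))]
  congr 1
  refine Finset.sum_congr rfl fun i hi => ?_
  rw [Finset.mem_range] at hi
  congr 1; omega

/-- The truncated expansion. -/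
noncomputable def Tr (u : ℕ → ℂ) (n m : ℕ) : ℂ :=
  ∑ h ∈ range (m + 1), n.factorial * cw Cup (fun i => u (n - 1 - i)) m h *
    ((∑ i ∈ range (n - m), u i) ^ (n - h) / ((n - h).factorial : ℂ) -
      ∑ j ∈ range m, cw Clo u j j * (((∑ i ∈ range (n - m), u i) - ∑ i ∈ range (j + 1), u i) ^ (n - h - j)
        / ((n - h - j).factorial : ℂ)))

lemma tail_le (u : ℕ → ℂ) (n m : ℕ) (hm : 2 * m ≤ n) (A : ℕ → ℝ) 
    (hA : ∀ j, A j = ∑ t ∈ range j, ‖u t‖) :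
    ‖n.factorial * cw Clo u n n - Tr u n m‖ ≤ 
      ∑ j ∈ Ico m (n - m), (n.choose j : ℝ) * (A j ^ j * (A n - A j) ^ (n - j)) := by
  have hAmono : Monotone A := by
    refine monotone_nat_of_le_succ fun j => ?_
    rw [hA, hA, Finset.sum_range_succ]
    linarith [norm_nonneg (u j)]
  have hA0 : ∀ j, 0 ≤ A j := fun j => by rw [hA]; positivity
  have hB : A n - A (n - m) = ∑ i ∈ range m, ‖u (n - 1 - i)‖ := by
    rw [hA, hA, sum_rev (fun t => ‖u t‖) n m (by omega)]; ring
  have e1 : n.factorial * cw Clo u n n - Tr u n m = - ∑ j ∈ Ico m (n - m), ∑ h ∈ range (m + 1), 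
      n.factorial * cw Cup (fun i => u (n - 1 - i)) m h * (cw Clo u j j * (((∑ i ∈ range (n - m), u i) - ∑ i ∈ range (j + 1), u i) ^ (n - h - j)
        / ((n - h - j).factorial : ℂ))) := by
    rw [cw_split u n m (by omega), Tr, Finset.mul_sum, ← Finset.sum_sub_distrib, Finset.sum_comm, ← Finset.sum_neg_distrib]
    refine Finset.sum_congr rfl fun h hh => ?_
    rw [Finset.mem_range] at hh
    rw [cwlo_eq u (n - m) (n - h) (by omega), ← Finset.mul_sum, Finset.sum_Ico_eq_sub _ (show m ≤ n - m by omega)]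
    ring
  rw [e1, norm_neg]
  refine (norm_sum_le _ _).trans (Finset.sum_le_sum fun j hj => ?_)
  rw [Finset.mem_Ico] at hj
  have hD : ‖(∑ i ∈ range (n - m), u i) - ∑ i ∈ range (j + 1), u i‖ ≤ A (n - m) - A j := by
    have h1 : (∑ i ∈ range (n - m), u i) - ∑ i ∈ range (j + 1), u i = ∑ i ∈ Ico (j + 1) (n - m), u i := by
      rw [Finset.sum_Ico_eq_sub _ (by omega)]
    have h2 : A (n - m) - A (j + 1) = ∑ i ∈ Ico (j + 1) (n - m), ‖u i‖ := by
      rw [Finset.sum_Ico_eq_sub _ (by omega), hA, hA]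
    rw [h1]
    refine (norm_sum_le _ _).trans ?_
    rw [← h2]
    linarith [hAmono (Nat.le_succ j)]
  have hD0 : 0 ≤ A (n - m) - A j := (norm_nonneg _).trans hD
  have hB0 : 0 ≤ A n - A (n - m) := by rw [hB]; positivity
  calc ‖∑ h ∈ range (m + 1), n.factorial * cw Cup (fun i => u (n - 1 - i)) m h * (cw Clo u j j * (((∑ i ∈ range (n - m), u i) - ∑ i ∈ range (j + 1), u i) ^ (n - h - j)
        / ((n - h - j).factorial : ℂ)))‖ 
      ≤ ∑ h ∈ range (m + 1), n.factorial * (A j ^ j / j.factorial) * 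
        ((A n - A (n - m)) ^ h / h.factorial * ((A (n - m) - A j) ^ (n - j - h) / (n - j - h).factorial)) := by
        refine (norm_sum_le _ _).trans (Finset.sum_le_sum fun h hh => ?_)
        rw [Finset.mem_range] at hh
        have e2 : n - h - j = n - j - h := by omega
        rw [e2, norm_mul, norm_mul, norm_mul, norm_div, norm_pow, Complex.norm_natCast, Complex.norm_natCast]
        have b1 := cw_norm_le Cup (fun i => u (n - 1 - i)) m h
        rw [← hB] at b1
        have b2 := cw_norm_le Clo u j j
        rw [← hA] at b2
        have hAj := hA0 j
        calc _ ≤ n.factorial * ((A n - A (n - m)) ^ h / h.factorial) * ((A j ^ j / j.factorial) * 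
            ((A (n - m) - A j) ^ (n - j - h) / (n - j - h).factorial)) := by gcongr
          _ = _ := by ring
    _ ≤ ∑ h ∈ range (n - j + 1), n.factorial * (A j ^ j / j.factorial) * 
        ((A n - A (n - m)) ^ h / h.factorial * ((A (n - m) - A j) ^ (n - j - h) / (n - j - h).factorial)) := by
        refine Finset.sum_le_sum_of_subset_of_nonneg (by intro x; simp only [Finset.mem_range]; omega) fun h _ _ => ?_
        have hAj := hA0 j
        positivity
    _ = (n.choose j : ℝ) * (A j ^ j * (A n - A j) ^ (n - j)) := by
        have e3 := exp_conv (A n - A (n - m)) (A (n - m) - A j) (n - j)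
        rw [Finset.Nat.sum_antidiagonal_eq_sum_range_succ_mk] at e3
        simp only at e3
        rw [← Finset.mul_sum, e3, Nat.cast_choose ℝ (show j ≤ n by omega)]
        have e4 : A n - A (n - m) + (A (n - m) - A j) = A n - A j := by ring
        rw [e4]
        ring

lemma binom_chern (n j : ℕ) (hj : j ≤ n) (U s : ℝ) (hU : 0 ≤ U) (hU1 : U ≤ 1) (hs : 0 < s) :
    (n.choose j : ℝ) * (U ^ j * (1 - U) ^ (n - j)) ≤ (1 / s) ^ j * Real.exp (n * (U * (s - 1))) := by
  have h1 : (n.choose j : ℝ) * ((U * s) ^ j * (1 - U) ^ (n - j)) ≤ (U * s + (1 - U)) ^ n := by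
    rw [add_pow]
    have := Finset.single_le_sum (f := fun m => (U * s) ^ m * (1 - U) ^ (n - m) * (n.choose m : ℝ)) 
      (s := range (n + 1)) (fun i _ => by
        have : 0 ≤ 1 - U := by linarith
        positivity) (Finset.mem_range.2 (Nat.lt_succ_of_le hj))
    linarith
  have h2 : (U * s + (1 - U)) ^ n ≤ Real.exp (n * (U * (s - 1))) := by
    rw [Real.exp_nat_mul]
    have h3 := Real.add_one_le_exp (U * (s - 1))
    refine pow_le_pow_left₀ ?_ (by linarith) n
    have : 0 ≤ U * s := by positivity
    linarith
  have h4 : (n.choose j : ℝ) * (U ^ j * (1 - U) ^ (n - j)) = (1 / s) ^ j * ((n.choose j : ℝ) * ((U * s) ^ j * (1 - U) ^ (n - j))) := by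
    rw [mul_pow, one_div, inv_pow]; field_simp
  rw [h4]
  exact mul_le_mul_of_nonneg_left (h1.trans h2) (by positivity)

lemma binom_case1 (n j : ℕ) (hj : j ≤ n) (U a : ℝ) (hU1 : U ≤ 1) (ha : 1 ≤ a) (h : a * j ≤ n * U) (hn : 0 < n) :
    (n.choose j : ℝ) * (U ^ j * (1 - U) ^ (n - j)) ≤ (a * Real.exp (1 - a)) ^ j := by
  have hn' : (0 : ℝ) < n := by exact_mod_cast hn
  have hU : 0 ≤ U := by
    by_contra hneg
    push Not at hneg
    have : (0 : ℝ) ≤ a * j := by positivity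
    nlinarith
  refine (binom_chern n j hj U (1 / a) hU hU1 (by positivity)).trans ?_
  rw [one_div_one_div, mul_pow, ← Real.exp_nat_mul]
  refine mul_le_mul_of_nonneg_left (Real.exp_le_exp.2 ?_) (by positivity)
  have : 1 / a - 1 ≤ 0 := by rw [sub_nonpos, div_le_one (by linarith)]; exact ha
  have h2 : n * (U * (1 / a - 1)) ≤ a * j * (1 / a - 1) := by nlinarith
  refine h2.trans (le_of_eq ?_)
  have : a ≠ 0 := by positivity
  field_simp

lemma binom_case2 (n j : ℕ) (hj : j ≤ n) (U b : ℝ) (hU0 : 0 ≤ U) (hU1 : U ≤ 1) (hb0 : 0 < b) (hb : b ≤ 1)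
    (h : n * (1 - U) ≤ b * (n - j : ℕ)) :
    (n.choose j : ℝ) * (U ^ j * (1 - U) ^ (n - j)) ≤ (b * Real.exp (1 - b)) ^ (n - j) := by
  have h0 := binom_chern n (n - j) (by omega) (1 - U) (1 / b) (by linarith) (by linarith) (by positivity)
  rw [Nat.choose_symm hj, Nat.sub_sub_self hj, sub_sub_cancel, mul_comm ((1 - U) ^ (n - j))] at h0
  refine h0.trans ?_
  rw [one_div_one_div, mul_pow, ← Real.exp_nat_mul]
  refine mul_le_mul_of_nonneg_left (Real.exp_le_exp.2 ?_) (by positivity)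
  have : 0 ≤ 1 / b - 1 := by rw [sub_nonneg, le_div_iff₀ hb0]; linarith
  have h2 : n * ((1 - U) * (1 / b - 1)) ≤ b * (n - j : ℕ) * (1 / b - 1) := by nlinarith
  refine h2.trans (le_of_eq ?_)
  field_simp

/-- Exponential distribution function on the unit interval. -/
noncomputable def gE (ρ x : ℝ) : ℝ := (1 - Real.exp (-(ρ * x))) / (1 - Real.exp (-ρ))

lemma exp_convex_le (p q s : ℝ) (hs : 0 ≤ s) (hs1 : s ≤ 1) : 
    Real.exp ((1 - s) * p + s * q) ≤ (1 - s) * Real.exp p + s * Real.exp q := by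
  have := convexOn_exp.2 (Set.mem_univ p) (Set.mem_univ q) (show 0 ≤ 1 - s by linarith) hs (by ring)
  simpa using this

lemma gE_half (ρ : ℝ) : (1 - Real.exp (-(ρ/2))) = (1 - Real.exp (-ρ)) / (1 + Real.exp (-(ρ / 2))) := by
  have h : Real.exp (-ρ) = Real.exp (-(ρ/2)) * Real.exp (-(ρ/2)) := by rw [← Real.exp_add]; congr 1; ring
  have := Real.exp_pos (-(ρ/2))
  rw [h]
  field_simp; ring

lemma gE_low (ρ ρ0 x : ℝ) (hρ0 : 0 < ρ0) (hρ : ρ0 ≤ ρ) (hx : 0 ≤ x) (hx1 : x ≤ 1 / 2) :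
    2 / (1 + Real.exp (-(ρ0 / 2))) * x ≤ gE ρ x := by
  have hpos : 0 < 1 - Real.exp (-ρ) := sub_pos.2 (Real.exp_lt_one_iff.2 (by linarith))
  have h1 := exp_convex_le 0 (-(ρ/2)) (2 * x) (by linarith) (by linarith)
  rw [show (1 - 2 * x) * 0 + 2 * x * -(ρ / 2) = -(ρ * x) by ring, Real.exp_zero] at h1
  have h2 : 2 * x * (1 - Real.exp (-(ρ / 2))) ≤ 1 - Real.exp (-(ρ * x)) := by linarith
  rw [gE_half ρ] at h2
  have h3 : Real.exp (-(ρ / 2)) ≤ Real.exp (-(ρ0 / 2)) := Real.exp_le_exp.2 (by linarith)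
  have h4 := Real.exp_pos (-(ρ / 2))
  calc 2 / (1 + Real.exp (-(ρ0 / 2))) * x ≤ 2 / (1 + Real.exp (-(ρ / 2))) * x := by gcongr
    _ ≤ gE ρ x := by
      rw [gE, le_div_iff₀ hpos]
      refine le_trans (le_of_eq ?_) h2
      ring

lemma gE_high (ρ ρ0 x : ℝ) (hρ0 : 0 < ρ0) (hρ : ρ0 ≤ ρ) (hx : 1 / 2 ≤ x) (hx1 : x ≤ 1) :
    1 - gE ρ x ≤ (2 - 2 / (1 + Real.exp (-(ρ0 / 2)))) * (1 - x) := by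
  have hpos : 0 < 1 - Real.exp (-ρ) := sub_pos.2 (Real.exp_lt_one_iff.2 (by linarith))
  have h1 := exp_convex_le (-ρ) (-(ρ/2)) (2 * (1 - x)) (by linarith) (by linarith)
  rw [show (1 - 2 * (1 - x)) * -ρ + 2 * (1 - x) * -(ρ / 2) = -(ρ * x) by ring] at h1
  have h3 : Real.exp (-(ρ / 2)) ≤ Real.exp (-(ρ0 / 2)) := Real.exp_le_exp.2 (by linarith)
  have h4 := Real.exp_pos (-(ρ / 2))
  have h5 := gE_half ρ
  have h6 : Real.exp (-(ρ * x)) - Real.exp (-ρ) ≤ 2 * (1 - x) * ((1 - Real.exp (-ρ)) - (1 - Real.exp (-(ρ / 2)))) := by linarith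
  rw [h5] at h6
  calc 1 - gE ρ x ≤ (2 - 2 / (1 + Real.exp (-(ρ / 2)))) * (1 - x) := by
        rw [gE, sub_le_comm, le_div_iff₀ hpos]
        have e : 2 * (1 - x) * ((1 - Real.exp (-ρ)) - (1 - Real.exp (-ρ)) / (1 + Real.exp (-(ρ / 2)))) = 
          (2 - 2 / (1 + Real.exp (-(ρ / 2)))) * (1 - x) * (1 - Real.exp (-ρ)) := by ring
        rw [e] at h6
        linarith
    _ ≤ _ := by
        have : 0 ≤ 1 - x := by linarith
        gcongr

lemma geom_tail (r : ℝ) (h0 : 0 ≤ r) (h1 : r < 1) (n m : ℕ) (hm : 2 * m ≤ n) : 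
    ∑ j ∈ Ico m (n - m), (r ^ j + r ^ (n - j)) ≤ 2 / (1 - r) * r ^ m := by
  have key : ∀ a, ∑ j ∈ range a, r ^ j ≤ 1 / (1 - r) := fun a => by
    have := (hasSum_geometric_of_lt_one h0 h1).summable.sum_le_tsum (range a) (fun _ _ => by positivity)
    rw [tsum_geometric_of_lt_one h0 h1] at this
    rwa [one_div]
  have e1 : ∑ j ∈ Ico m (n - m), r ^ j = r ^ m * ∑ j ∈ range (n - m - m), r ^ j := by
    rw [Finset.sum_Ico_eq_sum_range, Finset.mul_sum]
    simp_rw [pow_add]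
  have e2 : ∑ j ∈ Ico m (n - m), r ^ (n - j) ≤ r ^ m * ∑ j ∈ range (n - m - m), r ^ j := by
    rw [Finset.sum_Ico_eq_sum_range, ← Finset.sum_range_reflect, Finset.mul_sum]
    refine Finset.sum_le_sum fun j hj => ?_
    rw [Finset.mem_range] at hj
    rw [← pow_add]
    exact pow_le_pow_of_le_one h0 h1.le (by omega)
  rw [Finset.sum_add_distrib, e1]
  have := mul_le_mul_of_nonneg_left (key (n - m - m)) (pow_nonneg h0 m)
  calc _ ≤ r ^ m * (1 / (1 - r)) + r ^ m * (1 / (1 - r)) := by linarith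
    _ = _ := by ring

/-- Normalized geometric weights. -/
noncomputable def uu (n : ℕ) (w : ℂ) (t : ℕ) : ℂ :=
  Complex.exp (-(w / n)) ^ t / ∑ s ∈ range n, Complex.exp (-(w / n)) ^ s

lemma norm_q (n : ℕ) (w : ℂ) : ‖Complex.exp (-(w / n))‖ = Real.exp (-(w.re / n)) := by
  rw [Complex.norm_exp, Complex.neg_re, Complex.div_natCast_re]

lemma norm_q_lt (n : ℕ) (w : ℂ) (hn : 0 < n) (hw : 0 < w.re) : Real.exp (-(w.re / n)) < 1 := by
  rw [Real.exp_lt_one_iff, neg_lt_zero]; positivity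

lemma q_ne_one (n : ℕ) (w : ℂ) (hn : 0 < n) (hw : 0 < w.re) : Complex.exp (-(w / n)) ≠ 1 := by
  intro h
  have := norm_q n w
  rw [h, norm_one] at this
  linarith [norm_q_lt n w hn hw]

lemma qn_ne_one (n : ℕ) (w : ℂ) (hn : 0 < n) (hw : 0 < w.re) : Complex.exp (-(w / n)) ^ n ≠ 1 := by
  intro h
  have h1 := congrArg norm h
  rw [norm_pow, norm_q, norm_one] at h1
  have := pow_lt_one₀ (Real.exp_pos _).le (norm_q_lt n w hn hw) hn.ne'
  linarith

lemma Z_ne (n : ℕ) (w : ℂ) (hn : 0 < n) (hw : 0 < w.re) : ∑ s ∈ range n, Complex.exp (-(w / n)) ^ s ≠ 0 := by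
  rw [geom_sum_eq (q_ne_one n w hn hw)]
  exact div_ne_zero (sub_ne_zero.2 (qn_ne_one n w hn hw)) (sub_ne_zero.2 (q_ne_one n w hn hw))

lemma uu_sum (n : ℕ) (w : ℂ) (hn : 0 < n) (hw : 0 < w.re) : ∑ t ∈ range n, uu n w t = 1 := by
  simp only [uu]
  rw [← Finset.sum_div, div_self (Z_ne n w hn hw)]

/-- Partial sums of norms. -/
noncomputable def AA (n : ℕ) (w : ℂ) (j : ℕ) : ℝ := ∑ t ∈ range j, ‖uu n w t‖

lemma AA_eq (n : ℕ) (w : ℂ) (hn : 0 < n) (hw : 0 < w.re) (j : ℕ) : 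
    AA n w j = (1 - Real.exp (-(w.re * (j / n)))) / (1 - Real.exp (-(w.re / n))) / 
      ‖∑ s ∈ range n, Complex.exp (-(w / n)) ^ s‖ := by
  simp only [AA, uu, norm_div, norm_pow, norm_q]
  have h := norm_q_lt n w hn hw
  have e : ∀ a b : ℝ, (a - 1) / (b - 1) = (1 - a) / (1 - b) := fun a b => by
    rw [← neg_div_neg_eq, neg_sub, neg_sub]
  rw [← Finset.sum_div, geom_sum_eq h.ne, ← Real.exp_nat_mul, e]
  congr 5; ring

lemma AA_ratio (n : ℕ) (w : ℂ) (hn : 0 < n) (hw : 0 < w.re) (j : ℕ) : 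
    AA n w j = AA n w n * gE w.re (j / n) := by
  have hn' : (n : ℝ) ≠ 0 := by positivity
  rw [AA_eq n w hn hw, AA_eq n w hn hw, gE, div_self hn', mul_one]
  have : 1 - Real.exp (-w.re) ≠ 0 := (sub_pos.2 (Real.exp_lt_one_iff.2 (by linarith))).ne'
  field_simp

lemma uu_tail (ρ0 : ℝ) (hρ0 : 0 < ρ0) : ∃ K r : ℝ, 0 ≤ K ∧ 0 ≤ r ∧ r < 1 ∧ ∀ (n m : ℕ) (w : ℂ), 0 < n → ρ0 ≤ w.re → 
    2 * m ≤ n → ‖n.factorial * cw Clo (uu n w) n n - Tr (uu n w) n m‖ ≤ AA n w n ^ n * (K * r ^ m) := by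
  have hE0 := Real.exp_pos (-(ρ0 / 2))
  have hE1 : Real.exp (-(ρ0 / 2)) < 1 := Real.exp_lt_one_iff.2 (by linarith)
  set a := 2 / (1 + Real.exp (-(ρ0 / 2))) with ha
  have ha1 : 1 < a := by rw [ha, lt_div_iff₀ (by linarith)]; linarith
  have ha2 : a < 2 := by rw [ha, div_lt_iff₀ (by linarith)]; linarith
  set r := max (a * Real.exp (1 - a)) ((2 - a) * Real.exp (1 - (2 - a))) with hr
  have hr0 : 0 ≤ r := le_max_of_le_left (by positivity)
  have hr1 : r < 1 := max_lt (xe_lt_one a ha1.ne') (xe_lt_one _ (by linarith))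
  refine ⟨2 / (1 - r), r, div_nonneg (by norm_num) (by linarith), hr0, hr1, fun n m w hn hw hm => ?_⟩
  have hw0 : 0 < w.re := by linarith
  have hn' : (0 : ℝ) < n := by exact_mod_cast hn
  refine (tail_le (uu n w) n m hm (AA n w) (fun _ => rfl)).trans ?_
  refine le_trans ?_ (mul_le_mul_of_nonneg_left (geom_tail r hr0 hr1 n m hm) 
    (pow_nonneg (Finset.sum_nonneg fun _ _ => norm_nonneg _) _))
  rw [Finset.mul_sum]
  refine Finset.sum_le_sum fun j hj => ?_
  rw [Finset.mem_Ico] at hj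
  have hjn : j ≤ n := by omega
  set g := gE w.re (j / n) with hg
  have e : (n.choose j : ℝ) * (AA n w j ^ j * (AA n w n - AA n w j) ^ (n - j)) = 
      AA n w n ^ n * ((n.choose j : ℝ) * (g ^ j * (1 - g) ^ (n - j))) := by
    rw [AA_ratio n w hn hw0 j, ← hg, ← mul_one_sub, mul_pow, mul_pow]
    have : AA n w n ^ n = AA n w n ^ j * AA n w n ^ (n - j) := by rw [← pow_add]; congr 1; omega
    rw [this]; ring
  rw [e]
  refine mul_le_mul_of_nonneg_left ?_ (pow_nonneg (Finset.sum_nonneg fun _ _ => norm_nonneg _) _)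
  have hpos : 0 < 1 - Real.exp (-w.re) := sub_pos.2 (Real.exp_lt_one_iff.2 (by linarith))
  have hx0 : 0 ≤ (j : ℝ) / n := by positivity
  have hx1 : (j : ℝ) / n ≤ 1 := by rw [div_le_one hn']; exact_mod_cast hjn
  have hg0 : 0 ≤ g := by
    refine div_nonneg ?_ hpos.le
    rw [sub_nonneg, Real.exp_le_one_iff, neg_nonpos]; positivity
  have hg1 : g ≤ 1 := by
    rw [hg, gE, div_le_one hpos]
    have : Real.exp (-w.re) ≤ Real.exp (-(w.re * (j / n))) := Real.exp_le_exp.2 (by nlinarith)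
    linarith
  rcases le_total ((j : ℝ) / n) (1 / 2) with hx | hx
  · have h1 := gE_low w.re ρ0 (j / n) hρ0 hw hx0 hx
    rw [← ha, ← hg] at h1
    have h2 : a * j ≤ n * g := by
      have := mul_le_mul_of_nonneg_left h1 hn'.le
      have e2 : (n : ℝ) * (a * (j / n)) = a * j := by field_simp
      linarith
    refine (binom_case1 n j hjn g a hg1 ha1.le h2 hn).trans ?_
    have h3 : (a * Real.exp (1 - a)) ^ j ≤ r ^ j := pow_le_pow_left₀ (by positivity) (le_max_left _ _) j
    have : 0 ≤ r ^ (n - j) := by positivity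
    linarith
  · have h1 := gE_high w.re ρ0 (j / n) hρ0 hw hx hx1
    rw [← ha, ← hg] at h1
    have h2 : n * (1 - g) ≤ (2 - a) * (n - j : ℕ) := by
      have := mul_le_mul_of_nonneg_left h1 hn'.le
      rw [Nat.cast_sub hjn]
      have e2 : (n : ℝ) * ((2 - a) * (1 - j / n)) = (2 - a) * (n - j) := by field_simp
      linarith
    have hb : 0 < 2 - a := by linarith
    refine (binom_case2 n j hjn g (2 - a) hg0 hg1 hb (by linarith) h2).trans ?_
    have h3 : ((2 - a) * Real.exp (1 - (2 - a))) ^ (n - j) ≤ r ^ (n - j) := 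
      pow_le_pow_left₀ (by positivity) (le_max_right _ _) _
    have : 0 ≤ r ^ j := by positivity
    linarith

lemma AA_bound (n : ℕ) (w : ℂ) (hn : 0 < n) (hw : 0 < w.re) : 
    AA n w n ^ n ≤ 1 + Real.exp (n * w.im ^ 2 * (Real.exp w.re / w.re ^ 2)) := by
  have hn' : (0 : ℝ) < n := by exact_mod_cast hn
  set ρ := w.re with hρ
  set p := Real.exp (-(ρ / n)) with hp
  set q := Complex.exp (-(w / n)) with hq
  have hp1 : p < 1 := norm_q_lt n w hn hw
  have hp0 : 0 < p := Real.exp_pos _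
  have hnq : ‖q‖ = p := norm_q n w
  have hA0 : 0 ≤ AA n w n := Finset.sum_nonneg fun _ _ => norm_nonneg _
  have h1 : AA n w n ≤ ‖1 - q‖ / (1 - p) := by
    rw [AA_eq n w hn hw, geom_sum_eq (q_ne_one n w hn hw), div_self hn'.ne', mul_one, norm_div]
    have h2 : 1 - Real.exp (-ρ) ≤ ‖q ^ n - 1‖ := by
      have h3 := norm_sub_norm_le (1 : ℂ) (q ^ n)
      rw [norm_one, norm_pow, hnq, norm_sub_rev, hp, ← Real.exp_nat_mul] at h3
      convert h3 using 4
      field_simp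
    have h4 : 0 < ‖q ^ n - 1‖ := norm_pos_iff.2 (sub_ne_zero.2 (qn_ne_one n w hn hw))
    have h5 : 0 < ‖q - 1‖ := norm_pos_iff.2 (sub_ne_zero.2 (q_ne_one n w hn hw))
    rw [← hρ, ← hp, norm_sub_rev 1 q]
    have hp' : 0 < 1 - p := by linarith
    rw [div_div_eq_mul_div, div_le_iff₀ h4, div_mul_eq_mul_div, div_mul_eq_mul_div, 
      div_le_div_iff_of_pos_right hp', mul_comm]
    gcongr
  have h6 : ‖1 - q‖ ^ 2 = (1 - p) ^ 2 + 2 * p * (1 - Real.cos (w.im / n)) := by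
    have hre : q.re = p * Real.cos (w.im / n) := by
      rw [hq, Complex.exp_re, Complex.neg_re, Complex.neg_im, Complex.div_natCast_re, Complex.div_natCast_im, Real.cos_neg]
    have him : q.im = - (p * Real.sin (w.im / n)) := by
      rw [hq, Complex.exp_im, Complex.neg_re, Complex.neg_im, Complex.div_natCast_re, Complex.div_natCast_im, Real.sin_neg]
      ring
    rw [Complex.sq_norm, Complex.normSq_apply, Complex.sub_re, Complex.sub_im, hre, him, Complex.one_re, Complex.one_im]
    nlinarith [Real.sin_sq_add_cos_sq (w.im / n)]
  have h7 := Real.one_sub_sq_div_two_le_cos (x := w.im / n)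
  have h8 : ‖1 - q‖ ^ 2 ≤ (1 - p) ^ 2 + p * (w.im / n) ^ 2 := by rw [h6]; nlinarith
  have h9 : p * (ρ / n) ≤ 1 - p := by
    have h10 := Real.add_one_le_exp (ρ / n)
    have h11 : p * Real.exp (ρ / n) = 1 := by rw [hp, ← Real.exp_add]; simp
    nlinarith
  have h12 : Real.exp (-ρ) ≤ p := Real.exp_le_exp.2 (by
    rw [neg_le_neg_iff]; exact div_le_self hw.le (by exact_mod_cast hn))
  have h13 : p * (w.im / n) ^ 2 ≤ (1 - p) ^ 2 * (w.im ^ 2 * (Real.exp ρ / ρ ^ 2)) := by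
    have a1 : (p * (ρ / n)) ^ 2 ≤ (1 - p) ^ 2 := pow_le_pow_left₀ (by positivity) h9 2
    have a2 : (p * (ρ / n)) ^ 2 * (w.im ^ 2 * (Real.exp ρ / ρ ^ 2)) ≤ (1 - p) ^ 2 * (w.im ^ 2 * (Real.exp ρ / ρ ^ 2)) := by gcongr
    refine le_trans ?_ a2
    have a3 : (p * (ρ / n)) ^ 2 * (w.im ^ 2 * (Real.exp ρ / ρ ^ 2)) = p * (w.im / n) ^ 2 * (p * Real.exp ρ) := by
      field_simp
    rw [a3]
    have a4 : 1 ≤ p * Real.exp ρ := by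
      calc (1 : ℝ) = Real.exp (-ρ) * Real.exp ρ := by rw [← Real.exp_add]; simp
        _ ≤ _ := by gcongr
    exact le_mul_of_one_le_right (by positivity) a4
  have h14 : AA n w n ^ 2 ≤ 1 + w.im ^ 2 * (Real.exp ρ / ρ ^ 2) := by
    have hp' : 0 < 1 - p := by linarith
    calc AA n w n ^ 2 ≤ (‖1 - q‖ / (1 - p)) ^ 2 := pow_le_pow_left₀ hA0 h1 2
      _ = ‖1 - q‖ ^ 2 / (1 - p) ^ 2 := by rw [div_pow]
      _ ≤ _ := by rw [div_le_iff₀ (by positivity)]; linarith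
  have h15 : (AA n w n ^ n) ^ 2 ≤ Real.exp (n * w.im ^ 2 * (Real.exp ρ / ρ ^ 2)) := by
    rw [← pow_mul, mul_comm n 2, pow_mul, mul_assoc, Real.exp_nat_mul]
    refine pow_le_pow_left₀ (by positivity) (h14.trans ?_) n
    linarith [Real.add_one_le_exp (w.im ^ 2 * (Real.exp ρ / ρ ^ 2))]
  nlinarith [sq_nonneg (AA n w n ^ n - 1), Real.exp_pos (n * w.im ^ 2 * (Real.exp ρ / ρ ^ 2)), pow_nonneg hA0 n]

lemma tendsto_zero_of_mul {N : ℕ → ℕ} (hN : Tendsto N atTop atTop) {g : ℕ → ℂ} {t : ℂ} 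
    (hg : Tendsto (fun i => (N i : ℂ) * g i) atTop (𝓝 t)) : Tendsto g atTop (𝓝 0) := by
  have h1 : Tendsto (fun i => ((N i : ℂ))⁻¹) atTop (𝓝 0) := 
    (tendsto_inv_atTop_nhds_zero_nat (𝕜 := ℂ)).comp hN
  have h2 := h1.mul hg
  rw [zero_mul] at h2
  refine h2.congr' ?_
  filter_upwards [hN.eventually_gt_atTop 0] with i hi
  have : (N i : ℂ) ≠ 0 := by exact_mod_cast hi.ne'
  rw [inv_mul_cancel_left₀ this]

lemma pow_exp_tendsto {N : ℕ → ℕ} (hN : Tendsto N atTop atTop) {g : ℕ → ℂ} {t : ℂ} 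
    (hg : Tendsto (fun i => (N i : ℂ) * g i) atTop (𝓝 t)) : 
    Tendsto (fun i => (1 + g i) ^ N i) atTop (𝓝 (Complex.exp t)) := by
  have h0 := tendsto_zero_of_mul hN hg
  have hn0 : Tendsto (fun i => ‖g i‖) atTop (𝓝 0) := by simpa using h0.norm
  have h1 : Tendsto (fun i => (N i : ℂ) * Complex.log (1 + g i) - N i * g i) atTop (𝓝 0) := by
    have h2 : Tendsto (fun i => ‖(N i : ℂ) * g i‖ * (‖g i‖ * (1 - ‖g i‖)⁻¹ / 2)) atTop (𝓝 (‖t‖ * (0 * (1 - 0)⁻¹ / 2))) := by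
      refine hg.norm.mul ((hn0.mul ((tendsto_const_nhds.sub hn0).inv₀ (by norm_num))).div_const 2)
    rw [zero_mul, zero_div, mul_zero] at h2
    refine squeeze_zero_norm' ?_ h2
    filter_upwards [hn0.eventually_lt_const one_pos] with i hi
    rw [← mul_sub, norm_mul, norm_mul, mul_assoc]
    refine mul_le_mul_of_nonneg_left ?_ (norm_nonneg _)
    refine (Complex.norm_log_one_add_sub_self_le hi).trans (le_of_eq ?_)
    ring
  have h3 := h1.add hg
  simp only [sub_add_cancel, zero_add] at h3
  refine ((Complex.continuous_exp.tendsto t).comp h3).congr' ?_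
  filter_upwards [hn0.eventually_lt_const one_pos] with i hi
  have hne : 1 + g i ≠ 0 := by
    intro h
    have : g i = -1 := by linear_combination h
    rw [this] at hi; simp at hi
  simp only [Function.comp]
  rw [Complex.exp_nat_mul, Complex.exp_log hne]

lemma pow_exp_tendsto_sub {N : ℕ → ℕ} (hN : Tendsto N atTop atTop) {g : ℕ → ℂ} {t : ℂ} (h : ℕ)
    (hg : Tendsto (fun i => (N i : ℂ) * g i) atTop (𝓝 t)) : 
    Tendsto (fun i => (1 + g i) ^ (N i - h)) atTop (𝓝 (Complex.exp t)) := by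
  have h1 := pow_exp_tendsto hN hg
  have h2 : Tendsto (fun i => (1 + g i) ^ h) atTop (𝓝 1) := by
    simpa using ((tendsto_zero_of_mul hN hg).const_add 1).pow h
  have h3 := h1.div h2 one_ne_zero
  rw [div_one] at h3
  refine h3.congr' ?_
  have h4 : ∀ᶠ i in atTop, (1 + g i) ^ h ≠ 0 := h2.eventually_ne one_ne_zero
  filter_upwards [h4, hN.eventually_ge_atTop h] with i hi hi2
  simp only [Pi.div_apply]
  rw [div_eq_iff hi, ← pow_add, Nat.sub_add_cancel hi2]

lemma fact_ratio_tendsto {N : ℕ → ℕ} (hN : Tendsto N atTop atTop) (h : ℕ) : 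
    Tendsto (fun i => ((N i).factorial : ℂ) / ((N i - h).factorial : ℂ) / (N i : ℂ) ^ h) atTop (𝓝 1) := by
  have h1 : Tendsto (fun n : ℕ => (n.descFactorial h : ℝ) / (n : ℝ) ^ h) atTop (𝓝 1) := by
    refine (Asymptotics.isEquivalent_iff_tendsto_one ?_).1 (isEquivalent_descFactorial h)
    filter_upwards [eventually_gt_atTop 0] with n hn
    positivity
  have h2 := ((Complex.continuous_ofReal.tendsto 1).comp (h1.comp hN))
  rw [Complex.ofReal_one] at h2
  refine h2.congr' ?_
  filter_upwards [hN.eventually_ge_atTop h] with i hi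
  simp only [Function.comp]
  push_cast
  congr 1
  rw [Nat.descFactorial_eq_div hi, Nat.cast_div (Nat.factorial_dvd_factorial (Nat.sub_le _ _)) (by exact_mod_cast (Nat.factorial_pos _).ne')]

lemma n_one_sub_exp {N : ℕ → ℕ} (hN : Tendsto N atTop atTop) {w : ℕ → ℂ} {c : ℂ} (hw : Tendsto w atTop (𝓝 c)) :
    Tendsto (fun i => (N i : ℂ) * (Complex.exp (-(w i / N i)) - 1)) atTop (𝓝 (-c)) := by
  have h1 : Tendsto (fun i => -(w i / N i)) atTop (𝓝 0) := by
    have : Tendsto (fun i => ((N i : ℂ))⁻¹) atTop (𝓝 0) := 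
      (tendsto_inv_atTop_nhds_zero_nat (𝕜 := ℂ)).comp hN
    simpa [div_eq_mul_inv] using (hw.mul this).neg
  have h2 : Tendsto (fun i => dslope Complex.exp 0 (-(w i / N i))) atTop (𝓝 1) := by
    have hc : ContinuousAt (dslope Complex.exp 0) 0 := 
      continuousAt_dslope_same.2 Complex.differentiableAt_exp
    have h3 := hc.tendsto.comp h1
    rw [dslope_same] at h3
    have e : deriv Complex.exp 0 = 1 := by simp
    rw [e] at h3
    exact h3
  have h3 := (h2.mul hw.neg)
  rw [one_mul] at h3
  refine h3.congr' ?_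
  filter_upwards [hN.eventually_gt_atTop 0] with i hi
  have hne : (N i : ℂ) ≠ 0 := by exact_mod_cast hi.ne'
  have h4 := sub_smul_dslope Complex.exp 0 (-(w i / N i))
  rw [sub_zero, Complex.exp_zero, smul_eq_mul] at h4
  rw [← h4]
  field_simp


/-- kappa -/
noncomputable def ka (c : ℝ) : ℝ := c / (1 - Real.exp (-c))
/-- lambda -/
noncomputable def la (c : ℝ) : ℝ := c / (1 - Real.exp (-c)) * Real.exp (-c)

lemma one_sub_exp_pos {c : ℝ} (hc : 0 < c) : 0 < 1 - Real.exp (-c) := 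
  sub_pos.2 (Real.exp_lt_one_iff.2 (by linarith))

lemma la_lt_one {c : ℝ} (hc : 0 < c) : la c < 1 := by
  rw [la, div_mul_eq_mul_div, div_lt_one (one_sub_exp_pos hc)]
  have h := Real.add_one_lt_exp hc.ne'
  have h2 : Real.exp c * Real.exp (-c) = 1 := by rw [← Real.exp_add]; simp
  have := mul_lt_mul_of_pos_right h (Real.exp_pos (-c))
  linarith

lemma la_pos {c : ℝ} (hc : 0 < c) : 0 < la c := by
  have := one_sub_exp_pos hc
  rw [la]; positivity

lemma q_pow_tendsto {N : ℕ → ℕ} (hN : Tendsto N atTop atTop) {w : ℕ → ℂ} {c : ℝ} 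
    (hw : Tendsto w atTop (𝓝 (c : ℂ))) (t : ℕ) : Tendsto (fun i => Complex.exp (-(w i / N i)) ^ t) atTop (𝓝 1) := by
  have h := (tendsto_zero_of_mul hN (n_one_sub_exp hN hw)).const_add 1
  simp only [add_sub_cancel, add_zero] at h
  simpa using h.pow t

lemma q_pow_N_tendsto {N : ℕ → ℕ} (hN : Tendsto N atTop atTop) {w : ℕ → ℂ} {c : ℝ} 
    (hw : Tendsto w atTop (𝓝 (c : ℂ))) (t : ℕ) : Tendsto (fun i => Complex.exp (-(w i / N i)) ^ (N i - t)) atTop (𝓝 (Complex.exp (-c))) := by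
  have h := pow_exp_tendsto_sub hN t (n_one_sub_exp hN hw)
  simpa only [add_sub_cancel] using h

lemma re_ev {w : ℕ → ℂ} {c : ℝ} (hc : 0 < c) 
    (hw : Tendsto w atTop (𝓝 (c : ℂ))) : ∀ᶠ i in atTop, 0 < (w i).re ∧ c / 2 ≤ (w i).re := by
  have h := (Complex.continuous_re.tendsto _).comp hw
  simp only [Complex.ofReal_re] at h
  filter_upwards [h.eventually (lt_mem_nhds (show c / 2 < c by linarith))] with i hi
  simp only [Function.comp] at hi
  exact ⟨by linarith, hi.le⟩

lemma NZ_tendsto {N : ℕ → ℕ} (hN : Tendsto N atTop atTop) {w : ℕ → ℂ} {c : ℝ} (hc : 0 < c) 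
    (hw : Tendsto w atTop (𝓝 (c : ℂ))) : Tendsto (fun i => (N i : ℂ) / ∑ s ∈ range (N i), Complex.exp (-(w i / N i)) ^ s) atTop (𝓝 (ka c : ℂ)) := by
  have h1 := n_one_sub_exp hN hw
  have h2 := (q_pow_N_tendsto hN hw 0).sub_const 1
  have hpos := one_sub_exp_pos hc
  have hne : Complex.exp (-c) - 1 ≠ 0 := by
    have : Real.exp (-c) - 1 ≠ 0 := by linarith
    exact_mod_cast this
  have h3 := h1.div h2 hne
  have e : -(c : ℂ) / (Complex.exp (-c) - 1) = (ka c : ℂ) := by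
    rw [ka]; push_cast
    rw [← neg_div_neg_eq, neg_neg, neg_sub]
  rw [e] at h3
  refine h3.congr' ?_
  filter_upwards [hN.eventually_gt_atTop 0, re_ev hc hw] with i hi hre
  simp only [Pi.div_apply, Nat.sub_zero]
  rw [geom_sum_eq (q_ne_one _ _ hi hre.1), div_div_eq_mul_div]

lemma Nuu_tendsto {N : ℕ → ℕ} (hN : Tendsto N atTop atTop) {w : ℕ → ℂ} {c : ℝ} (hc : 0 < c) 
    (hw : Tendsto w atTop (𝓝 (c : ℂ))) (t : ℕ) : Tendsto (fun i => (N i : ℂ) * uu (N i) (w i) t) atTop (𝓝 (ka c : ℂ)) := by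
  have h := (NZ_tendsto hN hc hw).mul (q_pow_tendsto hN hw t)
  rw [mul_one] at h
  refine h.congr fun i => ?_
  rw [uu]; ring

lemma Nuu_rev_tendsto {N : ℕ → ℕ} (hN : Tendsto N atTop atTop) {w : ℕ → ℂ} {c : ℝ} (hc : 0 < c) 
    (hw : Tendsto w atTop (𝓝 (c : ℂ))) (t : ℕ) : Tendsto (fun i => (N i : ℂ) * uu (N i) (w i) (N i - 1 - t)) atTop (𝓝 (la c : ℂ)) := by
  have h := (NZ_tendsto hN hc hw).mul (q_pow_N_tendsto hN hw (1 + t))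
  have e : (la c : ℂ) = ka c * Complex.exp (-c) := by rw [la, ka]; push_cast; rfl
  rw [e]
  refine h.congr fun i => ?_
  rw [uu, Nat.sub_sub]; ring

lemma Tr_tendsto {N : ℕ → ℕ} (hN : Tendsto N atTop atTop) {w : ℕ → ℂ} {c : ℝ} (hc : 0 < c) 
    (hw : Tendsto w atTop (𝓝 (c : ℂ))) (m : ℕ) : Tendsto (fun i => Tr (uu (N i) (w i)) (N i) m) atTop 
    (𝓝 (((Real.exp (-(m * la c)) * ∑ h ∈ range (m + 1), la c ^ h * cw Cup (fun _ => (1 : ℝ)) m h) * 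
      (1 - SB (ka c) m) : ℝ) : ℂ)) := by
  have hV : Tendsto (fun i => (N i : ℂ) * (-∑ s ∈ range m, uu (N i) (w i) (N i - 1 - s))) atTop (𝓝 (-(m * la c : ℂ))) := by
    have := (tendsto_finsetSum (range m) fun s _ => Nuu_rev_tendsto hN hc hw s).neg
    simp only [Finset.sum_const, Finset.card_range, nsmul_eq_mul] at this
    refine this.congr fun i => ?_
    rw [mul_neg, Finset.mul_sum]
  have hU : ∀ j : ℕ, Tendsto (fun i => (N i : ℂ) * (-∑ s ∈ range (j + 1), uu (N i) (w i) s)) atTop (𝓝 (-((j + 1) * ka c : ℂ))) := by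
    intro j
    have := (tendsto_finsetSum (range (j + 1)) fun s _ => Nuu_tendsto hN hc hw s).neg
    simp only [Finset.sum_const, Finset.card_range, nsmul_eq_mul] at this
    push_cast at this
    refine this.congr fun i => ?_
    rw [mul_neg, Finset.mul_sum]
  have hE : ∀ h, Tendsto (fun i => (N i : ℂ) ^ h * cw Cup (fun s => uu (N i) (w i) (N i - 1 - s)) m h) atTop
      (𝓝 ((la c ^ h * cw Cup (fun _ => (1 : ℝ)) m h : ℝ) : ℂ)) := by
    intro h
    have h1 := cw_tendsto atTop Cup (fun i s => (N i : ℂ) * uu (N i) (w i) (N i - 1 - s)) (fun _ => ((la c * 1 : ℝ) : ℂ)) m h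
      (fun s _ => by simpa using Nuu_rev_tendsto hN hc hw s)
    rw [cw_ofReal, cw_smul] at h1
    refine h1.congr fun i => ?_
    rw [cw_smul]
  have hp : ∀ j, Tendsto (fun i => (N i : ℂ) ^ j * cw Clo (uu (N i) (w i)) j j) atTop
      (𝓝 ((ka c ^ j * cw Clo (fun _ => (1 : ℝ)) j j : ℝ) : ℂ)) := by
    intro j
    have h1 := cw_tendsto atTop Clo (fun i s => (N i : ℂ) * uu (N i) (w i) s) (fun _ => ((ka c * 1 : ℝ) : ℂ)) j j
      (fun s _ => by simpa using Nuu_tendsto hN hc hw s)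
    rw [cw_ofReal, cw_smul] at h1
    refine h1.congr fun i => ?_
    rw [cw_smul]
  have T1 : ∀ h, Tendsto (fun i => ((N i).factorial : ℂ) * cw Cup (fun s => uu (N i) (w i) (N i - 1 - s)) m h * 
      ((∑ s ∈ range (N i - m), uu (N i) (w i) s) ^ (N i - h) / ((N i - h).factorial : ℂ))) atTop 
      (𝓝 (((la c ^ h * cw Cup (fun _ => (1 : ℝ)) m h : ℝ) : ℂ) * Complex.exp (-(m * la c : ℂ)))) := by
    intro h
    have h1 := ((fact_ratio_tendsto hN h).mul (hE h)).mul (pow_exp_tendsto_sub hN h hV)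
    rw [one_mul] at h1
    refine h1.congr' ?_
    filter_upwards [hN.eventually_gt_atTop m, re_ev hc hw] with i hi hre
    have hi0 : 0 < N i := by omega
    have hne : (N i : ℂ) ^ h ≠ 0 := by
      have : (N i : ℂ) ≠ 0 := by exact_mod_cast hi0.ne'
      exact pow_ne_zero _ this
    have e1 : ∑ s ∈ range (N i - m), uu (N i) (w i) s = 1 + -∑ s ∈ range m, uu (N i) (w i) (N i - 1 - s) := by
      rw [← uu_sum (N i) (w i) hi0 hre.1, sum_rev _ (N i) m hi.le]; ring
    rw [e1]
    field_simp
  have T2 : ∀ h j, Tendsto (fun i => ((N i).factorial : ℂ) * cw Cup (fun s => uu (N i) (w i) (N i - 1 - s)) m h * 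
      (cw Clo (uu (N i) (w i)) j j * (((∑ s ∈ range (N i - m), uu (N i) (w i) s) - ∑ s ∈ range (j + 1), uu (N i) (w i) s) ^ (N i - h - j) 
        / ((N i - h - j).factorial : ℂ)))) atTop 
      (𝓝 (((la c ^ h * cw Cup (fun _ => (1 : ℝ)) m h : ℝ) : ℂ) * ((ka c ^ j * cw Clo (fun _ => (1 : ℝ)) j j : ℝ) : ℂ) * 
        Complex.exp (-(m * la c : ℂ) + -((j + 1) * ka c : ℂ)))) := by
    intro h j
    have h0 := (hV.add (hU j))
    simp only [← mul_add] at h0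
    have h1 := (((fact_ratio_tendsto hN (h + j)).mul (hE h)).mul (hp j)).mul (pow_exp_tendsto_sub hN (h + j) h0)
    rw [one_mul] at h1
    refine h1.congr' ?_
    filter_upwards [hN.eventually_gt_atTop m, re_ev hc hw] with i hi hre
    have hi0 : 0 < N i := by omega
    have hne' : (N i : ℂ) ≠ 0 := by exact_mod_cast hi0.ne'
    have e1 : ∑ s ∈ range (N i - m), uu (N i) (w i) s = 1 + -∑ s ∈ range m, uu (N i) (w i) (N i - 1 - s) := by
      rw [← uu_sum (N i) (w i) hi0 hre.1, sum_rev _ (N i) m hi.le]; ring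
    have e2 : (1 + -∑ s ∈ range m, uu (N i) (w i) (N i - 1 - s)) - ∑ s ∈ range (j + 1), uu (N i) (w i) s = 
      1 + (-∑ s ∈ range m, uu (N i) (w i) (N i - 1 - s) + -∑ s ∈ range (j + 1), uu (N i) (w i) s) := by ring
    rw [e1, e2, pow_add, Nat.sub_sub]
    have := pow_ne_zero h hne'
    have := pow_ne_zero j hne'
    field_simp
  have := tendsto_finsetSum (range (m + 1)) fun h _ => (T1 h).sub (tendsto_finsetSum (range m) fun j _ => T2 h j)
  have e3 : (((Real.exp (-(m * la c)) * ∑ h ∈ range (m + 1), la c ^ h * cw Cup (fun _ => (1 : ℝ)) m h) * 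
      (1 - SB (ka c) m) : ℝ) : ℂ) = ∑ h ∈ range (m + 1), (((la c ^ h * cw Cup (fun _ => (1 : ℝ)) m h : ℝ) : ℂ) * Complex.exp (-(m * la c : ℂ)) - 
      ∑ j ∈ range m, ((la c ^ h * cw Cup (fun _ => (1 : ℝ)) m h : ℝ) : ℂ) * ((ka c ^ j * cw Clo (fun _ => (1 : ℝ)) j j : ℝ) : ℂ) * 
        Complex.exp (-(m * la c : ℂ) + -((j + 1) * ka c : ℂ))) := by
    rw [Finset.mul_sum, Finset.sum_mul, Complex.ofReal_sum]
    refine Finset.sum_congr rfl fun h _ => ?_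
    rw [SB, mul_sub, mul_one, Finset.mul_sum]
    push_cast
    congr 1
    · ring
    · refine Finset.sum_congr rfl fun j _ => ?_
      rw [Complex.exp_add]
      have : -((ka c : ℂ) * (j + 1)) = -((j + 1) * ka c) := by ring
      rw [this]; ring
  rw [e3]
  refine this.congr fun i => ?_
  rw [Tr]
  refine Finset.sum_congr rfl fun h _ => ?_
  rw [mul_sub, Finset.mul_sum]

/-- The limit of the normalized constrained sum. -/
noncomputable def LL (c : ℝ) : ℝ := (1 - la c) * Real.exp (la c) * (1 - Real.exp (-c))

lemma phi_tendsto {N : ℕ → ℕ} (hN : Tendsto N atTop atTop) {w : ℕ → ℂ} {c : ℝ} (hc : 0 < c) 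
    (hw : Tendsto w atTop (𝓝 (c : ℂ))) (M : ℝ) (hM : ∀ᶠ i in atTop, (N i : ℝ) * (w i).im ^ 2 ≤ M) :
    Tendsto (fun i => ((N i).factorial : ℂ) * cw Clo (uu (N i) (w i)) (N i) (N i)) atTop (𝓝 (LL c : ℂ)) := by
  obtain ⟨K, r, hK, hr0, hr1, htail⟩ := uu_tail (c / 2) (by linarith)
  have hL : Tendsto (fun m : ℕ => (Real.exp (-(m * la c)) * ∑ h ∈ range (m + 1), la c ^ h * cw Cup (fun _ => (1 : ℝ)) m h) * 
      (1 - SB (ka c) m)) atTop (𝓝 (LL c)) := by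
    have h1 := beta_tendsto (la c) (la_pos hc).le (la_lt_one hc)
    have h2 := ((SB_tendsto (la c) (la_pos hc).le (la_lt_one hc)).const_mul (Real.exp (-c))).const_sub 1
    have h3 := h1.mul h2
    have e : Real.exp (la c) * (1 - la c) * (1 - Real.exp (-c) * 1) = LL c := by rw [LL]; ring
    rw [e] at h3
    refine h3.congr fun m => ?_
    rw [ka, SB_kappa c hc m]
    rfl
  -- uniform bound
  have hre : Tendsto (fun i => (w i).re) atTop (𝓝 c) := by
    have h := (Complex.continuous_re.tendsto _).comp hw
    rw [Complex.ofReal_re] at h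
    exact h
  set M' := max M 0 with hM'
  set K2 := 1 + Real.exp (M' * (Real.exp (2 * c) / (c / 2) ^ 2)) with hK2
  have hK2pos : 0 < K2 := by positivity
  have hAA : ∀ᶠ i in atTop, AA (N i) (w i) (N i) ^ N i ≤ K2 := by
    filter_upwards [hM, re_ev hc hw, hN.eventually_gt_atTop 0, hre.eventually (gt_mem_nhds (show c < 2 * c by linarith))] with i h1 h2 h3 h4
    refine (AA_bound _ _ h3 h2.1).trans ?_
    rw [hK2]
    gcongr
    · exact h1.trans (le_max_left _ _)
    · exact h2.2
  rw [Metric.tendsto_atTop'] 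
  intro δ hδ
  have hrm : Tendsto (fun m : ℕ => K2 * (K * r ^ m)) atTop (𝓝 0) := by
    have := ((tendsto_pow_atTop_nhds_zero_of_lt_one hr0 hr1).const_mul K).const_mul K2
    simpa using this
  have h5 : ∀ᶠ m : ℕ in atTop, K2 * (K * r ^ m) < δ / 3 := hrm.eventually (gt_mem_nhds (by linarith))
  have h6 := Metric.tendsto_nhds.1 hL (δ / 3) (by linarith)
  obtain ⟨m, hm1, hm2⟩ := (h5.and h6).exists
  have h7 := Metric.tendsto_nhds.1 (Tr_tendsto hN hc hw m) (δ / 3) (by linarith)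
  have h8 : ∀ᶠ i in atTop, dist (((N i).factorial : ℂ) * cw Clo (uu (N i) (w i)) (N i) (N i)) (LL c : ℂ) < δ := by
    filter_upwards [h7, hAA, re_ev hc hw, hN.eventually_gt_atTop 0, hN.eventually_ge_atTop (2 * m)] with i g1 g2 g3 g4 g5
    have g6 := htail (N i) m (w i) g4 g3.2 g5
    have g7 : AA (N i) (w i) (N i) ^ N i * (K * r ^ m) ≤ K2 * (K * r ^ m) := by gcongr
    have g8 : dist (((N i).factorial : ℂ) * cw Clo (uu (N i) (w i)) (N i) (N i)) (Tr (uu (N i) (w i)) (N i) m) < δ / 3 := by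
      rw [dist_eq_norm]; linarith
    have g9 : dist (((Real.exp (-(m * la c)) * ∑ h ∈ range (m + 1), la c ^ h * cw Cup (fun _ => (1 : ℝ)) m h) * 
      (1 - SB (ka c) m) : ℝ) : ℂ) (LL c : ℂ) < δ / 3 := by
      rw [Complex.isometry_ofReal.dist_eq]; exact hm2
    have t1 := dist_triangle4 (((N i).factorial : ℂ) * cw Clo (uu (N i) (w i)) (N i) (N i)) (Tr (uu (N i) (w i)) (N i) m)
      (((Real.exp (-(m * la c)) * ∑ h ∈ range (m + 1), la c ^ h * cw Cup (fun _ => (1 : ℝ)) m h) * 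
      (1 - SB (ka c) m) : ℝ) : ℂ) (LL c : ℂ)
    linarith
  rw [eventually_atTop] at h8
  obtain ⟨a, ha⟩ := h8
  exact ⟨a, fun n hn => ha n hn.le⟩

/-- Twice the hyperbolic sine of half the argument. -/
noncomputable def Sh (w : ℂ) : ℂ := Complex.exp (w / 2) - Complex.exp (-(w / 2))

lemma CP_closed (n : ℕ) (hn : 0 < n) (w x : ℂ) (hw : 0 < w.re) (hx : 1 + x = Complex.exp (w / n)) :
    CP (n + 1) x = Complex.exp (w / 2) * Sh w ^ n * (n.factorial * cw Clo (uu n w) n n) := by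
  have hn' : (n : ℂ) ≠ 0 := by exact_mod_cast hn.ne'
  have hne : 1 + x ≠ 0 := by rw [hx]; exact Complex.exp_ne_zero _
  rw [CP_eq n x hne]
  have hq : (1 + x)⁻¹ = Complex.exp (-(w / n)) := by rw [hx, Complex.exp_neg]
  rw [hq]
  set q := Complex.exp (-(w / n)) with hqd
  have hq1 := q_ne_one n w hn hw
  have hZ := Z_ne n w hn hw
  have e1 : (fun t => (1 - q) * q ^ t) = fun t => (1 - q ^ n) * uu n w t := by
    funext t
    rw [uu, ← hqd]
    have h1 : (∑ s ∈ range n, q ^ s) * (q - 1) = q ^ n - 1 := geom_sum_mul q n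
    have h2 : 1 - q ^ n = (∑ s ∈ range n, q ^ s) * (1 - q) := by linear_combination h1
    rw [← hqd] at hZ
    rw [h2]
    field_simp
  rw [e1, cw_smul]
  have e2 : (1 + x) ^ ((n + 1).choose 2) * (1 - q ^ n) ^ n = Complex.exp (w / 2) * Sh w ^ n := by
    have e3 : q ^ n = Complex.exp (-w) := by
      rw [hqd, ← Complex.exp_nat_mul]; congr 1; field_simp
    have e4 : Sh w = Complex.exp (w / 2) * (1 - Complex.exp (-w)) := by
      rw [Sh, mul_sub, mul_one, ← Complex.exp_add]; congr 2; ring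
    rw [e3, e4, mul_pow, ← mul_assoc, hx, ← Complex.exp_nat_mul, ← Complex.exp_nat_mul, ← Complex.exp_add]
    congr 2
    rw [Nat.cast_choose_two]
    push_cast
    field_simp
    ring
  rw [← e2]; ring

lemma integral_exp_int (m : ℤ) : ∫ θ in (-π)..π, Complex.exp (θ * m * Complex.I) = if m = 0 then (2 * π : ℂ) else 0 := by
  split_ifs with h
  · subst h
    simp
    ring
  · have hm : (m : ℂ) * Complex.I ≠ 0 := mul_ne_zero (by exact_mod_cast h) Complex.I_ne_zero
    have e : ∀ θ : ℝ, Complex.exp (θ * m * Complex.I) = Complex.exp ((m * Complex.I) * θ) := fun θ => by congr 1; ring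
    simp_rw [e]
    rw [integral_exp_mul_complex hm]
    have e2 : Complex.exp ((m * Complex.I) * (π : ℝ)) = Complex.exp ((m * Complex.I) * ((-π : ℝ) : ℂ)) := by
      rw [Complex.exp_eq_exp_iff_exists_int]
      exact ⟨m, by push_cast; ring⟩
    rw [e2, sub_self, zero_div]

lemma coeff_extract (n l : ℕ) (x : ℝ) : 
    ∫ θ in (-π)..π, CP (n + 1) (x * Complex.exp (θ * Complex.I)) * Complex.exp (-(θ * (n + l) * Complex.I)) = 
      2 * π * (connGraphCount (n + 1) l * x ^ (n + l)) := by
  simp only [CP, gS, Finset.sum_mul]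
  rw [intervalIntegral.integral_finsetSum]
  · have e : ∀ G : SimpleGraph (Fin (n + 1)), ∫ θ in (-π)..π, ((x : ℂ) * Complex.exp (θ * Complex.I)) ^ G.edgeSet.ncard * 
        Complex.exp (-(θ * (n + l) * Complex.I)) = if G.edgeSet.ncard = n + l then 2 * π * (x : ℂ) ^ (n + l) else 0 := by
      intro G
      set M := G.edgeSet.ncard
      have e1 : ∀ θ : ℝ, ((x : ℂ) * Complex.exp (θ * Complex.I)) ^ M * Complex.exp (-(θ * (n + l) * Complex.I)) = 
          (x : ℂ) ^ M * Complex.exp (θ * ((M : ℤ) - (n + l : ℕ) : ℤ) * Complex.I) := by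
        intro θ
        rw [mul_pow, ← Complex.exp_nat_mul, mul_assoc, ← Complex.exp_add]
        congr 2
        push_cast; ring
      simp_rw [e1]
      rw [intervalIntegral.integral_const_mul, integral_exp_int]
      by_cases hM : M = n + l
      · simp [hM]; ring
      · have : ¬ ((M : ℤ) - (n + l : ℕ) = 0) := by omega
        rw [if_neg hM, if_neg this, mul_zero]
    simp_rw [e]
    rw [← Finset.sum_filter, Finset.sum_const, nsmul_eq_mul]
    have e2 : connGraphCount (n + 1) l = (filter (fun G : SimpleGraph (Fin (n + 1)) => G.edgeSet.ncard = n + l) 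
        (Set.toFinite {G : SimpleGraph (Fin (n + 1)) | G.Connected}).toFinset).card := by
      rw [connGraphCount, ← Set.ncard_coe_finset]
      congr 1
      ext G
      simp
    rw [e2]; ring
  · intro G _
    apply Continuous.intervalIntegrable
    fun_prop

lemma CP_continuous (k : ℕ) : Continuous (CP k : ℂ → ℂ) := by
  unfold CP gS
  fun_prop

lemma norm_exp_two (z : ℂ) (hz : ‖z‖ ≤ 1) : ‖Complex.exp z - 1 - z - z ^ 2 / 2‖ ≤ ‖z‖ ^ 3 := by
  have h := Complex.exp_bound hz (n := 3) (by norm_num)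
  have e : ∑ m ∈ range 3, z ^ m / (m.factorial : ℂ) = 1 + z + z ^ 2 / 2 := by
    simp [Finset.sum_range_succ]
  rw [e] at h
  have e2 : Complex.exp z - 1 - z - z ^ 2 / 2 = Complex.exp z - (1 + z + z ^ 2 / 2) := by ring
  rw [e2]
  refine h.trans ?_
  have : ((Nat.succ 3 : ℕ) : ℝ) * ((Nat.factorial 3 : ℕ) * (3 : ℕ) : ℝ)⁻¹ ≤ 1 := by
    norm_num [Nat.factorial]
  calc _ ≤ ‖z‖ ^ 3 * 1 := by gcongr
    _ = _ := mul_one _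

lemma small_of_scale {s g : ℕ → ℂ} {a : ℂ} (h0 : Tendsto (fun i => (s i)⁻¹) atTop (𝓝 0))
    (hs : ∀ᶠ i in atTop, s i ≠ 0) (hg : Tendsto (fun i => s i * g i) atTop (𝓝 a)) :
    Tendsto g atTop (𝓝 0) := by
  have := h0.mul hg
  rw [zero_mul] at this
  refine this.congr' ?_
  filter_upwards [hs] with i hi
  field_simp

lemma exp_two_scale {s g : ℕ → ℂ} {a : ℂ} (h0 : Tendsto (fun i => (s i)⁻¹) atTop (𝓝 0))
    (hs : ∀ᶠ i in atTop, s i ≠ 0) (hg : Tendsto (fun i => s i * g i) atTop (𝓝 a)) :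
    Tendsto (fun i => s i ^ 2 * (Complex.exp (g i) - 1 - g i)) atTop (𝓝 (a ^ 2 / 2)) := by
  have hg0 := small_of_scale h0 hs hg
  have h1 : Tendsto (fun i => s i ^ 2 * (Complex.exp (g i) - 1 - g i - g i ^ 2 / 2)) atTop (𝓝 0) := by
    have hz : Tendsto (fun i => ‖s i * g i‖ ^ 2 * ‖g i‖) atTop (𝓝 0) := by
      have := (hg.norm.pow 2).mul hg0.norm
      simpa using this
    refine squeeze_zero_norm' ?_ hz
    have hz1 : ∀ᶠ i in atTop, ‖g i‖ < 1 := by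
      have := hg0.norm
      rw [norm_zero] at this
      exact this.eventually (gt_mem_nhds one_pos)
    filter_upwards [hz1] with i hi
    rw [norm_mul, norm_mul, norm_pow]
    calc _ ≤ ‖s i‖ ^ 2 * ‖g i‖ ^ 3 := by gcongr; exact norm_exp_two _ hi.le
      _ = _ := by ring
  have h2 := h1.add ((hg.pow 2).div_const 2)
  rw [zero_add] at h2
  refine h2.congr fun i => ?_
  ring

lemma exp_one_scale {s g : ℕ → ℂ} {a : ℂ} (h0 : Tendsto (fun i => (s i)⁻¹) atTop (𝓝 0))
    (hs : ∀ᶠ i in atTop, s i ≠ 0) (hg : Tendsto (fun i => s i * g i) atTop (𝓝 a)) :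
    Tendsto (fun i => s i * (Complex.exp (g i) - 1)) atTop (𝓝 a) := by
  have h2 := (h0.mul (exp_two_scale h0 hs hg)).add hg
  rw [zero_mul, zero_add] at h2
  refine h2.congr' ?_
  filter_upwards [hs] with i hi
  field_simp
  ring

lemma log_scale {s z : ℕ → ℂ} {a : ℂ} (h0 : Tendsto (fun i => (s i)⁻¹) atTop (𝓝 0))
    (hs : ∀ᶠ i in atTop, s i ≠ 0) (hz : Tendsto (fun i => s i ^ 3 * z i) atTop (𝓝 a)) :
    Tendsto (fun i => s i ^ 4 * (Complex.log (1 + z i) - z i)) atTop (𝓝 0) := by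
  have h03 : Tendsto (fun i => (s i ^ 3)⁻¹) atTop (𝓝 0) := by
    have := h0.pow 3
    simpa using this
  have hz0 := small_of_scale h03 (hs.mono fun i hi => pow_ne_zero 3 hi) hz
  have hb : Tendsto (fun i => ‖s i ^ 3 * z i‖ ^ 2 * ‖(s i)⁻¹‖ ^ 2) atTop (𝓝 0) := by
    have := (hz.norm.pow 2).mul (h0.norm.pow 2)
    simpa using this
  refine squeeze_zero_norm' ?_ hb
  have hz1 : ∀ᶠ i in atTop, ‖z i‖ < 1 / 2 := by
    have := hz0.norm
    rw [norm_zero] at this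
    exact this.eventually (gt_mem_nhds (by norm_num))
  filter_upwards [hz1, hs] with i hi hsi
  have h := Complex.norm_log_one_add_sub_self_le (z := z i) (by linarith)
  have hh : (1 - ‖z i‖)⁻¹ ≤ 2 := by
    rw [inv_le_comm₀ (by linarith) (by norm_num)]; linarith
  have h2 : ‖Complex.log (1 + z i) - z i‖ ≤ ‖z i‖ ^ 2 := by
    refine h.trans ?_
    nlinarith [sq_nonneg ‖z i‖]
  have hn : ‖s i‖ ≠ 0 := norm_ne_zero_iff.2 hsi
  rw [norm_mul, norm_mul, norm_inv, norm_pow, norm_pow]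
  calc _ ≤ ‖s i‖ ^ 4 * ‖z i‖ ^ 2 := by gcongr
    _ = _ := by field_simp

/-- the mean function -/
noncomputable def bb (c : ℝ) : ℝ := c / 2 * ((Real.exp (c / 2) + Real.exp (-(c / 2))) / (Real.exp (c / 2) - Real.exp (-(c / 2))))

/-- the variance -/
noncomputable def sg (c : ℝ) : ℝ := bb c + c ^ 2 / 4 - bb c ^ 2

/-- real version of `Sh` -/
noncomputable def Shr (c : ℝ) : ℝ := Real.exp (c / 2) - Real.exp (-(c / 2))

lemma Shr_pos {c : ℝ} (hc : 0 < c) : 0 < Shr c := by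
  rw [Shr, sub_pos, Real.exp_lt_exp]; linarith

lemma Sh_ofReal (c : ℝ) : Sh (c : ℂ) = (Shr c : ℂ) := by
  rw [Sh, Shr]; push_cast; rfl

/-- normalised integrand -/
noncomputable def GG (n l : ℕ) (c t : ℝ) : ℂ :=
  CP (n + 1) (((Real.exp (c / n) - 1 : ℝ) : ℂ) * Complex.exp (((t / √n : ℝ) : ℂ) * Complex.I)) *
    Complex.exp (-(((t / √n : ℝ) : ℂ) * (n + l) * Complex.I)) / (Real.exp (c / 2) * Shr c ^ n : ℝ)

lemma bb_tendsto {c : ℕ → ℝ} {cs : ℝ} (hcs : 0 < cs) (hc : Tendsto c atTop (𝓝 cs)) :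
    Tendsto (fun i => bb (c i)) atTop (𝓝 (bb cs)) := by
  have : ContinuousAt bb cs := by
    unfold bb
    have := (Shr_pos hcs).ne'
    rw [Shr] at this
    fun_prop (disch := exact this)
  exact this.tendsto.comp hc

lemma GG_tendsto {N l : ℕ → ℕ} (hN : Tendsto N atTop atTop) {c : ℕ → ℝ} {cs : ℝ} (hcs : 0 < cs)
    (hc : Tendsto c atTop (𝓝 cs))
    (hB : Tendsto (fun i => √(N i) * (bb (c i) - (1 + (l i : ℝ) / N i))) atTop (𝓝 0)) (t : ℝ) :
    Tendsto (fun i => GG (N i) (l i) (c i) t) atTop (𝓝 ((LL cs * Real.exp (-(sg cs) * t ^ 2 / 2) : ℝ) : ℂ)) := by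
  have hN0 : ∀ᶠ i in atTop, 0 < N i := hN.eventually_gt_atTop 0
  have hNr : Tendsto (fun i => (N i : ℝ)) atTop atTop := tendsto_natCast_atTop_atTop.comp hN
  set s : ℕ → ℂ := fun i => ((√(N i) : ℝ) : ℂ) with hsd
  have hs2 : ∀ i, s i ^ 2 = (N i : ℂ) := by
    intro i
    simp only [hsd]
    rw [← Complex.ofReal_pow, Real.sq_sqrt (by positivity)]; simp
  have hsr : Tendsto (fun i => √(N i : ℝ)) atTop atTop := Real.tendsto_sqrt_atTop.comp hNr
  have h0 : Tendsto (fun i => (s i)⁻¹) atTop (𝓝 0) := by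
    have := (Complex.continuous_ofReal.tendsto 0).comp hsr.inv_tendsto_atTop
    rw [Complex.ofReal_zero] at this
    refine this.congr fun i => ?_
    simp [hsd]
  have hs : ∀ᶠ i in atTop, s i ≠ 0 := by
    filter_upwards [hN0] with i hi
    intro h
    have := hs2 i
    rw [h] at this
    have h3 : (N i : ℂ) ≠ 0 := by exact_mod_cast hi.ne'
    apply h3; rw [← this]; simp
  have hcC : Tendsto (fun i => (c i : ℂ)) atTop (𝓝 (cs : ℂ)) := (Complex.continuous_ofReal.tendsto cs).comp hc
  -- theta
  set th : ℕ → ℂ := fun i => (t : ℂ) / s i * Complex.I with hth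
  have hsth : ∀ᶠ i in atTop, s i * th i = t * Complex.I := by
    filter_upwards [hs] with i hi
    simp only [hth]; field_simp
  have hthT : Tendsto (fun i => s i * th i) atTop (𝓝 (t * Complex.I)) :=
    tendsto_const_nhds.congr' (hsth.mono fun i hi => hi.symm)
  set u : ℕ → ℂ := fun i => Complex.exp (th i) - 1 with hu
  have hu1 : Tendsto (fun i => s i * u i) atTop (𝓝 (t * Complex.I)) := exp_one_scale h0 hs hthT
  have hu2 : Tendsto (fun i => s i ^ 2 * (u i - th i)) atTop (𝓝 ((t * Complex.I) ^ 2 / 2)) := exp_two_scale h0 hs hthT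
  -- y
  have h02 : Tendsto (fun i => (s i ^ 2)⁻¹) atTop (𝓝 0) := by
    have := h0.pow 2
    simpa using this
  have hs2' : ∀ᶠ i in atTop, s i ^ 2 ≠ 0 := hs.mono fun i hi => pow_ne_zero 2 hi
  set y : ℕ → ℂ := fun i => s i ^ 2 * (1 - Complex.exp (-(c i / s i ^ 2))) with hy
  have hg : Tendsto (fun i => s i ^ 2 * (-(c i / s i ^ 2))) atTop (𝓝 (-(cs : ℂ))) := by
    refine hcC.neg.congr' ?_
    filter_upwards [hs] with i hi
    field_simp
  have hyc : Tendsto (fun i => s i * (y i - c i)) atTop (𝓝 0) := by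
    have := (h0.mul (exp_two_scale h02 hs2' hg)).neg
    rw [zero_mul, neg_zero] at this
    refine this.congr' ?_
    filter_upwards [hs] with i hi
    simp only [hy]
    field_simp
    ring
  have hyT : Tendsto y atTop (𝓝 (cs : ℂ)) := by
    have := (exp_one_scale h02 hs2' hg).neg
    rw [neg_neg] at this
    refine this.congr fun i => ?_
    simp only [hy]; ring
  -- z
  set z : ℕ → ℂ := fun i => y i * u i / s i ^ 2 with hz
  have hz3 : Tendsto (fun i => s i ^ 3 * z i) atTop (𝓝 (cs * (t * Complex.I))) := by
    refine (hyT.mul hu1).congr' ?_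
    filter_upwards [hs] with i hi
    simp only [hz]; field_simp
  have hz4 : Tendsto (fun i => s i ^ 4 * z i - s i ^ 2 * c i * th i) atTop (𝓝 (cs * ((t * Complex.I) ^ 2 / 2))) := by
    have := (hyT.mul hu2).add (hyc.mul hthT)
    rw [zero_mul, add_zero] at this
    refine this.congr' ?_
    filter_upwards [hs] with i hi
    simp only [hz]; field_simp; ring
  have hz0 : Tendsto z atTop (𝓝 0) := by
    have h03 : Tendsto (fun i => (s i ^ 3)⁻¹) atTop (𝓝 0) := by
      have := h0.pow 3
      simpa using this
    exact small_of_scale h03 (hs.mono fun i hi => pow_ne_zero 3 hi) hz3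
  -- D
  set D : ℕ → ℂ := fun i => s i ^ 2 * Complex.log (1 + z i) with hD
  have hD2 : Tendsto (fun i => s i ^ 2 * D i - s i ^ 2 * c i * th i) atTop (𝓝 (cs * ((t * Complex.I) ^ 2 / 2))) := by
    have := hz4.add (log_scale h0 hs hz3)
    rw [add_zero] at this
    refine this.congr fun i => ?_
    simp only [hD]; ring
  have hD1 : Tendsto (fun i => s i * D i) atTop (𝓝 (cs * (t * Complex.I))) := by
    have := (h0.mul hD2).add (hcC.mul hthT)
    rw [zero_mul, zero_add] at this
    refine this.congr' ?_
    filter_upwards [hs] with i hi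
    field_simp; ring
  have hD0 : Tendsto D atTop (𝓝 0) := small_of_scale h0 hs hD1
  set w : ℕ → ℂ := fun i => c i + D i with hw
  have hwT : Tendsto w atTop (𝓝 (cs : ℂ)) := by
    have := hcC.add hD0
    rwa [add_zero] at this
  -- a
  have hd1 : Tendsto (fun i => s i * (D i / 2)) atTop (𝓝 (cs * (t * Complex.I) / 2)) := by
    refine (hD1.div_const 2).congr fun i => ?_
    ring
  have hd1' : Tendsto (fun i => s i * (-(D i / 2))) atTop (𝓝 (-(cs * (t * Complex.I) / 2))) := by
    refine hd1.neg.congr fun i => ?_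
    ring
  have hp := exp_two_scale h0 hs hd1
  have hm := exp_two_scale h0 hs hd1'
  have hcpos : ∀ᶠ i in atTop, 0 < c i := hc.eventually (lt_mem_nhds hcs)
  set P : ℕ → ℂ := fun i => ((Real.exp (c i / 2) / Shr (c i) : ℝ) : ℂ) with hP
  set Q : ℕ → ℂ := fun i => ((-Real.exp (-(c i / 2)) / Shr (c i) : ℝ) : ℂ) with hQ
  have hPT : Tendsto P atTop (𝓝 ((Real.exp (cs / 2) / Shr cs : ℝ) : ℂ)) := by
    have : ContinuousAt (fun c : ℝ => Real.exp (c / 2) / Shr c) cs := by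
      have := (Shr_pos hcs).ne'
      unfold Shr at this ⊢
      fun_prop (disch := exact this)
    exact (Complex.continuous_ofReal.tendsto _).comp (this.tendsto.comp hc)
  have hQT : Tendsto Q atTop (𝓝 ((-Real.exp (-(cs / 2)) / Shr cs : ℝ) : ℂ)) := by
    have : ContinuousAt (fun c : ℝ => -Real.exp (-(c / 2)) / Shr c) cs := by
      have := (Shr_pos hcs).ne'
      unfold Shr at this ⊢
      fun_prop (disch := exact this)
    exact (Complex.continuous_ofReal.tendsto _).comp (this.tendsto.comp hc)
  have hPQ : ∀ c : ℝ, 0 < c → ((Real.exp (c / 2) / Shr c : ℝ) : ℂ) + ((-Real.exp (-(c / 2)) / Shr c : ℝ) : ℂ) = 1 := by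
    intro c hc
    rw [← Complex.ofReal_add, ← add_div, ← sub_eq_add_neg, ← Shr, div_self (Shr_pos hc).ne', Complex.ofReal_one]
  have hPQ' : ∀ c : ℝ, (((Real.exp (c / 2) / Shr c : ℝ) : ℂ) - ((-Real.exp (-(c / 2)) / Shr c : ℝ) : ℂ)) * (c / 2) = (bb c : ℂ) := by
    intro c
    rw [bb, ← Shr]; push_cast; ring
  set a : ℕ → ℂ := fun i => P i * (Complex.exp (D i / 2) - 1) + Q i * (Complex.exp (-(D i / 2)) - 1) with ha
  have ha2 : Tendsto (fun i => s i ^ 2 * a i - s i ^ 2 * bb (c i) * th i) atTop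
      (𝓝 (-(bb cs * t ^ 2 / 2) - cs ^ 2 * t ^ 2 / 8)) := by
    have h1 := ((hPT.mul hp).add (hQT.mul hm)).add (((hPT.sub hQT).mul_const (1 / 2)).mul hD2)
    have e1 : ((Real.exp (cs / 2) / Shr cs : ℝ) : ℂ) * ((cs * (t * Complex.I) / 2) ^ 2 / 2) +
      ((-Real.exp (-(cs / 2)) / Shr cs : ℝ) : ℂ) * ((-(cs * (t * Complex.I) / 2)) ^ 2 / 2) +
      (((Real.exp (cs / 2) / Shr cs : ℝ) : ℂ) - ((-Real.exp (-(cs / 2)) / Shr cs : ℝ) : ℂ)) * (1 / 2) * (cs * ((t * Complex.I) ^ 2 / 2))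
        = -(bb cs * t ^ 2 / 2) - cs ^ 2 * t ^ 2 / 8 := by
      linear_combination ((cs * (t * Complex.I) / 2) ^ 2 / 2) * hPQ cs hcs + ((t * Complex.I) ^ 2 / 2) * hPQ' cs +
        (cs ^ 2 * t ^ 2 / 8 + bb cs * t ^ 2 / 2) * Complex.I_sq
    rw [e1] at h1
    refine h1.congr fun i => ?_
    rw [← hPQ' (c i)]
    simp only [ha, hP, hQ]; ring
  have hbT : Tendsto (fun i => (bb (c i) : ℂ)) atTop (𝓝 (bb cs : ℂ)) :=
    (Complex.continuous_ofReal.tendsto _).comp (bb_tendsto hcs hc)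
  have ha1 : Tendsto (fun i => s i * a i) atTop (𝓝 (bb cs * (t * Complex.I))) := by
    have := (h0.mul ha2).add (hbT.mul hthT)
    rw [zero_mul, zero_add] at this
    refine this.congr' ?_
    filter_upwards [hs] with i hi
    field_simp; ring
  -- E
  set Bi : ℕ → ℂ := fun i => ((1 + (l i : ℝ) / N i : ℝ) : ℂ) with hBi
  have hbB : Tendsto (fun i => s i * (bb (c i) - Bi i)) atTop (𝓝 0) := by
    have := (Complex.continuous_ofReal.tendsto 0).comp hB
    rw [Complex.ofReal_zero] at this
    refine this.congr fun i => ?_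
    simp [hsd, hBi]
  have hBT : Tendsto Bi atTop (𝓝 (bb cs : ℂ)) := by
    have := hbT.sub (small_of_scale h0 hs hbB)
    rw [sub_zero] at this
    refine this.congr fun i => ?_
    ring
  have hEs : Tendsto (fun i => s i * (-(th i * Bi i))) atTop (𝓝 (-(t * Complex.I * bb cs))) := by
    refine (hthT.mul hBT).neg.congr fun i => ?_
    ring
  have hE1 := exp_one_scale h0 hs hEs
  have hE2 := exp_two_scale h0 hs hEs
  set E : ℕ → ℂ := fun i => Complex.exp (-(th i * Bi i)) with hE
  have hr : Tendsto (fun i => (N i : ℂ) * ((1 + a i) * E i - 1)) atTop (𝓝 ((-(sg cs) * t ^ 2 / 2 : ℝ) : ℂ)) := by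
    have h1 := ((ha2.add hE2).add (hbB.mul hthT)).add (ha1.mul hE1)
    have e1 : -(bb cs * (t : ℂ) ^ 2 / 2) - cs ^ 2 * t ^ 2 / 8 + (-(t * Complex.I * bb cs)) ^ 2 / 2 + 0 * (t * Complex.I) +
      bb cs * (t * Complex.I) * (-(t * Complex.I * bb cs)) = ((-(sg cs) * t ^ 2 / 2 : ℝ) : ℂ) := by
      rw [sg]; push_cast
      linear_combination (-(t ^ 2 * bb cs ^ 2 / 2) : ℂ) * Complex.I_sq
    rw [e1] at h1
    refine h1.congr fun i => ?_
    rw [← hs2 i]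
    simp only [hE]; ring
  have hrn := pow_exp_tendsto hN hr
  have hPhi := phi_tendsto hN hcs hwT (‖(cs : ℂ) * (t * Complex.I)‖ ^ 2 + 1) (by
    have := (hD1.norm.pow 2).eventually (gt_mem_nhds (lt_add_one _))
    filter_upwards [this] with i hi
    refine le_trans ?_ hi.le
    have e1 : (w i).im = (D i).im := by simp [hw]
    rw [e1, norm_mul, mul_pow, ← norm_pow, hs2, Complex.norm_natCast]
    refine mul_le_mul_of_nonneg_left ?_ (by positivity)
    rw [← sq_abs]
    exact pow_le_pow_left₀ (abs_nonneg _) (Complex.abs_im_le_norm _) 2)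
  have hed : Tendsto (fun i => Complex.exp (D i / 2)) atTop (𝓝 1) := by
    have := (Complex.continuous_exp.tendsto _).comp (hD0.div_const 2)
    rw [zero_div, Complex.exp_zero] at this
    exact this
  have hfin := (hed.mul hrn).mul hPhi
  have efin : 1 * Complex.exp ((-(sg cs) * t ^ 2 / 2 : ℝ) : ℂ) * (LL cs : ℂ) = ((LL cs * Real.exp (-(sg cs) * t ^ 2 / 2) : ℝ) : ℂ) := by
    push_cast; ring
  rw [efin] at hfin
  refine hfin.congr' ?_
  have hz1 : ∀ᶠ i in atTop, 1 + z i ≠ 0 := by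
    have := (hz0.const_add 1)
    rw [add_zero] at this
    exact this.eventually_ne one_ne_zero
  filter_upwards [hs, hN0, hcpos, hz1, re_ev hcs hwT] with i hsi hNi hci hzi hrei
  have hNC : (N i : ℂ) ≠ 0 := by exact_mod_cast hNi.ne'
  have eth : ((t / √(N i) : ℝ) : ℂ) * Complex.I = th i := by
    simp [hth, hsd]
  have ex : 1 + ((Real.exp (c i / N i) - 1 : ℝ) : ℂ) * Complex.exp (((t / √(N i) : ℝ) : ℂ) * Complex.I) = Complex.exp (w i / N i) := by
    rw [eth]
    have e1 : w i / N i = c i / N i + Complex.log (1 + z i) := by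
      simp only [hw, hD, hs2]; field_simp
    rw [e1, Complex.exp_add, Complex.exp_log hzi]
    have e2 : Complex.exp (th i) = 1 + u i := by simp [hu]
    have e3 : z i = (1 - Complex.exp (-(c i / N i))) * u i := by
      simp only [hz, hy, hs2]; field_simp
    rw [e2, e3, Complex.exp_neg]
    push_cast
    have := Complex.exp_ne_zero ((c i : ℂ) / N i)
    field_simp
    ring
  have hSp := Shr_pos hci
  rw [GG, CP_closed (N i) hNi (w i) _ hrei.1 ex]
  have eS : Sh (w i) = Shr (c i) * (1 + a i) := by
    have h1 : (Shr (c i) : ℂ) ≠ 0 := by exact_mod_cast hSp.ne'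
    have h2 : (Shr (c i) : ℂ) = Complex.exp (c i / 2) - Complex.exp (-(c i / 2)) := by rw [Shr]; push_cast; rfl
    have h3 : (Shr (c i) : ℂ) * a i = Complex.exp (c i / 2) * (Complex.exp (D i / 2) - 1) - Complex.exp (-(c i / 2)) * (Complex.exp (-(D i / 2)) - 1) := by
      simp only [ha, hP, hQ]; push_cast; field_simp; ring
    rw [mul_add, h3, mul_one, h2, Sh]
    have h4 : Complex.exp (w i / 2) = Complex.exp (c i / 2) * Complex.exp (D i / 2) := by
      rw [← Complex.exp_add]; congr 1; simp only [hw]; ring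
    have h5 : Complex.exp (-(w i / 2)) = Complex.exp (-(c i / 2)) * Complex.exp (-(D i / 2)) := by
      rw [← Complex.exp_add]; congr 1; simp only [hw]; ring
    rw [h4, h5]; ring
  have eE : Complex.exp (-(((t / √(N i) : ℝ) : ℂ) * (N i + l i) * Complex.I)) = E i ^ N i := by
    simp only [hE]
    rw [← Complex.exp_nat_mul, ← eth]
    congr 1
    simp only [hBi]; push_cast; field_simp
  have ew : Complex.exp (w i / 2) = Complex.exp (c i / 2) * Complex.exp (D i / 2) := by
    rw [← Complex.exp_add]; congr 1; simp only [hw]; ring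
  rw [eS, eE, ew]
  have h1 : (Shr (c i) : ℂ) ≠ 0 := by exact_mod_cast hSp.ne'
  push_cast
  have h2 := Complex.exp_ne_zero ((c i : ℂ) / 2)
  have e9 : (1 + ((1 + a i) * E i - 1)) = (1 + a i) * E i := by ring
  rw [e9, mul_pow, mul_pow]
  field_simp

lemma lt_Shr {c : ℝ} (hc : 0 < c) : c < Shr c := by
  have h : c / 2 < Real.sinh (c / 2) := Real.self_lt_sinh_iff.2 (by linarith)
  rw [Real.sinh_eq] at h
  rw [Shr]; linarith

lemma exp_sub_one_le (y : ℝ) : Real.exp y - 1 ≤ y * Real.exp y := by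
  have h := Real.add_one_le_exp (-y)
  rw [Real.exp_neg] at h
  have hp := Real.exp_pos y
  have := mul_le_mul_of_nonneg_right h hp.le
  rw [inv_mul_cancel₀ hp.ne'] at this
  linarith

lemma GG_continuous (n l : ℕ) (c : ℝ) : Continuous (GG n l c) := by
  unfold GG
  have := CP_continuous (n + 1)
  fun_prop

lemma GG_integral (n l : ℕ) (hn : 0 < n) (c : ℝ) :
    ∫ t in (-(π * √n))..(π * √n), GG n l c t =
      ((2 * π * (√n * (connGraphCount (n + 1) l * (Real.exp (c / n) - 1) ^ (n + l) / (Real.exp (c / 2) * Shr c ^ n))) : ℝ) : ℂ) := by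
  have hsq : √(n : ℝ) ≠ 0 := (Real.sqrt_pos.2 (by exact_mod_cast hn)).ne'
  have h := intervalIntegral.integral_comp_div (a := -(π * √n)) (b := π * √n)
    (fun θ : ℝ => CP (n + 1) (((Real.exp (c / n) - 1 : ℝ) : ℂ) * Complex.exp ((θ : ℂ) * Complex.I)) *
    Complex.exp (-((θ : ℂ) * (n + l) * Complex.I)) / (Real.exp (c / 2) * Shr c ^ n : ℝ)) hsq
  have e : ∀ t, GG n l c t = (fun θ : ℝ => CP (n + 1) (((Real.exp (c / n) - 1 : ℝ) : ℂ) * Complex.exp ((θ : ℂ) * Complex.I)) *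
    Complex.exp (-((θ : ℂ) * (n + l) * Complex.I)) / (Real.exp (c / 2) * Shr c ^ n : ℝ)) (t / √n) := fun t => rfl
  simp_rw [e]
  rw [h, intervalIntegral.integral_div]
  have e2 : -(π * √n) / √n = -π := by field_simp
  have e3 : (π * √n) / √n = π := by field_simp
  rw [e2, e3, coeff_extract]
  rw [Complex.real_smul]
  push_cast
  ring

lemma GG_bound {N l : ℕ → ℕ} (hN : Tendsto N atTop atTop) {c : ℕ → ℝ} {cs : ℝ} (hcs : 0 < cs)
    (hc : Tendsto c atTop (𝓝 cs))
    (hB : Tendsto (fun i => √(N i) * (bb (c i) - (1 + (l i : ℝ) / N i))) atTop (𝓝 0)) :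
    ∃ K α η : ℝ, 0 < α ∧ 0 < η ∧ ∀ᶠ i in atTop, ∀ t : ℝ, |t| ≤ π * √(N i) →
      ‖GG (N i) (l i) (c i) t‖ ≤ K * Real.exp (-α * t ^ 2) + Real.exp (-η * t ^ 2) := by
  have hN0 : ∀ᶠ i in atTop, 0 < N i := hN.eventually_gt_atTop 0
  have hNr : Tendsto (fun i => (N i : ℝ)) atTop atTop := tendsto_natCast_atTop_atTop.comp hN
  have hS := lt_Shr hcs
  have hSp := Shr_pos hcs
  obtain ⟨δ, hδ, hδ2⟩ : ∃ δ : ℝ, 0 < δ ∧ cs * Real.exp (cs * δ) / Shr cs < 1 := by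
    have hl : 0 < Real.log (Shr cs / cs) := Real.log_pos (by rwa [one_lt_div hcs])
    refine ⟨Real.log (Shr cs / cs) / (2 * cs), by positivity, ?_⟩
    rw [div_lt_one hSp, ← lt_div_iff₀' hcs]
    calc _ < Real.exp (Real.log (Shr cs / cs)) := by
          rw [Real.exp_lt_exp]
          have : cs * (Real.log (Shr cs / cs) / (2 * cs)) = Real.log (Shr cs / cs) / 2 := by field_simp
          linarith
      _ = _ := Real.exp_log (by positivity)
  obtain ⟨ρ, hρ1, hρ2⟩ := exists_between hδ2
  have hρ0 : 0 < ρ := lt_trans (by positivity) hρ1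
  have hcn : Tendsto (fun i => c i / N i) atTop (𝓝 0) := hc.div_atTop hNr
  have hce : Tendsto (fun i => Real.exp (c i / N i)) atTop (𝓝 1) := by
    have := (Real.continuous_exp.tendsto 0).comp hcn
    rw [Real.exp_zero] at this; exact this
  have hx0 : Tendsto (fun i => Real.exp (c i / N i) - 1) atTop (𝓝 0) := by
    have := hce.sub_const 1
    rwa [sub_self] at this
  have hSc : Tendsto (fun i => Shr (c i)) atTop (𝓝 (Shr cs)) := by
    have : Continuous Shr := by unfold Shr; fun_prop
    exact (this.tendsto cs).comp hc
  have hbase : Tendsto (fun i => c i * Real.exp (c i / N i) * Real.exp (c i * δ) / Shr (c i)) atTop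
      (𝓝 (cs * Real.exp (cs * δ) / Shr cs)) := by
    have h1 := ((hc.mul hce).mul ((Real.continuous_exp.tendsto _).comp (hc.mul_const δ))).div hSc hSp.ne'
    rw [mul_one] at h1
    exact h1
  have h00 := (GG_tendsto hN hcs hc hB 0).norm
  set K := ‖((LL cs * Real.exp (-(sg cs) * 0 ^ 2 / 2) : ℝ) : ℂ)‖ + 1 with hK
  refine ⟨K, cs * δ / (8 * π ^ 2), -Real.log ρ / π ^ 2, by positivity, 
    div_pos (neg_pos.2 (Real.log_neg hρ0 hρ2)) (by positivity), ?_⟩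
  filter_upwards [hN0, hbase.eventually (gt_mem_nhds hρ1), h00.eventually (gt_mem_nhds (lt_add_one _)), 
    hc.eventually (lt_mem_nhds (half_lt_self hcs)), hx0.eventually (gt_mem_nhds one_pos), 
    hNr.eventually_ge_atTop (1 + 2 / δ)] with i hNi hbi hKi hci hxi hNδ t ht
  have hcp : 0 < c i := by linarith
  have hNp : (0 : ℝ) < N i := by exact_mod_cast hNi
  have hsq : 0 < √(N i : ℝ) := Real.sqrt_pos.2 hNp
  have hSi := Shr_pos hcp
  set n := N i with hn
  set x := Real.exp (c i / n) - 1 with hx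
  have hxc : c i / n ≤ x := by
    have := Real.add_one_le_exp (c i / n); linarith
  have hxp : 0 < x := lt_of_lt_of_le (by positivity) hxc
  have hθ : |t / √n| ≤ π := by
    rw [abs_div, abs_of_pos hsq, div_le_iff₀ hsq]; exact ht
  have hdom := CP_dom n ⌊δ * n ^ 2⌋₊ x (t / √n) hxp hxi hθ
  set D := ⌊δ * (n : ℝ) ^ 2⌋₊ with hD
  have hDle : (D : ℝ) ≤ δ * n ^ 2 := Nat.floor_le (by positivity)
  have hDge : δ * n ^ 2 / 2 ≤ D := by
    have h1 := Nat.lt_floor_add_one (δ * (n : ℝ) ^ 2)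
    have h2 : 2 ≤ δ * n := by
      have : 2 / δ ≤ n := by linarith
      rwa [div_le_iff₀' hδ] at this
    have h3 : (1 : ℝ) ≤ n := by have : 0 < 2 / δ := by positivity
                                linarith
    have h4 : 2 ≤ δ * n ^ 2 := by nlinarith
    rw [← hD] at h1
    linarith
  have hnorm : 0 < Real.exp (c i / 2) * Shr (c i) ^ n := by positivity
  have eG : ‖GG n (l i) (c i) t‖ = ‖CP (n + 1) ((x : ℂ) * Complex.exp (((t / √n : ℝ) : ℂ) * Complex.I))‖ / (Real.exp (c i / 2) * Shr (c i) ^ n) := by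
    rw [GG, norm_div, norm_mul, Complex.norm_real, Real.norm_of_nonneg hnorm.le]
    have : ‖Complex.exp (-(((t / √n : ℝ) : ℂ) * (n + l i) * Complex.I))‖ = 1 := by
      rw [Complex.norm_exp]
      simp
    rw [this, mul_one]
  have eG0 : ‖GG n (l i) (c i) 0‖ = ‖CP (n + 1) (x : ℂ)‖ / (Real.exp (c i / 2) * Shr (c i) ^ n) := by
    rw [GG, norm_div, norm_mul, Complex.norm_real, Real.norm_of_nonneg hnorm.le]
    simp [hx]
  rw [eG]
  have hstep : ‖CP (n + 1) ((x : ℂ) * Complex.exp (((t / √n : ℝ) : ℂ) * Complex.I))‖ / (Real.exp (c i / 2) * Shr (c i) ^ n) ≤ 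
      Real.exp (-(x * (t / √n) ^ 2 / (2 * π ^ 2))) ^ D * ‖GG n (l i) (c i) 0‖ + (n * x) ^ n * (1 + x) ^ D / (Real.exp (c i / 2) * Shr (c i) ^ n) := by
    rw [eG0, ← mul_div_assoc, ← add_div]
    exact div_le_div_of_nonneg_right hdom hnorm.le
  refine hstep.trans (add_le_add ?_ ?_)
  · rw [mul_comm]
    refine mul_le_mul hKi.le ?_ (by positivity) (by positivity)
    rw [← Real.exp_nat_mul, Real.exp_le_exp]
    have h1 : (t / √n) ^ 2 = t ^ 2 / n := by rw [div_pow, Real.sq_sqrt hNp.le]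
    rw [h1]
    have h2 : cs * δ / (8 * π ^ 2) * t ^ 2 ≤ D * (x * (t ^ 2 / n) / (2 * π ^ 2)) := by
      calc cs * δ / (8 * π ^ 2) * t ^ 2 = (δ * n ^ 2 / 2) * (((cs / 2) / n) * (t ^ 2 / n) / (2 * π ^ 2)) := by
            field_simp; ring
        _ ≤ D * (x * (t ^ 2 / n) / (2 * π ^ 2)) := by
            gcongr
            refine le_trans ?_ hxc
            gcongr
    linarith
  · have h1 : (1 + x) ^ D ≤ Real.exp (c i * δ) ^ n := by
      have : 1 + x = Real.exp (c i / n) := by rw [hx]; ring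
      rw [this, ← Real.exp_nat_mul, ← Real.exp_nat_mul, Real.exp_le_exp]
      calc (D : ℝ) * (c i / n) ≤ δ * n ^ 2 * (c i / n) := by gcongr
        _ = _ := by field_simp
    have h2 : n * x ≤ c i * Real.exp (c i / n) := by
      have := mul_le_mul_of_nonneg_left (exp_sub_one_le (c i / n)) hNp.le
      calc _ ≤ _ := this
        _ = _ := by field_simp
    have h3 : Shr (c i) ^ n ≤ Real.exp (c i / 2) * Shr (c i) ^ n := by
      have : 1 ≤ Real.exp (c i / 2) := Real.one_le_exp (by positivity)
      nlinarith [pow_pos hSi n]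
    calc (n * x) ^ n * (1 + x) ^ D / (Real.exp (c i / 2) * Shr (c i) ^ n) 
        ≤ (c i * Real.exp (c i / n)) ^ n * Real.exp (c i * δ) ^ n / Shr (c i) ^ n := by
          gcongr
      _ = (c i * Real.exp (c i / n) * Real.exp (c i * δ) / Shr (c i)) ^ n := by
          rw [div_pow, mul_pow (c i * _)]
      _ ≤ ρ ^ n := by gcongr
      _ = Real.exp (Real.log ρ * n) := by
          rw [mul_comm, Real.exp_nat_mul, Real.exp_log hρ0]
      _ ≤ _ := by
          rw [Real.exp_le_exp]
          have h5 : t ^ 2 ≤ π ^ 2 * n := by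
            rw [← sq_abs]
            calc _ ≤ (π * √n) ^ 2 := by gcongr
              _ = _ := by rw [mul_pow, Real.sq_sqrt hNp.le]
          have h6 := Real.log_neg hρ0 hρ2
          have h7 : -(-Real.log ρ / π ^ 2) * t ^ 2 = Real.log ρ * (t ^ 2 / π ^ 2) := by ring
          rw [h7]
          refine mul_le_mul_of_nonpos_left ?_ h6.le
          rw [div_le_iff₀ (by positivity)]; linarith

lemma count_tendsto {N l : ℕ → ℕ} (hN : Tendsto N atTop atTop) {c : ℕ → ℝ} {cs : ℝ} (hcs : 0 < cs)
    (hc : Tendsto c atTop (𝓝 cs))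
    (hB : Tendsto (fun i => √(N i) * (bb (c i) - (1 + (l i : ℝ) / N i))) atTop (𝓝 0)) (hsg : 0 < sg cs) :
    Tendsto (fun i => √(N i) * (connGraphCount (N i + 1) (l i) * (Real.exp (c i / N i) - 1) ^ (N i + l i) / 
      (Real.exp (c i / 2) * Shr (c i) ^ N i))) atTop (𝓝 (LL cs / √(2 * π * sg cs))) := by
  have hN0 : ∀ᶠ i in atTop, 0 < N i := hN.eventually_gt_atTop 0
  have hNr : Tendsto (fun i => (N i : ℝ)) atTop atTop := tendsto_natCast_atTop_atTop.comp hN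
  have hsr : Tendsto (fun i => π * √(N i : ℝ)) atTop atTop := (Real.tendsto_sqrt_atTop.comp hNr).const_mul_atTop pi_pos
  obtain ⟨K, α, η, hα, hη, hbd⟩ := GG_bound hN hcs hc hB
  have hmain : Tendsto (fun i => ∫ t : ℝ, (Set.Ioc (-(π * √(N i))) (π * √(N i))).indicator (GG (N i) (l i) (c i)) t) atTop
      (𝓝 (∫ t : ℝ, ((LL cs * Real.exp (-(sg cs) * t ^ 2 / 2) : ℝ) : ℂ))) := by
    refine MeasureTheory.tendsto_integral_filter_of_dominated_convergence 
      (fun t => |K| * Real.exp (-α * t ^ 2) + Real.exp (-η * t ^ 2)) ?_ ?_ ?_ ?_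
    · exact Eventually.of_forall fun i => ((GG_continuous _ _ _).measurable.indicator measurableSet_Ioc).aestronglyMeasurable
    · filter_upwards [hbd] with i hi
      refine Eventually.of_forall fun t => ?_
      by_cases ht : t ∈ Set.Ioc (-(π * √(N i))) (π * √(N i))
      · rw [Set.indicator_of_mem ht]
        refine (hi t (abs_le.2 ⟨ht.1.le, ht.2⟩)).trans ?_
        gcongr
        exact le_abs_self K
      · rw [Set.indicator_of_notMem ht, norm_zero]
        positivity
    · exact ((integrable_exp_neg_mul_sq hα).const_mul _).add (integrable_exp_neg_mul_sq hη)
    · refine Eventually.of_forall fun t => ?_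
      refine (GG_tendsto hN hcs hc hB t).congr' ?_
      filter_upwards [hsr.eventually_gt_atTop |t|] with i hi
      rw [Set.indicator_of_mem]
      have := abs_lt.1 hi
      exact ⟨this.1, this.2.le⟩
  have e1 : ∫ t : ℝ, ((LL cs * Real.exp (-(sg cs) * t ^ 2 / 2) : ℝ) : ℂ) = ((LL cs * √(π / (sg cs / 2)) : ℝ) : ℂ) := by
    rw [integral_complex_ofReal, MeasureTheory.integral_const_mul, ← integral_gaussian]
    congr 3
    funext t; congr 1; ring
  rw [e1] at hmain
  have h2 : Tendsto (fun i => ((2 * π * (√(N i) * (connGraphCount (N i + 1) (l i) * (Real.exp (c i / N i) - 1) ^ (N i + l i) / 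
      (Real.exp (c i / 2) * Shr (c i) ^ N i))) : ℝ) : ℂ)) atTop (𝓝 ((LL cs * √(π / (sg cs / 2)) : ℝ) : ℂ)) := by
    refine hmain.congr' ?_
    filter_upwards [hN0] with i hi
    rw [← GG_integral _ _ hi, MeasureTheory.integral_indicator measurableSet_Ioc, 
      intervalIntegral.integral_of_le]
    have : 0 ≤ π * √(N i : ℝ) := by positivity
    linarith
  have h3 := ((Complex.continuous_re.tendsto _).comp h2).div_const (2 * π)
  have e3 : ((LL cs * √(π / (sg cs / 2)) : ℝ) : ℂ).re / (2 * π) = LL cs / √(2 * π * sg cs) := by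
    rw [Complex.ofReal_re]
    have h5 : √(π / (sg cs / 2)) = 2 * π / √(2 * π * sg cs) := by
      rw [Real.sqrt_eq_iff_mul_self_eq (by positivity) (by positivity), div_mul_div_comm, Real.mul_self_sqrt (by positivity)]
      field_simp
    rw [h5]
    field_simp
  rw [e3] at h3
  refine h3.congr fun i => ?_
  simp only [Function.comp, Complex.ofReal_re]
  field_simp

lemma bb_eq {c : ℝ} (hc : 0 < c) : bb c = la c + c / 2 := by
  have h1 := one_sub_exp_pos hc
  have e : Real.exp (-(c / 2)) = Real.exp (c / 2) * Real.exp (-c) := by rw [← Real.exp_add]; congr 1; ring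
  have h2 : Real.exp (c / 2) - Real.exp (c / 2) * Real.exp (-c) ≠ 0 := by
    have : Real.exp (c / 2) - Real.exp (c / 2) * Real.exp (-c) = Real.exp (c / 2) * (1 - Real.exp (-c)) := by ring
    rw [this]; positivity
  rw [bb, la, e]
  have h3 := Real.exp_pos (c / 2)
  have h4 : Real.exp (c / 2) - Real.exp (c / 2) * Real.exp (-c) = Real.exp (c / 2) * (1 - Real.exp (-c)) := by ring
  rw [h4]
  field_simp
  ring

lemma Shr_eq (c : ℝ) : Shr c = Real.exp (c / 2) * (1 - Real.exp (-c)) := by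
  rw [Shr, mul_sub, mul_one, ← Real.exp_add]; congr 2; ring

lemma sg_eq {c : ℝ} (hc : 0 < c) : sg c = la c + c / 2 - la c ^ 2 - la c * c := by
  rw [sg, bb_eq hc]; ring

lemma sg_f2 {c : ℝ} (hc : 0 < c) : sg c = (bb c - 1) + c ^ 2 * f2 c := by
  have h1 := one_sub_exp_pos hc
  rw [sg_eq hc, bb_eq hc, f2, la]
  field_simp
  ring

lemma sg_pos {c : ℝ} (hc : 0 < c) : 0 < sg c := by
  have h1 := one_sub_exp_pos hc
  have h : c < Real.sinh c := Real.self_lt_sinh_iff.2 hc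
  rw [Real.sinh_eq] at h
  have hp := Real.exp_pos (-c)
  have h2 : Real.exp c * Real.exp (-c) = 1 := by rw [← Real.exp_add]; simp
  have e : sg c = c * ((1 - Real.exp (-c) ^ 2) / 2 - c * Real.exp (-c)) / (1 - Real.exp (-c)) ^ 2 := by
    rw [sg_eq hc, la]
    field_simp
    ring
  rw [e]
  have h3 : 0 < (1 - Real.exp (-c) ^ 2) / 2 - c * Real.exp (-c) := by
    have := mul_lt_mul_of_pos_right h hp
    nlinarith
  positivity

lemma bb_of_eq {b c : ℝ} (hb : 0 < b) (hc : 0 < c) (h : Real.exp (-c) = (2 * b - c) / (2 * b + c)) : bb c = b := by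
  have h1 := one_sub_exp_pos hc
  have h2 : Real.exp (-c) * (2 * b + c) = 2 * b - c := by
    rw [h]; field_simp
  rw [bb_eq hc, la]
  field_simp
  linarith

lemma Bterm_eq {c : ℝ} (hc : 0 < c) : Bterm (bb c - 1) c = Shr c / (c * c ^ (bb c - 1)) := by
  have hS := Shr_pos hc
  have h1 := one_sub_exp_pos hc
  have e : √(4 * (bb c - 1 + 1) ^ 2 - c ^ 2) = 2 * c / Shr c := by
    have : 4 * (bb c - 1 + 1) ^ 2 - c ^ 2 = (2 * c / Shr c) ^ 2 := by
      have e2 : Shr c ^ 2 * Real.exp (-c) = (1 - Real.exp (-c)) ^ 2 := by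
        rw [Shr_eq]
        have : Real.exp (c / 2) ^ 2 * Real.exp (-c) = 1 := by
          rw [← Real.exp_nat_mul, ← Real.exp_add]; simp; ring
        linear_combination (1 - Real.exp (-c)) ^ 2 * this
      have e3 : (2 * c / Shr c) ^ 2 = 4 * c ^ 2 * Real.exp (-c) / (1 - Real.exp (-c)) ^ 2 := by
        rw [← e2]
        have := Real.exp_pos (-c)
        field_simp
        ring
      rw [e3, bb_eq hc, la]
      field_simp
      ring
    rw [this, Real.sqrt_sq (by positivity)]
  rw [Bterm, e]
  have : 0 < c ^ (bb c - 1) := Real.rpow_pos_of_pos hc _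
  field_simp

lemma Aterm_eq {c : ℝ} (hc : 0 < c) (hb : bb c - 1 ≠ 0) : 
    Aterm (bb c - 1) c = c * (1 - la c) / √(2 * π * sg c) * Real.exp (-(c * (bb c + 1) / 2)) := by
  have hs := sg_pos hc
  have e : 8 * π * (bb c - 1) * (1 + c ^ 2 * f2 c / (bb c - 1)) = 2 ^ 2 * (2 * π * sg c) := by
    rw [sg_f2 hc]; field_simp; ring
  rw [Aterm, e, Real.sqrt_mul (by positivity), Real.sqrt_sq (by norm_num)]
  have e2 : c * (c - 2 * (bb c - 1)) = 2 * (c * (1 - la c)) := by rw [bb_eq hc]; ring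
  rw [e2, mul_div_mul_left _ _ (by norm_num)]
  congr 2; ring

lemma ratio_tendsto {N l : ℕ → ℕ} (hN : Tendsto N atTop atTop) {c : ℕ → ℝ} {cs : ℝ} (hcs : 0 < cs)
    (hc : Tendsto c atTop (𝓝 cs)) (hl : ∀ i, 0 < l i)
    (hb : ∀ᶠ i in atTop, bb (c i) - 1 = (l i : ℝ) / (N i + 1 : ℕ)) :
    Tendsto (fun i => (connGraphCount (N i + 1) (l i) : ℝ) / 
      (Aterm ((l i : ℝ) / (N i + 1 : ℕ)) (c i) * Bterm ((l i : ℝ) / (N i + 1 : ℕ)) (c i) ^ (N i + 1) *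
        ((N i + 1 : ℕ) : ℝ) ^ ((1 + (l i : ℝ) / (N i + 1 : ℕ)) * (N i + 1 : ℕ)) * ((N i + 1 : ℕ) : ℝ) ^ (-(3 : ℝ) / 2)))
      atTop (𝓝 1) := by
  have hN0 : ∀ᶠ i in atTop, 0 < N i := hN.eventually_gt_atTop 0
  have hNr : Tendsto (fun i => (N i : ℝ)) atTop atTop := tendsto_natCast_atTop_atTop.comp hN
  have hsr : Tendsto (fun i => √(N i : ℝ)) atTop atTop := Real.tendsto_sqrt_atTop.comp hNr
  have hcpos : ∀ᶠ i in atTop, 0 < c i := hc.eventually (lt_mem_nhds hcs)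
  have hbT := bb_tendsto hcs hc
  have hNinv : Tendsto (fun i => (N i : ℝ)⁻¹) atTop (𝓝 0) := hNr.inv_tendsto_atTop
  have hB : Tendsto (fun i => √(N i) * (bb (c i) - (1 + (l i : ℝ) / N i))) atTop (𝓝 0) := by
    have h1 : Tendsto (fun i => -((bb (c i) - 1) * (√(N i : ℝ))⁻¹)) atTop (𝓝 0) := by
      have := ((hbT.sub_const 1).mul hsr.inv_tendsto_atTop).neg
      rw [mul_zero, neg_zero] at this
      exact this
    refine h1.congr' ?_
    filter_upwards [hN0, hb] with i hi hbi
    have hNp : (0 : ℝ) < N i := by exact_mod_cast hi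
    have hsq : 0 < √(N i : ℝ) := Real.sqrt_pos.2 hNp
    have e1 : bb (c i) = 1 + (l i : ℝ) / (N i + 1 : ℕ) := by linarith
    rw [e1]
    have e2 : √(N i : ℝ) * √(N i : ℝ) = N i := Real.mul_self_sqrt hNp.le
    have e3 : (√(N i : ℝ))⁻¹ = √(N i : ℝ) / N i := by
      rw [Real.sqrt_div_self', one_div]
    rw [e3]
    push_cast
    field_simp
    ring
  have hV := count_tendsto hN hcs hc hB (sg_pos hcs)
  -- the factor (c/(k x))^(N+l)
  set x : ℕ → ℝ := fun i => Real.exp (c i / N i) - 1 with hx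
  have hpw : Tendsto (fun i => (c i / ((N i + 1 : ℕ) * x i)) ^ (N i + l i)) atTop (𝓝 (Real.exp (-((1 + cs / 2) * bb cs)))) := by
    set s : ℕ → ℂ := fun i => (N i : ℂ) with hs
    have h0 : Tendsto (fun i => (s i)⁻¹) atTop (𝓝 0) := by
      have := (Complex.continuous_ofReal.tendsto 0).comp hNinv
      rw [Complex.ofReal_zero] at this
      refine this.congr fun i => ?_
      simp [hs]
    have hs0 : ∀ᶠ i in atTop, s i ≠ 0 := by
      filter_upwards [hN0] with i hi
      simp only [hs]
      exact_mod_cast hi.ne'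
    have hcC : Tendsto (fun i => (c i : ℂ)) atTop (𝓝 (cs : ℂ)) := (Complex.continuous_ofReal.tendsto cs).comp hc
    have hg : Tendsto (fun i => s i * ((c i : ℂ) / s i)) atTop (𝓝 (cs : ℂ)) := by
      refine hcC.congr' ?_
      filter_upwards [hs0] with i hi
      field_simp
    have hE1 := exp_one_scale h0 hs0 hg
    have hE2 := exp_two_scale h0 hs0 hg
    have hxC : ∀ i, (x i : ℂ) = Complex.exp ((c i : ℂ) / s i) - 1 := by
      intro i; simp [hx, hs]
    have hNx : Tendsto (fun i => s i * (x i : ℂ)) atTop (𝓝 (cs : ℂ)) := by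
      refine hE1.congr fun i => ?_
      rw [hxC]
    have hx0 := small_of_scale h0 hs0 hNx
    have hkx : Tendsto (fun i => (s i + 1) * (x i : ℂ)) atTop (𝓝 (cs : ℂ)) := by
      have := hNx.add hx0
      rw [add_zero] at this
      refine this.congr fun i => ?_
      ring
    have hnum : Tendsto (fun i => s i * (c i - (s i + 1) * x i)) atTop (𝓝 (-((cs : ℂ) ^ 2 / 2) - cs)) := by
      refine (hE2.neg.sub hNx).congr' ?_
      filter_upwards [hs0] with i hi
      rw [hxC]
      field_simp
      ring
    have hcs0 : (cs : ℂ) ≠ 0 := by exact_mod_cast hcs.ne'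
    have hNg := hnum.div hkx hcs0
    have hbC : Tendsto (fun i => (bb (c i) : ℂ)) atTop (𝓝 (bb cs : ℂ)) := (Complex.continuous_ofReal.tendsto _).comp hbT
    have hlN : Tendsto (fun i => ((1 + (l i : ℝ) / N i : ℝ) : ℂ)) atTop (𝓝 (bb cs : ℂ)) := by
      have h1 : Tendsto (fun i => √(N i) * (bb (c i) - (1 + (l i : ℝ) / N i)) * (√(N i : ℝ))⁻¹) atTop (𝓝 0) := by
        have := hB.mul hsr.inv_tendsto_atTop
        rw [mul_zero] at this
        exact this
      have h2 := hbT.sub h1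
      rw [sub_zero] at h2
      refine (Complex.continuous_ofReal.tendsto _).comp (h2.congr' ?_)
      filter_upwards [hN0] with i hi
      have hNp : (0 : ℝ) < N i := by exact_mod_cast hi
      have hsq : √(N i : ℝ) ≠ 0 := (Real.sqrt_pos.2 hNp).ne'
      rw [mul_right_comm, mul_inv_cancel₀ hsq, one_mul]; ring
    have hM : Tendsto (fun i => N i + l i) atTop atTop := tendsto_atTop_mono (fun i => Nat.le_add_right _ _) hN
    have hMg : Tendsto (fun i => ((N i + l i : ℕ) : ℂ) * ((c i - (s i + 1) * x i) / ((s i + 1) * x i))) atTop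
        (𝓝 ((-((1 + cs / 2) * bb cs) : ℝ) : ℂ)) := by
      have h1 := hlN.mul hNg
      have e1 : (bb cs : ℂ) * ((-((cs : ℂ) ^ 2 / 2) - cs) / cs) = ((-((1 + cs / 2) * bb cs) : ℝ) : ℂ) := by
        push_cast; field_simp; ring
      rw [e1] at h1
      refine h1.congr' ?_
      filter_upwards [hs0] with i hi
      simp only [hs] at hi ⊢
      push_cast
      simp only [Pi.div_apply]
      field_simp
    have hp := pow_exp_tendsto hM hMg
    have h5 := (Complex.continuous_re.tendsto _).comp hp
    rw [← Complex.ofReal_exp, Complex.ofReal_re] at h5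
    refine h5.congr' ?_
    filter_upwards [hN0, hcpos] with i hi hci
    have hNp : (0 : ℝ) < N i := by exact_mod_cast hi
    have hxp : 0 < x i := by
      have := Real.add_one_le_exp (c i / N i)
      have h2 : 0 < c i / N i := by positivity
      simp only [hx]; linarith
    have e7 : 1 + ((c i : ℂ) - (s i + 1) * x i) / ((s i + 1) * x i) = ((c i / ((N i + 1 : ℕ) * x i) : ℝ) : ℂ) := by
      have h8 : (((N i + 1 : ℕ) * x i : ℝ) : ℂ) = (s i + 1) * x i := by simp [hs]
      have h9 : (((N i + 1 : ℕ) * x i : ℝ) : ℂ) ≠ 0 := by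
        have : (0 : ℝ) < (N i + 1 : ℕ) * x i := by positivity
        exact_mod_cast this.ne'
      rw [Complex.ofReal_div, ← h8]
      field_simp
      ring
    simp only [Function.comp]
    rw [e7, ← Complex.ofReal_pow, Complex.ofReal_re]
  have hkn : Tendsto (fun i => √((N i + 1 : ℕ) : ℝ) / √(N i)) atTop (𝓝 1) := by
    have h1 : Tendsto (fun i => √(1 + (N i : ℝ)⁻¹)) atTop (𝓝 1) := by
      have := (Real.continuous_sqrt.tendsto _).comp (hNinv.const_add 1)
      rw [add_zero, Real.sqrt_one] at this
      exact this
    refine h1.congr' ?_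
    filter_upwards [hN0] with i hi
    have hNp : (0 : ℝ) < N i := by exact_mod_cast hi
    rw [← Real.sqrt_div (by positivity)]
    congr 1
    push_cast
    field_simp
  have hS := Shr_pos hcs
  have hla : ContinuousAt la cs := by
    unfold la
    have := (one_sub_exp_pos hcs).ne'
    fun_prop (disch := exact this)
  have hlaT : Tendsto (fun i => la (c i)) atTop (𝓝 (la cs)) := hla.tendsto.comp hc
  have hsgT : Tendsto (fun i => sg (c i)) atTop (𝓝 (sg cs)) := by
    unfold sg
    exact (hbT.add ((hc.pow 2).div_const 4)).sub (hbT.pow 2)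
  have hsp : 0 < √(2 * π * sg cs) := Real.sqrt_pos.2 (by have := sg_pos hcs; positivity)
  have hAT : Tendsto (fun i => c i * (1 - la (c i)) / √(2 * π * sg (c i)) * Real.exp (-(c i * (bb (c i) + 1) / 2))) atTop
      (𝓝 (cs * (1 - la cs) / √(2 * π * sg cs) * Real.exp (-(cs * (bb cs + 1) / 2)))) := by
    refine Tendsto.mul (Tendsto.div (hc.mul (hlaT.const_sub 1)) ?_ hsp.ne') ?_
    · exact (Real.continuous_sqrt.tendsto _).comp (hsgT.const_mul _)
    · exact (Real.continuous_exp.tendsto _).comp ((hc.mul (hbT.add_const 1)).div_const 2).neg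
  have hla1 : 0 < 1 - la cs := sub_pos.2 (la_lt_one hcs)
  have hST : Tendsto (fun i => Shr (c i)) atTop (𝓝 (Shr cs)) := by
    have : Continuous Shr := by unfold Shr; fun_prop
    exact (this.tendsto cs).comp hc
  have heT : Tendsto (fun i => Real.exp (c i / 2)) atTop (𝓝 (Real.exp (cs / 2))) :=
    (Real.continuous_exp.tendsto _).comp (hc.div_const 2)
  have hfin := ((((hV.mul heT).mul (hc.div hST hS.ne')).mul hpw).mul hkn).div hAT (by positivity)
  have e1 : LL cs / √(2 * π * sg cs) * Real.exp (cs / 2) * (cs / Shr cs) * Real.exp (-((1 + cs / 2) * bb cs)) * 1 /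
      (cs * (1 - la cs) / √(2 * π * sg cs) * Real.exp (-(cs * (bb cs + 1) / 2))) = 1 := by
    have h1 := one_sub_exp_pos hcs
    rw [LL, Shr_eq]
    have h2 : Real.exp (-(cs * (bb cs + 1) / 2)) = Real.exp (la cs) * Real.exp (-((1 + cs / 2) * bb cs)) := by
      rw [← Real.exp_add, bb_eq hcs]; congr 1; ring
    rw [h2]
    field_simp
  rw [e1] at hfin
  refine hfin.congr' ?_
  filter_upwards [hN0, hb, hcpos] with i hi hbi hci
  have hNp : (0 : ℝ) < N i := by exact_mod_cast hi
  have hsq : 0 < √(N i : ℝ) := Real.sqrt_pos.2 hNp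
  have hk : (0 : ℝ) < (N i + 1 : ℕ) := by positivity
  have hlp : (0 : ℝ) < l i := by exact_mod_cast hl i
  have hxp : 0 < x i := by
    have := Real.add_one_le_exp (c i / N i)
    have h2 : 0 < c i / N i := by positivity
    simp only [hx]; linarith
  have hSi := Shr_pos hci
  have hlai : 0 < 1 - la (c i) := sub_pos.2 (la_lt_one hci)
  have hspi : 0 < √(2 * π * sg (c i)) := Real.sqrt_pos.2 (by have := sg_pos hci; positivity)
  have ebk : (1 + (l i : ℝ) / (N i + 1 : ℕ)) * (N i + 1 : ℕ) = ((N i + 1 + l i : ℕ) : ℝ) := by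
    push_cast; field_simp
  have eBk : Bterm ((l i : ℝ) / (N i + 1 : ℕ)) (c i) ^ (N i + 1) = Shr (c i) ^ (N i + 1) / c i ^ (N i + 1 + l i) := by
    rw [← hbi, Bterm_eq hci, div_pow, mul_pow, hbi, ← Real.rpow_natCast (c i ^ _), ← Real.rpow_mul hci.le, 
      div_mul_cancel₀ _ hk.ne', Real.rpow_natCast, ← pow_add]
  have e32 : ((N i + 1 : ℕ) : ℝ) ^ (-(3 : ℝ) / 2) = √((N i + 1 : ℕ) : ℝ) / ((N i + 1 : ℕ) : ℝ) ^ 2 := by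
    rw [Real.sqrt_eq_rpow, ← Real.rpow_natCast, ← Real.rpow_sub hk]
    norm_num
  have hex : Real.exp (c i / N i) - 1 = x i := rfl
  simp only [Pi.div_apply]
  rw [hex]
  rw [eBk, ebk, Real.rpow_natCast, e32, ← hbi, Aterm_eq hci (by rw [hbi]; positivity)]
  set A := c i * (1 - la (c i)) / √(2 * π * sg (c i)) * Real.exp (-(c i * (bb (c i) + 1) / 2)) with hA
  have hAp : 0 < A := by positivity
  have hk2 : √((N i + 1 : ℕ) : ℝ) * √((N i + 1 : ℕ) : ℝ) = ((N i + 1 : ℕ) : ℝ) := Real.mul_self_sqrt hk.le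
  have hskp : 0 < √((N i + 1 : ℕ) : ℝ) := Real.sqrt_pos.2 hk
  generalize ((N i + 1 : ℕ) : ℝ) = k at *
  generalize √k = r at *
  rw [← hk2]
  rw [div_pow, mul_pow]
  have p1 : N i + 1 + l i = (N i + l i) + 1 := by ring
  rw [p1, pow_succ (c i), pow_succ (r * r), pow_succ (Shr (c i))]
  have q1 := pow_pos hxp (N i + l i)
  have q2 := pow_pos hci (N i + l i)
  have q3 : 0 < (r * r) ^ (N i + l i) := by positivity
  have q4 := pow_pos hSi (N i)
  generalize x i ^ (N i + l i) = X at *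
  generalize c i ^ (N i + l i) = Y at *
  generalize (r * r) ^ (N i + l i) = Z at *
  generalize Shr (c i) ^ N i = W at *
  field_simp

end CG

/-- Theorem `thm-Cllarge`, `l` large: fix `ε > 0` and let
`l = l(k)` be positive integers with `l(k) ∈ [εk, ε⁻¹k]`.  With `β = l/k` and
`c = c(β) > 0` the solution of `e^{-c} = (2(β+1)-c)/(2(β+1)+c)`, we have, as
`k → ∞`, `C(k, kβ) ∼ A · B^k · k^{(1+β)k} · k^{-3/2}`. -/
theorem C_asymp_large (ε : ℝ) (hε : 0 < ε) (l : ℕ → ℕ) (hpos : ∀ k, 0 < l k)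
    (hrange : ∀ᶠ k : ℕ in atTop, ε * k ≤ (l k : ℝ) ∧ (l k : ℝ) ≤ ε⁻¹ * k)
    (c : ℕ → ℝ) (hcpos : ∀ k, 0 < c k)
    (hceq : ∀ᶠ k : ℕ in atTop,
        Real.exp (-c k) =
          (2 * ((l k : ℝ) / k + 1) - c k) / (2 * ((l k : ℝ) / k + 1) + c k)) :
    Tendsto (fun k : ℕ =>
        (connGraphCount k (l k) : ℝ) /
          (Aterm ((l k : ℝ) / k) (c k) * Bterm ((l k : ℝ) / k) (c k) ^ (k : ℕ) *
            (k : ℝ) ^ ((1 + (l k : ℝ) / k) * k) * (k : ℝ) ^ (-(3 : ℝ) / 2)))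
      atTop (𝓝 1) := by
  have hev : ∀ᶠ k : ℕ in atTop, CG.bb (c k) - 1 = (l k : ℝ) / k ∧ c k ∈ Set.Icc (2 * ε) (2 * (ε⁻¹ + 1)) := by
    filter_upwards [hrange, hceq, eventually_gt_atTop 0] with k hr he hk
    have hkp : (0 : ℝ) < k := by exact_mod_cast hk
    have hβ : 0 ≤ (l k : ℝ) / k := by positivity
    have h1 : CG.bb (c k) = (l k : ℝ) / k + 1 := CG.bb_of_eq (by positivity) (hcpos k) he
    have h2 : ε ≤ (l k : ℝ) / k := by rw [le_div_iff₀ hkp]; exact hr.1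
    have h3 : (l k : ℝ) / k ≤ ε⁻¹ := by rw [div_le_iff₀ hkp]; exact hr.2
    have h4 := CG.bb_eq (hcpos k)
    have h5 := CG.la_lt_one (hcpos k)
    have h6 := CG.la_pos (hcpos k)
    refine ⟨by linarith, by linarith, by linarith⟩
  refine tendsto_of_subseq_tendsto fun ns hns => ?_
  have hev2 := hns.eventually hev
  obtain ⟨cs, hcs, φ, hφ, hlim⟩ := (isCompact_Icc (a := 2 * ε) (b := 2 * (ε⁻¹ + 1))).tendsto_subseq'
    (x := fun i => c (ns i)) (hev2.mono fun i hi => hi.2).frequently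
  refine ⟨φ, ?_⟩
  have hT : Tendsto (fun i => ns (φ i)) atTop atTop := hns.comp hφ.tendsto_atTop
  have hpos' : ∀ᶠ i in atTop, 0 < ns (φ i) := hT.eventually_gt_atTop 0
  have hT1 : Tendsto (fun i => ns (φ i) - 1) atTop atTop := (tendsto_sub_atTop_nat 1).comp hT
  have hcs0 : 0 < cs := by have := hcs.1; linarith
  have key := CG.ratio_tendsto hT1 hcs0 hlim (l := fun i => l (ns (φ i))) (fun i => hpos _) (by
    filter_upwards [hφ.tendsto_atTop.eventually hev2, hpos'] with i hi hp
    have : ns (φ i) - 1 + 1 = ns (φ i) := by omega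
    rw [this]
    exact hi.1)
  refine key.congr' ?_
  filter_upwards [hpos'] with i hp
  have : ns (φ i) - 1 + 1 = ns (φ i) := by omega
  rw [this]
  rfl
end

section
/- Let ε = ε(n) → 0⁺ and L = L(n) → ∞ with L·ε² → ∞. Consider the leftwalk with i.i.d. steps Z_i ~ Po(1+ε). Then Pr[ESC_L] ~ 2ε as n → ∞, i.e. Pr[ESC_L]/(2ε) → 1. -/
open Filter Topology Real Finset

-- Indicator of a proposition, as a real number.
open Classical in
noncomputable def ind (P : Prop) : ℝ := if P then 1 else 0

/-- Poisson point mass: `Pr[Po(r) = n]`. -/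
noncomputable def poissonP (r : ℝ) (n : ℕ) : ℝ := Real.exp (-r) * r ^ n / n.factorial

/-- The escape condition for the leftwalk `Y_0 = 1`, `Y_i = Y_{i-1} + Z_i - 1` up to
time `L`: `Y_t > 0` for `1 ≤ t ≤ L`, i.e. `Z_1 + ⋯ + Z_t ≥ t`.  Here bin `i+1`
contains `z i` balls (0-based indexing). -/
def leftOK (L : ℕ) (z : Fin L → ℕ) : Prop :=
  ∀ t, 1 ≤ t → t ≤ L → t ≤ ∑ i ∈ Finset.univ.filter (fun i : Fin L => (i : ℕ) < t), z i

/-- The escape condition for the rightwalk `Y_0^R = 0`, `Y_i^R = Y_{i-1}^R + 1 - Z_i^R`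
up to time `L`: `Y_t^R > 0` for `1 ≤ t ≤ L`, i.e. `Z_1^R + ⋯ + Z_t^R ≤ t - 1`. -/
def rightOK (L : ℕ) (z : Fin L → ℕ) : Prop :=
  ∀ t, 1 ≤ t → t ≤ L → (∑ i ∈ Finset.univ.filter (fun i : Fin L => (i : ℕ) < t), z i) < t

/-- `Pr[ESC_L]` for the leftwalk with independent steps `Z_i ∼ Po(lam i)`. -/
noncomputable def escLProbV (lam : ℕ → ℝ) (L : ℕ) : ℝ :=
  ∑' z : Fin L → ℕ, (∏ i : Fin L, poissonP (lam (i : ℕ)) (z i)) * ind (leftOK L z)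

/-- `Pr[ESC_L]` for the leftwalk with i.i.d. steps `Z_i ∼ Po(r)`. -/
noncomputable def escLProb (r : ℝ) (L : ℕ) : ℝ := escLProbV (fun _ => r) L

/-- `Pr[ESC]` for the leftwalk with i.i.d. steps `Z_i ∼ Po(r)`: since
`ESC = ⋂_L ESC_L` is a decreasing intersection, `Pr[ESC] = inf_L Pr[ESC_L]`. -/
noncomputable def escProb (r : ℝ) : ℝ := ⨅ L : ℕ, escLProb r L

/-- `Pr[ESC_L^R]` for the rightwalk with independent steps `Z_i^R ∼ Po(lam i)`. -/
noncomputable def escRLProbV (lam : ℕ → ℝ) (L : ℕ) : ℝ :=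
  ∑' z : Fin L → ℕ, (∏ i : Fin L, poissonP (lam (i : ℕ)) (z i)) * ind (rightOK L z)

/-- `Pr[ESC_L^R]` for the rightwalk with i.i.d. steps `Z_i^R ∼ Po(r)`. -/
noncomputable def escRLProb (r : ℝ) (L : ℕ) : ℝ := escRLProbV (fun _ => r) L

/-- `Pr[ESC^R]` for the rightwalk with i.i.d. steps `Z_i^R ∼ Po(r)`. -/
noncomputable def escRProb (r : ℝ) : ℝ := ⨅ L : ℕ, escRLProb r L

/-- Generalised survival condition, starting from height `y`. -/
def gOK (y L : ℕ) (z : Fin L → ℕ) : Prop :=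
  ∀ t, t ≤ L → t < y + ∑ i ∈ Finset.univ.filter (fun i : Fin L => (i : ℕ) < t), z i

lemma leftOK_iff_gOK (L : ℕ) (z : Fin L → ℕ) : leftOK L z ↔ gOK 1 L z := by
  unfold leftOK gOK
  constructor
  · intro h t ht
    rcases Nat.eq_zero_or_pos t with rfl | h0
    · omega
    · have := h t h0 ht
      omega
  · intro h t h0 ht
    have := h t ht
    omega

lemma gOK_cons (y L k : ℕ) (z : Fin L → ℕ) :
    gOK y (L + 1) (Fin.cons k z : Fin (L + 1) → ℕ) ↔ 0 < y ∧ gOK (y - 1 + k) L z := by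
  have key : ∀ t, ∑ i ∈ Finset.univ.filter (fun i : Fin (L + 1) => (i : ℕ) < t + 1),
      (Fin.cons k z : Fin (L + 1) → ℕ) i
      = k + ∑ i ∈ Finset.univ.filter (fun i : Fin L => (i : ℕ) < t), z i := by
    intro t
    rw [Finset.sum_filter, Fin.sum_univ_succ, Finset.sum_filter]
    simp
  unfold gOK
  constructor
  · intro h
    have h0 := h 0 (by omega)
    simp at h0
    refine ⟨h0, fun t ht => ?_⟩
    have := h (t + 1) (by omega)
    rw [key] at this
    omega
  · rintro ⟨h0, h⟩ t ht
    rcases t with _ | t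
    · omega
    · rw [key]
      have := h t (by omega)
      omega

lemma ind_nonneg (P : Prop) : 0 ≤ ind P := by unfold ind; split_ifs <;> norm_num
lemma ind_le_one (P : Prop) : ind P ≤ 1 := by unfold ind; split_ifs <;> norm_num
lemma ind_and (P Q : Prop) : ind (P ∧ Q) = ind P * ind Q := by
  unfold ind; by_cases hP : P <;> by_cases hQ : Q <;> simp [hP, hQ]

lemma poissonP_nonneg {r : ℝ} (hr : 0 ≤ r) (n : ℕ) : 0 ≤ poissonP r n := by
  unfold poissonP; positivity

lemma hasSum_poisson_pow (r x : ℝ) :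
    HasSum (fun k => poissonP r k * x ^ k) (Real.exp (r * (x - 1))) := by
  have h := (NormedSpace.expSeries_div_hasSum_exp (r * x)).mul_left (Real.exp (-r))
  rw [← Real.exp_eq_exp_ℝ, ← Real.exp_add] at h
  have e1 : (fun k => poissonP r k * x ^ k) =
      fun k : ℕ => Real.exp (-r) * ((r * x) ^ k / (k.factorial : ℝ)) := by
    funext k
    unfold poissonP
    rw [mul_pow]; ring
  have e2 : r * (x - 1) = -r + r * x := by ring
  rw [e1, e2]
  exact h

lemma hasSum_poisson_mul_pow (r x : ℝ) :
    HasSum (fun k => poissonP r k * ((k : ℝ) * x ^ k)) (r * x * Real.exp (r * (x - 1))) := by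
  rw [← hasSum_nat_add_iff' 1]
  simp only [Finset.range_one, Finset.sum_singleton, Nat.cast_zero, zero_mul, mul_zero, sub_zero]
  have h := (hasSum_poisson_pow r x).mul_left (r * x)
  refine (congrArg (fun f : ℕ → ℝ => HasSum f _) (funext fun k => ?_)).mpr h
  unfold poissonP
  rw [Nat.factorial_succ]
  push_cast
  have : (k.factorial : ℝ) ≠ 0 := by positivity
  have : (k : ℝ) + 1 ≠ 0 := by positivity
  field_simp
  try ring

lemma hasSum_poisson (r : ℝ) : HasSum (poissonP r) 1 := by
  simpa using hasSum_poisson_pow r 1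

/-- Survival probabilities from height `y`. -/
noncomputable def surv (r : ℝ) : ℕ → ℕ → ℝ
  | 0, y => ind (0 < y)
  | L + 1, y => ind (0 < y) * ∑' k, poissonP r k * surv r L (y - 1 + k)

lemma summable_prod_poisson {r : ℝ} (hr : 0 ≤ r) (L : ℕ) :
    Summable (fun z : Fin L → ℕ => ∏ i, poissonP r (z i)) := by
  induction L with
  | zero => exact Summable.of_finite
  | succ L ih =>
    rw [← (Fin.consEquiv (fun _ : Fin (L + 1) => ℕ)).summable_iff]
    have := Summable.mul_of_nonneg (hasSum_poisson r).summable ih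
      (fun k => poissonP_nonneg hr k) (fun z => Finset.prod_nonneg fun i _ => poissonP_nonneg hr _)
    refine this.congr fun p => ?_
    simp [Fin.consEquiv, Fin.prod_univ_succ]

lemma tsum_eq_surv {r : ℝ} (hr : 0 ≤ r) (L : ℕ) : ∀ y : ℕ,
    ∑' z : Fin L → ℕ, (∏ i, poissonP r (z i)) * ind (gOK y L z) = surv r L y := by
  have hsum : ∀ (L y : ℕ), Summable (fun z : Fin L → ℕ =>
      (∏ i, poissonP r (z i)) * ind (gOK y L z)) := fun L y =>
    Summable.of_nonneg_of_le
      (fun z => mul_nonneg (Finset.prod_nonneg fun i _ => poissonP_nonneg hr _) (ind_nonneg _))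
      (fun z => mul_le_of_le_one_right (Finset.prod_nonneg fun i _ => poissonP_nonneg hr _)
        (ind_le_one _)) (summable_prod_poisson hr L)
  induction L with
  | zero =>
    intro y
    rw [tsum_fintype]
    simp [surv, gOK]
  | succ L ih =>
    intro y
    have h1 := hsum (L + 1) y
    rw [← (Fin.consEquiv (fun _ : Fin (L + 1) => ℕ)).summable_iff] at h1
    rw [← (Fin.consEquiv (fun _ : Fin (L + 1) => ℕ)).tsum_eq]
    refine (Summable.tsum_prod h1).trans ?_
    simp only [Function.comp_apply]
    rw [surv, ← tsum_mul_left]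
    congr 1
    funext k
    rw [← ih, ← tsum_mul_left, ← tsum_mul_left]
    congr 1
    funext z
    have e : (Fin.consEquiv (fun _ : Fin (L + 1) => ℕ)) (k, z)
      = (Fin.cons k z : Fin (L + 1) → ℕ) := rfl
    rw [e, gOK_cons, ind_and, Fin.prod_univ_succ]
    simp only [Fin.cons_zero, Fin.cons_succ]
    ring

lemma escLProb_eq_surv {r : ℝ} (hr : 0 ≤ r) (L : ℕ) : escLProb r L = surv r L 1 := by
  rw [← tsum_eq_surv hr]
  unfold escLProb escLProbV
  simp only [leftOK_iff_gOK]

lemma surv_bounds {r : ℝ} (hr : 0 ≤ r) (L : ℕ) : ∀ y, 0 ≤ surv r L y ∧ surv r L y ≤ 1 := by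
  induction L with
  | zero => intro y; exact ⟨ind_nonneg _, ind_le_one _⟩
  | succ L ih =>
    intro y
    have h0 : 0 ≤ ∑' k, poissonP r k * surv r L (y - 1 + k) :=
      tsum_nonneg fun k => mul_nonneg (poissonP_nonneg hr k) (ih _).1
    have hle : ∀ k, poissonP r k * surv r L (y - 1 + k) ≤ poissonP r k := fun k =>
      mul_le_of_le_one_right (poissonP_nonneg hr k) (ih _).2
    have h1 : ∑' k, poissonP r k * surv r L (y - 1 + k) ≤ 1 := by
      rw [← (hasSum_poisson r).tsum_eq]
      exact Summable.tsum_le_tsum hle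
        (Summable.of_nonneg_of_le (fun k => mul_nonneg (poissonP_nonneg hr k) (ih _).1) hle
          (hasSum_poisson r).summable) (hasSum_poisson r).summable
    rw [surv]
    exact ⟨mul_nonneg (ind_nonneg _) h0, mul_le_one₀ (ind_le_one _) h0 h1⟩

lemma surv_zero (r : ℝ) (L : ℕ) : surv r L 0 = 0 := by
  cases L <;> simp [surv, ind]

lemma surv_hasSum {r : ℝ} (hr : 0 ≤ r) (L m : ℕ) :
    HasSum (fun k => poissonP r k * surv r L (m + k)) (surv r (L + 1) (m + 1)) := by
  have hle : ∀ k, poissonP r k * surv r L (m + k) ≤ poissonP r k := fun k =>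
      mul_le_of_le_one_right (poissonP_nonneg hr k) (surv_bounds hr L _).2
  have hs := Summable.of_nonneg_of_le
    (fun k => mul_nonneg (poissonP_nonneg hr k) (surv_bounds hr L (m + k)).1) hle
          (hasSum_poisson r).summable
  have := hs.hasSum
  convert this using 1
  simp [surv, ind]

lemma surv_lower {r x : ℝ} (hr : 0 ≤ r) (hx0 : 0 ≤ x) 
    (hx : Real.exp (r * (x - 1)) = x) (L : ℕ) : ∀ y, 1 - x ^ y ≤ surv r L y := by
  induction L with
  | zero =>
    intro y
    rcases y with _ | y
    · simp [surv, ind]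
    · simp only [surv, ind]
      have : 0 ≤ x ^ (y + 1) := by positivity
      simp [this]
  | succ L ih =>
    intro y
    rcases y with _ | m
    · simp [surv_zero]
    · have h1 := (hasSum_poisson r).sub ((hasSum_poisson_pow r x).mul_left (x ^ m))
      rw [hx] at h1
      have := hasSum_le (fun k => ?_) h1 (surv_hasSum hr L m)
      · rw [pow_succ]; exact this
      · have := mul_le_mul_of_nonneg_left (ih (m + k)) (poissonP_nonneg hr k)
        refine le_trans (le_of_eq ?_) this
        rw [pow_add]; ring

lemma surv_upper {r x : ℝ} (hr : 0 ≤ r) (hx0 : 0 ≤ x) (hrx : r * x < 1)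
    (hx : Real.exp (r * (x - 1)) = x) (L : ℕ) :
    ∀ y : ℕ, (L : ℝ) * (surv r L y - 1 + x ^ y) ≤ y * x ^ y / (1 - r * x) := by
  have hd : 0 < 1 - r * x := by linarith
  induction L with
  | zero =>
    intro y
    simp only [Nat.cast_zero, zero_mul]
    positivity
  | succ L ih =>
    intro y
    rcases y with _ | m
    · simp [surv_zero]
    · have h1 := (((surv_hasSum hr L m).sub (hasSum_poisson r)).add
        ((hasSum_poisson_pow r x).mul_left (x ^ m))).mul_left (L : ℝ)
      have h2 := (((hasSum_poisson_pow r x).mul_left (x ^ m * m)).add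
        ((hasSum_poisson_mul_pow r x).mul_left (x ^ m))).mul_left (1 / (1 - r * x))
      rw [hx] at h1 h2
      have h3 := hasSum_le (fun k => ?_) h1 h2
      · have hb := (surv_bounds hr (L + 1) (m + 1)).2
        have e : 1 / (1 - r * x) * (x ^ m * m * x + x ^ m * (r * x * x)) =
          ((m + 1 : ℕ) : ℝ) * x ^ (m + 1) / (1 - r * x) - x ^ (m + 1) := by
          field_simp
          push_cast
          ring
        rw [e, ← pow_succ] at h3
        push_cast at h3 ⊢
        linarith
      · have := mul_le_mul_of_nonneg_left (ih (m + k)) (poissonP_nonneg hr k)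
        refine le_trans (le_of_eq ?_) (le_trans this (le_of_eq ?_))
        · rw [pow_add]; ring
        · rw [pow_add]; push_cast; field_simp; 

lemma exists_root {e : ℝ} (h0 : 0 < e) (h1 : e ≤ 1 / 10) :
    ∃ s, 2 * e / (1 + e) ^ 2 ≤ s ∧ s ≤ 2 * e ∧ Real.exp (-((1 + e) * s)) = 1 - s := by
  set f : ℝ → ℝ := fun s => Real.exp (-((1 + e) * s)) - (1 - s) with hf
  have hcont : Continuous f := by fun_prop
  have hab : 2 * e / (1 + e) ^ 2 ≤ 2 * e := div_le_self (by linarith) (by nlinarith)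
  have hb : 0 ≤ f (2 * e) := by
    have hl : 1 - 2 * e ≤ Real.exp (-((1 + e) * (2 * e))) := by
      have := Real.exp_bound' (x := (1 + e) * (2 * e)) (by positivity) (by nlinarith) (n := 3)
        (by norm_num)
      simp [Finset.sum_range_succ, Nat.factorial] at this
      rw [Real.exp_neg, le_inv_comm₀ (by linarith) (Real.exp_pos _)]
      refine this.trans ?_
      rw [← one_div, le_div_iff₀ (by linarith)]
      nlinarith [pow_pos h0 3, pow_pos h0 4, pow_pos h0 5, pow_pos h0 6, pow_pos h0 7, pow_pos h0 2]
    simp only [hf]; linarith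
  have ha : f (2 * e / (1 + e) ^ 2) ≤ 0 := by
    set t := 2 * e / (1 + e) with ht
    have htp : 0 < t := by positivity
    have hte : t * (1 + e) = 2 * e := by rw [ht]; field_simp
    have e1 : (1 + e) * (2 * e / (1 + e) ^ 2) = t := by rw [ht]; field_simp
    have e2 : 2 * e / (1 + e) ^ 2 = t - t ^ 2 / 2 := by rw [ht]; field_simp; ring
    have hq := Real.quadratic_le_exp_of_nonneg htp.le
    have : Real.exp (-t) ≤ 1 - t + t ^ 2 / 2 := by
      rw [Real.exp_neg]
      rw [inv_le_comm₀ (Real.exp_pos _) (by nlinarith [sq_nonneg (t - 1)])]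
      refine le_trans ?_ hq
      rw [← one_div, div_le_iff₀ (by nlinarith [sq_nonneg (t - 1)])]
      nlinarith [sq_nonneg (t ^ 2)]
    simp only [hf, e1]; rw [e2]; linarith
  obtain ⟨s, hs, hs0⟩ := intermediate_value_Icc hab hcont.continuousOn ⟨ha, hb⟩
  exact ⟨s, hs.1, hs.2, by simp only [hf] at hs0; linarith⟩

lemma esc_bounds {e : ℝ} (h0 : 0 < e) (h1 : e ≤ 1 / 10) (L : ℕ) (hL : 0 < L) :
    1 / (1 + e) ^ 2 ≤ escLProb (1 + e) L / (2 * e) ∧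
    escLProb (1 + e) L / (2 * e) ≤ 1 + 1 / ((L : ℝ) * e ^ 2) := by
  obtain ⟨s, hs1, hs2, hs⟩ := exists_root h0 h1
  have hr : (0 : ℝ) ≤ 1 + e := by linarith
  have hx0 : 0 ≤ 1 - s := by linarith
  have hx : Real.exp ((1 + e) * ((1 - s) - 1)) = 1 - s := by
    rw [show (1 + e) * ((1 - s) - 1) = -((1 + e) * s) by ring, hs]
  have hse : 2 * e / (1 + e) ≤ s * (1 + e) := by
    have := mul_le_mul_of_nonneg_right hs1 hr
    refine le_trans (le_of_eq ?_) this
    field_simp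
  have h3 : 3 / 2 * e ≤ 2 * e / (1 + e) := by
    rw [le_div_iff₀ (by linarith)]; nlinarith
  have hd : e / 2 ≤ 1 - (1 + e) * (1 - s) := by nlinarith
  rw [escLProb_eq_surv hr]
  have hlo := surv_lower hr hx0 hx L 1
  have hup := surv_upper hr hx0 (by linarith) hx L 1
  have hLr : (0 : ℝ) < L := by exact_mod_cast hL
  constructor
  · rw [le_div_iff₀ (by linarith)]
    have : 1 / (1 + e) ^ 2 * (2 * e) = 2 * e / (1 + e) ^ 2 := by ring
    rw [this]
    simp only [pow_one] at hlo
    linarith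
  · have hg : ((1 : ℕ) : ℝ) * (1 - s) ^ 1 / (1 - (1 + e) * (1 - s)) ≤ 2 / e := by
      rw [div_le_div_iff₀ (by linarith) h0]
      have : 0 < s := lt_of_lt_of_le (by positivity) hs1
      push_cast
      nlinarith
    have h4 := hup.trans hg
    rw [div_le_iff₀ (by linarith)]
    have h5 : surv (1 + e) L 1 - 1 + (1 - s) ^ 1 ≤ 2 / e / L := by
      rw [le_div_iff₀ hLr]; linarith
    have h6 : (1 + 1 / ((L : ℝ) * e ^ 2)) * (2 * e) = 2 * e + 2 / e / L := by
      field_simp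
    rw [h6]
    linarith

/-- Proposition `t3`: if `ε = ε(n) → 0⁺` and `L = L(n) → ∞` with
`L ε² → ∞`, then for the leftwalk with i.i.d. steps `Z_i ∼ Po(1+ε)` one has
`Pr[ESC_L] ∼ 2ε`. -/
theorem escL_asymp (ε : ℕ → ℝ) (L : ℕ → ℕ)
    (hεpos : ∀ n, 0 < ε n) (hε0 : Tendsto ε atTop (𝓝 0))
    (hL : Tendsto L atTop atTop)
    (hLε : Tendsto (fun n : ℕ => (L n : ℝ) * ε n ^ 2) atTop atTop) :
    Tendsto (fun n : ℕ => escLProb (1 + ε n) (L n) / (2 * ε n)) atTop (𝓝 1) := by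
  have hlo : Tendsto (fun n => 1 / (1 + ε n) ^ 2) atTop (𝓝 1) := by
    have := ((hε0.const_add 1).pow 2).inv₀ (by norm_num)
    simpa using this
  have hup : Tendsto (fun n => 1 + 1 / ((L n : ℝ) * ε n ^ 2)) atTop (𝓝 1) := by
    have := (hLε.inv_tendsto_atTop).const_add 1
    simpa using this
  have hev : ∀ᶠ n in atTop, ε n ≤ 1 / 10 := hε0.eventually_le_const (by norm_num)
  have hev2 : ∀ᶠ n in atTop, 0 < L n := hL.eventually_gt_atTop 0
  refine tendsto_of_tendsto_of_tendsto_of_le_of_le' hlo hup ?_ ?_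
  · filter_upwards [hev, hev2] with n h1 h2 using (esc_bounds (hεpos n) h1 _ h2).1
  · filter_upwards [hev, hev2] with n h1 h2 using (esc_bounds (hεpos n) h1 _ h2).2
end
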